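/- arXiv:2405.02531 — 3 statements merged into one kernel-verified Lean document; each statement's English description precedes it below -/
import Mathlib

section
/- Fix δ ≥ 0, a symbol a of order 0, and the bump β, and set b = √2 sin((θ₁−θ₂+π)/2). For j ≥ 1 define H(r₁,r₂;θ₁−θ₂) = 2^{−j(3/2+δ)} β(r₁+r₂) ∫₀^∞ e^{i 2^j (r₁ r₂/(r₁+r₂)) s²} ψ_{3,m}(s) ds, where ψ_{3,m}(s) = (r₁+r₂)^{−3/2−δ} a(2^j(r₁+r₂)) · sin(θ₁−θ₂+π) / (s²/2 + 2 sin²((θ₁−θ₂+π)/2)). Let χ ∈ C_c^∞(ℝ) be an even bump function supported in [−ε, ε] with 0 < ε ≪ 1 sufficiently small. Then: (i) for every p ≥ 6 there is a constant C, independent of j, such that ‖ ∫₀^∞ ∫₀^{2π} χ(b) H(r₁,r₂;θ₁−θ₂) f(r₂,θ₂) dθ₂ r₂ dr₂ ‖_{L^p(ℝ²)} ≤ C 2^{−j(3/2+δ)} 2^{−2j/p} ‖f‖_{L^p(ℝ²)} for all j ≥ 1; (ii) for every p with 4 ≤ p < 6 and every ε′ ∈ (0,1) there is a constant C = C(ε′),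 independent of j, such that ‖ ∫₀^∞ ∫₀^{2π} χ(b) H(r₁,r₂;θ₁−θ₂) f(r₂,θ₂) dθ₂ r₂ dr₂ ‖_{L^p(ℝ²)} ≤ C 2^{−j(3/2+δ)} 2^{−j(2/p − ε′)} ‖f‖_{L^p(ℝ²)} for all j ≥ 1. -/
open MeasureTheory Real Set

noncomputable section

/-- A symbol of order `0` on `(0, ∞)`. -/
def IsSymbol0 (a : ℝ → ℂ) : Prop :=
  ContDiffOn ℝ (⊤ : ℕ∞) a (Set.Ioi 0) ∧ (∃ M : ℝ, ∀ r > (0 : ℝ), ‖a r‖ ≤ M) ∧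
    ∀ N : ℕ, ∃ C : ℝ, ∀ r > (0 : ℝ),
      ‖iteratedDerivWithin N a (Set.Ioi 0) r‖ ≤ C * r ^ (-(N : ℝ))

/-- `ψ_{3,m}(s)`, with `φ = θ₁ - θ₂`. -/
def psi3m (δ : ℝ) (a : ℝ → ℂ) (j : ℕ) (r₁ r₂ φ s : ℝ) : ℂ :=
  (((r₁ + r₂) ^ (-(3 / 2 + δ)) : ℝ) : ℂ) * a ((2 : ℝ) ^ (j : ℝ) * (r₁ + r₂)) *
    ((Real.sin (φ + Real.pi) /
        (s ^ 2 / 2 + 2 * Real.sin ((φ + Real.pi) / 2) ^ 2) : ℝ) : ℂ)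

/-- The kernel `H` with quadratic phase. -/
def Hker (δ : ℝ) (a : ℝ → ℂ) (β : ℝ → ℝ) (j : ℕ) (r₁ r₂ φ : ℝ) : ℂ :=
  (((2 : ℝ) ^ (-(j : ℝ) * (3 / 2 + δ)) : ℝ) : ℂ) * ((β (r₁ + r₂) : ℝ) : ℂ) *
    ∫ s in Set.Ioi (0 : ℝ),
      Complex.exp (Complex.I *
        (((2 : ℝ) ^ (j : ℝ) * (r₁ * r₂ / (r₁ + r₂)) * s ^ 2 : ℝ) : ℂ)) *
        psi3m δ a j r₁ r₂ φ s

/-- `b = √2 sin((θ₁ - θ₂ + π)/2)`, as a function of `φ = θ₁ - θ₂`. -/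
def bb (φ : ℝ) : ℝ := Real.sqrt 2 * Real.sin ((φ + Real.pi) / 2)

open scoped ENNReal NNReal

/-- The `L^p(ℝ²)` norm of a function written in polar coordinates. -/
def polarLp (p : ℝ) (g : ℝ → ℝ → ℂ) : ℝ≥0∞ :=
  (∫⁻ r in Set.Ioi (0 : ℝ),
      (∫⁻ θ in Set.Ico (0 : ℝ) (2 * Real.pi), (‖g r θ‖₊ : ℝ≥0∞) ^ p) *
        ENNReal.ofReal r) ^ (1 / p)

/-- The operator with kernel `χ(b) H`. -/
def TH (δ : ℝ) (a : ℝ → ℂ) (β χ : ℝ → ℝ) (j : ℕ) (f : ℝ → ℝ → ℂ) (r₁ θ₁ : ℝ) : ℂ :=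
  ∫ r₂ in Set.Ioi (0 : ℝ),
    (∫ θ₂ in Set.Ico (0 : ℝ) (2 * Real.pi),
      ((χ (bb (θ₁ - θ₂)) : ℝ) : ℂ) * Hker δ a β j r₁ r₂ (θ₁ - θ₂) * f r₂ θ₂) * (r₂ : ℂ)

/-!
Integrating by parts once in the oscillatory integral bounds the kernel by a multiple of
`2^(-j(3/2+δ)) / (1 + √(2^j r₁r₂/(r₁+r₂)) |b|)`. With `Q = 2^(j/2)` and any `0 ≤ α < 1` this is at
most a multiple of the product `(Q⁻² + r₁)^(-α/2) · r₂^(-1/2) · (1 + Q|b|)^(-α)`. For a product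
kernel, Hölder in `r₂` and Schur's test in the angle give an `L^p` bound; the angular mass is
`O(Q^(-α))`, and the `L^p(r₁ dr₁)` norm of the first factor is bounded if `α p < 4` and
`O(Q^(α - 4/p))` if `α p > 4`. The second case yields `2^(-2j/p)` once some `α < 1` exceeds `4/p`,
the first yields every smaller exponent.

Since `f` is not assumed measurable, Tonelli's theorem is not available in the angular step.
Instead, the angular weight is essentially constant on intervals of length `Q⁻¹`, so the outer
integral can be replaced by a sum over such intervals.
-/

section Oscillatory

open Filter Topology

lemma norm_cexp_I_mul_ofReal (x : ℝ) : ‖Complex.exp (Complex.I * (x : ℂ))‖ = 1 := by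
  rw [mul_comm, Complex.norm_exp_ofReal_mul_I]

lemma integrableOn_cexp_mul_ofReal {φ g : ℝ → ℝ} {S : Set ℝ} (hS : MeasurableSet S)
    (hφ : ContinuousOn φ S) (hg : IntegrableOn g S) :
    IntegrableOn (fun s => Complex.exp (Complex.I * (φ s : ℂ)) * (g s : ℂ)) S := by
  have phase_cont : ContinuousOn (fun s => Complex.exp (Complex.I * (φ s : ℂ))) S := by fun_prop
  exact hg.ofReal.bdd_mul (c := 1) (phase_cont.aestronglyMeasurable hS)
    (ae_of_all _ fun s => (norm_cexp_I_mul_ofReal _).le)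

lemma I_mul_integral_Ioi_cexp_mul_deriv_mul {φ φ' G G' : ℝ → ℝ} {a : ℝ}
    (hφ : ∀ x ∈ Ici a, HasDerivAt φ (φ' x) x) (hG : ∀ x ∈ Ici a, HasDerivAt G (G' x) x)
    (hG'int : IntegrableOn G' (Ioi a)) (hlim : Tendsto G atTop (𝓝 0))
    (hint : IntegrableOn
      (fun x => Complex.exp (Complex.I * (φ x : ℂ)) * ((φ' x * G x : ℝ) : ℂ)) (Ioi a)) :
    Complex.I * ∫ x in Ioi a, Complex.exp (Complex.I * (φ x : ℂ)) * ((φ' x * G x : ℝ) : ℂ) =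
      -(Complex.exp (Complex.I * (φ a : ℂ)) * (G a : ℂ)) -
        ∫ x in Ioi a, Complex.exp (Complex.I * (φ x : ℂ)) * (G' x : ℂ) := by
  set e : ℝ → ℂ := fun x => Complex.exp (Complex.I * (φ x : ℂ))
  have deriv_eG (x) (hx : x ∈ Ici a) : HasDerivAt (fun x => e x * (G x : ℂ))
      (Complex.I * (e x * ((φ' x * G x : ℝ) : ℂ)) + e x * (G' x : ℂ)) x := by
    have deriv_e : HasDerivAt e (e x * (Complex.I * (φ' x : ℂ))) x :=
      ((hφ x hx).ofReal_comp.const_mul Complex.I).cexp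
    refine (deriv_e.mul (hG x hx).ofReal_comp).congr_deriv ?_
    push_cast
    ring
  have lim_eG : Tendsto (fun x => e x * (G x : ℂ)) atTop (𝓝 0) := by
    rw [tendsto_zero_iff_norm_tendsto_zero]
    simpa [e, norm_cexp_I_mul_ofReal] using hlim.norm
  have heG'int : IntegrableOn (fun x => e x * (G' x : ℂ)) (Ioi a) :=
    integrableOn_cexp_mul_ofReal measurableSet_Ioi
      (fun x hx => (hφ x (Ioi_subset_Ici_self hx)).continuousAt.continuousWithinAt) hG'int
  rw [eq_sub_iff_add_eq, ← integral_const_mul, ← integral_add (hint.const_mul _) heG'int,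
    integral_Ioi_of_hasDerivAt_of_tendsto' deriv_eG ((hint.const_mul _).add heG'int) lim_eG,
    zero_sub]

lemma norm_integral_Ioi_cexp_mul_deriv_mul_le {φ φ' G G' : ℝ → ℝ} {a : ℝ}
    (hφ : ∀ x ∈ Ici a, HasDerivAt φ (φ' x) x) (hG : ∀ x ∈ Ici a, HasDerivAt G (G' x) x)
    (hG' : ∀ x ∈ Ioi a, G' x ≤ 0) (hlim : Tendsto G atTop (𝓝 0))
    (hint : IntegrableOn
      (fun x => Complex.exp (Complex.I * (φ x : ℂ)) * ((φ' x * G x : ℝ) : ℂ)) (Ioi a)) :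
    ‖∫ x in Ioi a, Complex.exp (Complex.I * (φ x : ℂ)) * ((φ' x * G x : ℝ) : ℂ)‖ ≤ 2 * G a := by
  have hG'int : IntegrableOn G' (Ioi a) := integrableOn_Ioi_deriv_of_nonpos' hG hG' hlim
  have by_parts := I_mul_integral_Ioi_cexp_mul_deriv_mul hφ hG hG'int hlim hint
  set e : ℝ → ℂ := fun x => Complex.exp (Complex.I * (φ x : ℂ))
  have norm_e (x : ℝ) : ‖e x‖ = 1 := norm_cexp_I_mul_ofReal _
  have integral_G' : ∫ x in Ioi a, -G' x = G a := by
    rw [integral_neg, integral_Ioi_of_hasDerivAt_of_tendsto' hG hG'int hlim, zero_sub, neg_neg]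
  have G_nonneg : 0 ≤ G a := by
    rw [← integral_G']
    exact setIntegral_nonneg measurableSet_Ioi fun x hx => neg_nonneg.2 (hG' x hx)
  have norm_eG' : ‖∫ x in Ioi a, e x * (G' x : ℂ)‖ ≤ G a := by
    refine (norm_integral_le_integral_norm _).trans_eq (Eq.trans ?_ integral_G')
    refine setIntegral_congr_fun measurableSet_Ioi fun x hx => ?_
    simp only [norm_mul, norm_e, one_mul, Complex.norm_real, Real.norm_of_nonpos (hG' x hx)]
  calc ‖∫ x in Ioi a, e x * ((φ' x * G x : ℝ) : ℂ)‖
      = ‖Complex.I * ∫ x in Ioi a, e x * ((φ' x * G x : ℝ) : ℂ)‖ := by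
        rw [norm_mul, Complex.norm_I, one_mul]
    _ ≤ ‖-(e a * (G a : ℂ))‖ + ‖∫ x in Ioi a, e x * (G' x : ℂ)‖ := by
        rw [by_parts]
        exact norm_sub_le _ _
    _ ≤ 2 * G a := by
        rw [norm_neg, norm_mul, norm_e, Complex.norm_real, Real.norm_of_nonneg G_nonneg]
        linarith

lemma norm_integral_Ioi_cexp_sq_mul_tail_le {g g' : ℝ → ℝ} {l M a : ℝ} (hl : 0 < l) (ha : 0 < a)
    (hg : ∀ s > 0, HasDerivAt g (g' s) s) (hg' : ∀ s > 0, g' s ≤ 0)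
    (hg0 : ∀ s > 0, 0 ≤ g s) (hgM : ∀ s > 0, g s ≤ M) (hint : IntegrableOn g (Ioi a)) :
    ‖∫ s in Ioi a, Complex.exp (Complex.I * ((l * s ^ 2 : ℝ) : ℂ)) * (g s : ℂ)‖ ≤ M / (l * a) := by
  set G : ℝ → ℝ := fun s => g s / (2 * l * s)
  have deriv_phase (s : ℝ) : HasDerivAt (fun s : ℝ => l * s ^ 2) (2 * l * s) s :=
    ((hasDerivAt_pow 2 s).const_mul l).congr_deriv (by simp; ring)
  have deriv_G (s) (hs : s ∈ Ici a) :
      HasDerivAt G ((g' s * (2 * l * s) - g s * (2 * l)) / (2 * l * s) ^ 2) s := by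
    have hs0 : 0 < s := ha.trans_le hs
    have deriv_denom : HasDerivAt (fun s : ℝ => 2 * l * s) (2 * l) s := by
      simpa using (hasDerivAt_id s).const_mul (2 * l)
    exact (hg s hs0).div deriv_denom (by positivity)
  have G'_nonpos (s) (hs : s ∈ Ioi a) :
      (g' s * (2 * l * s) - g s * (2 * l)) / (2 * l * s) ^ 2 ≤ 0 := by
    have hs0 : 0 < s := ha.trans hs
    refine div_nonpos_of_nonpos_of_nonneg (sub_nonpos.2 ?_) (by positivity)
    exact (mul_nonpos_of_nonpos_of_nonneg (hg' s hs0) (by positivity)).trans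
      (mul_nonneg (hg0 s hs0) (by positivity))
  have lim_G : Tendsto G atTop (𝓝 0) := by
    refine squeeze_zero' ?_ ?_ (tendsto_const_nhds (x := M) |>.div_atTop
      (tendsto_id.const_mul_atTop (show 0 < 2 * l by positivity)))
    all_goals filter_upwards [eventually_gt_atTop 0] with s hs
    · exact div_nonneg (hg0 s hs) (by positivity)
    · exact div_le_div_of_nonneg_right (hgM s hs) (by positivity)
  have g_eq (s) (hs : s ∈ Ioi a) : g s = 2 * l * s * G s := by
    have hs0 : 0 < s := ha.trans hs
    exact (mul_div_cancel₀ _ (by positivity)).symm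
  have integrand_eq : EqOn (fun s => Complex.exp (Complex.I * ((l * s ^ 2 : ℝ) : ℂ)) * (g s : ℂ))
      (fun s => Complex.exp (Complex.I * ((l * s ^ 2 : ℝ) : ℂ)) * ((2 * l * s * G s : ℝ) : ℂ))
      (Ioi a) := fun s hs => by simp only [← g_eq s hs]
  rw [setIntegral_congr_fun measurableSet_Ioi integrand_eq]
  calc _ ≤ 2 * G a := norm_integral_Ioi_cexp_mul_deriv_mul_le (fun s _ => deriv_phase s) deriv_G
        G'_nonpos lim_G ((integrableOn_cexp_mul_ofReal measurableSet_Ioi (by fun_prop)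
          hint).congr_fun integrand_eq measurableSet_Ioi)
    _ = g a / (l * a) := by simp only [G]; field_simp
    _ ≤ M / (l * a) := by gcongr; exact hgM a ha

lemma norm_integral_Ioi_cexp_sq_mul_le {g g' : ℝ → ℝ} {l M : ℝ} (hl : 0 < l)
    (hg : ∀ s > 0, HasDerivAt g (g' s) s) (hg' : ∀ s > 0, g' s ≤ 0)
    (hg0 : ∀ s > 0, 0 ≤ g s) (hgM : ∀ s > 0, g s ≤ M) (hint : IntegrableOn g (Ioi 0)) :
    ‖∫ s in Ioi (0 : ℝ), Complex.exp (Complex.I * ((l * s ^ 2 : ℝ) : ℂ)) * (g s : ℂ)‖ ≤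
      2 * M / √l := by
  set F : ℝ → ℂ := fun s => Complex.exp (Complex.I * ((l * s ^ 2 : ℝ) : ℂ)) * (g s : ℂ)
  set a : ℝ := (√l)⁻¹ with ha_def
  have hsl : 0 < √l := Real.sqrt_pos.2 hl
  have ha : 0 < a := inv_pos.2 hsl
  have F_int : IntegrableOn F (Ioi 0) :=
    integrableOn_cexp_mul_ofReal measurableSet_Ioi (by fun_prop) hint
  have head : ‖∫ s in Ioc 0 a, F s‖ ≤ M * a := by
    have := norm_setIntegral_le_of_norm_le_const (μ := volume) (s := Ioc 0 a) (f := F) (C := M)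
      measure_Ioc_lt_top fun s hs => by
        rw [norm_mul, norm_cexp_I_mul_ofReal, one_mul, Complex.norm_real,
          Real.norm_of_nonneg (hg0 s hs.1)]
        exact hgM s hs.1
    simpa [ha.le] using this
  have tail : ‖∫ s in Ioi a, F s‖ ≤ M / (l * a) :=
    norm_integral_Ioi_cexp_sq_mul_tail_le hl ha hg hg' hg0 hgM
      (hint.mono_set (Ioi_subset_Ioi ha.le))
  have balance : l * a = √l := by
    rw [ha_def, ← div_eq_mul_inv, Real.div_sqrt]
  rw [← Ioc_union_Ioi_eq_Ioi ha.le, setIntegral_union (Ioc_disjoint_Ioi le_rfl) measurableSet_Ioi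
    (F_int.mono_set Ioc_subset_Ioi_self) (F_int.mono_set (Ioi_subset_Ioi ha.le))]
  calc _ ≤ M * a + M / (l * a) := (norm_add_le _ _).trans (add_le_add head tail)
    _ = 2 * M / √l := by rw [balance, ha_def]; ring

variable {b : ℝ}

lemma one_div_sq_half_add_sq_eq (hb : 0 < b) (s : ℝ) :
    1 / (s ^ 2 / 2 + b ^ 2) = 1 / b ^ 2 * (1 + ((√2 * b)⁻¹ * s) ^ 2)⁻¹ := by
  rw [mul_pow, inv_pow, mul_pow, Real.sq_sqrt zero_le_two]
  field_simp
  ring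

lemma integrableOn_Ioi_one_div_sq_half_add_sq (hb : 0 < b) :
    IntegrableOn (fun s : ℝ => 1 / (s ^ 2 / 2 + b ^ 2)) (Ioi 0) := by
  simp only [one_div_sq_half_add_sq_eq hb]
  exact ((integrable_inv_one_add_sq.comp_mul_left' (by positivity)).const_mul _).integrableOn

lemma integral_Ioi_one_div_sq_half_add_sq (hb : 0 < b) :
    ∫ s in Ioi (0 : ℝ), 1 / (s ^ 2 / 2 + b ^ 2) = π / √2 / b := by
  simp only [one_div_sq_half_add_sq_eq hb]
  rw [integral_const_mul, integral_comp_mul_left_Ioi (fun x : ℝ => (1 + x ^ 2)⁻¹) 0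
    (show 0 < (√2 * b)⁻¹ by positivity)]
  simp only [mul_zero, integral_Ioi_inv_one_add_sq, sub_zero, smul_eq_mul, inv_inv, arctan_zero]
  field_simp
  rw [Real.sq_sqrt zero_le_two]

lemma norm_integral_Ioi_cexp_div_le_div (l : ℝ) (hb : 0 < b) :
    ‖∫ s in Ioi (0 : ℝ), Complex.exp (Complex.I * ((l * s ^ 2 : ℝ) : ℂ)) *
      ((1 / (s ^ 2 / 2 + b ^ 2) : ℝ) : ℂ)‖ ≤ π / √2 / b := by
  rw [← integral_Ioi_one_div_sq_half_add_sq hb]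
  refine (norm_integral_le_integral_norm _).trans_eq (integral_congr_ae (ae_of_all _ fun s => ?_))
  simp only [norm_mul, norm_cexp_I_mul_ofReal, one_mul, Complex.norm_real]
  exact Real.norm_of_nonneg (by positivity)

lemma norm_integral_Ioi_cexp_div_le_div_sqrt {l : ℝ} (hl : 0 < l) (hb : 0 < b) :
    ‖∫ s in Ioi (0 : ℝ), Complex.exp (Complex.I * ((l * s ^ 2 : ℝ) : ℂ)) *
      ((1 / (s ^ 2 / 2 + b ^ 2) : ℝ) : ℂ)‖ ≤ 2 * (1 / b ^ 2) / √l := by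
  have deriv_denom (s : ℝ) : HasDerivAt (fun s : ℝ => s ^ 2 / 2 + b ^ 2) s s :=
    (((hasDerivAt_pow 2 s).div_const 2).add_const (b ^ 2)).congr_deriv (by simp)
  refine norm_integral_Ioi_cexp_sq_mul_le (g' := fun s => -s / (s ^ 2 / 2 + b ^ 2) ^ 2) hl
    (fun s _ => ?_) (fun s hs => ?_) (fun s _ => by positivity) (fun s _ => ?_)
    (integrableOn_Ioi_one_div_sq_half_add_sq hb)
  · simpa only [one_div] using (deriv_denom s).fun_inv (by positivity)
  · exact div_nonpos_of_nonpos_of_nonneg (by linarith) (by positivity)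
  · gcongr
    exact le_add_of_nonneg_left (by positivity)

end Oscillatory

section AngularPhase

lemma bb_eq_sqrt_two_mul_cos (φ : ℝ) : bb φ = √2 * cos (φ / 2) := by
  rw [bb, add_div, sin_add_pi_div_two]

lemma continuous_bb : Continuous bb := by
  unfold bb
  fun_prop

lemma bb_neg (φ : ℝ) : bb (-φ) = bb φ := by
  rw [bb_eq_sqrt_two_mul_cos, bb_eq_sqrt_two_mul_cos, neg_div, cos_neg]

lemma abs_bb_periodic : Function.Periodic (fun φ => |bb φ|) (2 * π) := fun φ => by
  simp only [bb_eq_sqrt_two_mul_cos]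
  rw [add_div, mul_div_cancel_left₀ π two_ne_zero, cos_add_pi, mul_neg, abs_neg]

lemma abs_bb_le_two (φ : ℝ) : |bb φ| ≤ 2 := by
  rw [bb, abs_mul, abs_of_nonneg (Real.sqrt_nonneg _)]
  calc √2 * |sin ((φ + π) / 2)| ≤ √2 * 1 := by gcongr; exact abs_sin_le_one _
    _ ≤ 2 := by rw [mul_one, Real.sqrt_le_left] <;> norm_num

lemma abs_bb_sub_bb_le (x y : ℝ) : |bb x - bb y| ≤ |x - y| := by
  have sqrt_two_le : √2 ≤ 2 := by rw [Real.sqrt_le_left] <;> norm_num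
  have sin_lip : |sin ((x + π) / 2) - sin ((y + π) / 2)| ≤ |(x + π) / 2 - (y + π) / 2| :=
    abs_sin_sub_sin_le _ _
  calc |bb x - bb y| = √2 * |sin ((x + π) / 2) - sin ((y + π) / 2)| := by
        rw [bb, bb, ← mul_sub, abs_mul, abs_of_nonneg (Real.sqrt_nonneg _)]
    _ ≤ 2 * |(x + π) / 2 - (y + π) / 2| := by gcongr
    _ = |x - y| := by
        rw [← sub_div, abs_div, abs_two, mul_div_cancel₀ _ two_ne_zero, add_sub_add_right_eq_sub]

lemma abs_le_pi_mul_abs_bb_sub_pi {u : ℝ} (hu : |u| ≤ π) : |u| ≤ π * |bb (u - π)| := by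
  have one_le_sqrt_two : 1 ≤ √2 := Real.one_le_sqrt.2 one_le_two
  have half_le : |u / 2| ≤ π / 2 := by
    rw [abs_div, abs_two]
    gcongr
  calc |u| = π * (2 / π * |u / 2|) := by rw [abs_div, abs_two]; field_simp
    _ ≤ π * (1 * |sin (u / 2)|) := by rw [one_mul]; gcongr; exact mul_abs_le_abs_sin half_le
    _ ≤ π * |bb (u - π)| := by
        rw [bb, sub_add_cancel, abs_mul, abs_of_nonneg (Real.sqrt_nonneg _)]
        gcongr

lemma two_mul_sin_sq_eq_abs_bb_sq (φ : ℝ) : 2 * sin ((φ + π) / 2) ^ 2 = |bb φ| ^ 2 := by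
  rw [sq_abs, bb, mul_pow, Real.sq_sqrt zero_le_two]

lemma abs_sin_add_pi_le (φ : ℝ) : |sin (φ + π)| ≤ √2 * |bb φ| := by
  have double_angle : sin (φ + π) = √2 * bb φ * cos ((φ + π) / 2) := by
    rw [bb, ← mul_assoc, Real.mul_self_sqrt zero_le_two, ← sin_two_mul,
      mul_div_cancel₀ _ two_ne_zero]
  rw [double_angle, abs_mul, abs_mul, abs_of_nonneg (Real.sqrt_nonneg _)]
  exact mul_le_of_le_one_right (by positivity) (abs_cos_le_one _)

lemma norm_integral_Ioi_cexp_mul_sin_div_le {l : ℝ} (hl : 0 < l) (φ : ℝ) :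
    ‖∫ s in Ioi (0 : ℝ), Complex.exp (Complex.I * ((l * s ^ 2 : ℝ) : ℂ)) *
      ((sin (φ + π) / (s ^ 2 / 2 + 2 * sin ((φ + π) / 2) ^ 2) : ℝ) : ℂ)‖ ≤
      8 / (1 + √l * |bb φ|) := by
  have sin_le := abs_sin_add_pi_le φ
  rw [two_mul_sin_sq_eq_abs_bb_sq]
  set b := |bb φ|
  rcases (abs_nonneg _ : 0 ≤ b).eq_or_lt with hb | hb
  · have sin_eq_zero : sin (φ + π) = 0 :=
      abs_nonpos_iff.1 (sin_le.trans_eq (by rw [show b = 0 from hb.symm, mul_zero]))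
    simp only [sin_eq_zero, zero_div, Complex.ofReal_zero, mul_zero, integral_zero, norm_zero]
    positivity
  set J := ‖∫ s in Ioi (0 : ℝ), Complex.exp (Complex.I * ((l * s ^ 2 : ℝ) : ℂ)) *
      ((1 / (s ^ 2 / 2 + b ^ 2) : ℝ) : ℂ)‖
  have : 0 < √l := Real.sqrt_pos.2 hl
  have sqrt_two_le : √2 ≤ 3 / 2 := by rw [Real.sqrt_le_left] <;> norm_num
  have bound_at_zero : √2 * b * J ≤ π := by
    have := norm_integral_Ioi_cexp_div_le_div l hb
    rw [div_div, le_div_iff₀ (by positivity)] at this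
    linarith
  have bound_oscillating : J * (√l * b ^ 2) ≤ 2 := by
    have := norm_integral_Ioi_cexp_div_le_div_sqrt hl hb
    rwa [mul_one_div, div_div, le_div_iff₀ (by positivity), mul_comm (b ^ 2)] at this
  calc _ = |sin (φ + π)| * J := by
        rw [← Real.norm_eq_abs, ← Complex.norm_real, ← norm_mul, ← integral_const_mul]
        refine congrArg norm (integral_congr_ae (ae_of_all _ fun s => ?_))
        push_cast
        ring
    _ ≤ √2 * b * J := by gcongr
    _ ≤ 8 / (1 + √l * b) := by
        rw [le_div_iff₀ (by positivity)]
        calc √2 * b * J * (1 + √l * b) = √2 * b * J + √2 * (J * (√l * b ^ 2)) := by ring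
          _ ≤ π + 3 / 2 * 2 := by gcongr
          _ ≤ 8 := by linarith [pi_lt_four]

end AngularPhase

section NonMeasurable

variable {X : Type*} [MeasurableSpace X] {μ : Measure X} {p q : ℝ}

lemma lintegral_mul_le_Lp_mul_Lq_of_measurable_left (hpq : p.HolderConjugate q) {v : X → ℝ≥0∞}
    (hv : Measurable v) (hv_top : ∀ x, v x < ∞) (g : X → ℝ≥0∞) :
    ∫⁻ x, v x * g x ∂μ ≤ (∫⁻ x, v x ^ q ∂μ) ^ (1 / q) * (∫⁻ x, g x ^ p ∂μ) ^ (1 / p) := by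
  have weight (g : X → ℝ≥0∞) : ∫⁻ x, v x * g x ∂μ = ∫⁻ x, g x ∂μ.withDensity v :=
    (lintegral_withDensity_eq_lintegral_mul_non_measurable μ hv (ae_of_all _ hv_top) g).symm
  obtain ⟨g₀, g₀_meas, g₀_le, g₀_eq⟩ :=
    exists_measurable_le_lintegral_eq (μ := μ.withDensity v) g
  calc ∫⁻ x, v x * g x ∂μ = ∫⁻ x, v x * g₀ x ∂μ := by rw [weight, weight, g₀_eq]
    _ ≤ (∫⁻ x, v x ^ q ∂μ) ^ (1 / q) * (∫⁻ x, g₀ x ^ p ∂μ) ^ (1 / p) :=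
        ENNReal.lintegral_mul_le_Lp_mul_Lq μ hpq.symm hv.aemeasurable g₀_meas.aemeasurable
    _ ≤ (∫⁻ x, v x ^ q ∂μ) ^ (1 / q) * (∫⁻ x, g x ^ p ∂μ) ^ (1 / p) := by
        have := hpq.pos
        gcongr with x
        exact g₀_le x

lemma rpow_lintegral_mul_le (hp : 1 < p) {κ : X → ℝ≥0∞} (hκ : Measurable κ)
    (hκ_top : ∀ x, κ x < ∞) (g : X → ℝ≥0∞) :
    (∫⁻ x, κ x * g x ∂μ) ^ p ≤ (∫⁻ x, κ x ∂μ) ^ (p - 1) * ∫⁻ x, κ x * g x ^ p ∂μ := by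
  have weight (g : X → ℝ≥0∞) : ∫⁻ x, κ x * g x ∂μ = ∫⁻ x, 1 * g x ∂μ.withDensity κ := by
    simp only [one_mul]
    exact (lintegral_withDensity_eq_lintegral_mul_non_measurable μ hκ (ae_of_all _ hκ_top) g).symm
  have hpq : p.HolderConjugate (p / (p - 1)) := .conjExponent hp
  have hp0 : 0 < p := hpq.pos
  have hp1 : 0 < p - 1 := sub_pos.2 hp
  calc (∫⁻ x, κ x * g x ∂μ) ^ p
      ≤ ((∫⁻ x, κ x * 1 ∂μ) ^ (1 / (p / (p - 1))) * (∫⁻ x, κ x * g x ^ p ∂μ) ^ (1 / p)) ^ p := by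
        have := lintegral_mul_le_Lp_mul_Lq_of_measurable_left (μ := μ.withDensity κ) hpq
          (measurable_const (a := 1)) (fun _ => ENNReal.one_lt_top) g
        rw [weight g, weight fun _ => 1, weight fun x => g x ^ p]
        simp only [ENNReal.one_rpow, one_mul] at this ⊢
        gcongr
    _ = (∫⁻ x, κ x ∂μ) ^ (p - 1) * ∫⁻ x, κ x * g x ^ p ∂μ := by
        rw [ENNReal.mul_rpow_of_nonneg _ _ hp0.le, ← ENNReal.rpow_mul, ← ENNReal.rpow_mul,
          show 1 / p * p = 1 by field_simp, show 1 / (p / (p - 1)) * p = p - 1 by field_simp,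
          ENNReal.rpow_one]
        simp only [mul_one]

lemma rpow_lintegral_const_mul_rpow (hp : 0 < p) {κ : ℝ≥0∞} (hκ : κ ≠ ∞) (g : X → ℝ≥0∞) :
    (∫⁻ x, (κ * g x) ^ p ∂μ) ^ (1 / p) = κ * (∫⁻ x, g x ^ p ∂μ) ^ (1 / p) := by
  simp only [ENNReal.mul_rpow_of_nonneg _ _ hp.le]
  rw [lintegral_const_mul' _ _ (ENNReal.rpow_ne_top_of_nonneg hp.le hκ),
    ENNReal.mul_rpow_of_nonneg _ _ (one_div_pos.2 hp).le, ← ENNReal.rpow_mul,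
    mul_one_div_cancel hp.ne', ENNReal.rpow_one]

lemma tsum_lintegral_le {ι : Type*} (F : ι → X → ℝ≥0∞) :
    ∑' i, ∫⁻ x, F i x ∂μ ≤ ∫⁻ x, ∑' i, F i x ∂μ := by
  have finite_sum (s : Finset ι) : ∑ i ∈ s, ∫⁻ x, F i x ∂μ ≤ ∫⁻ x, ∑ i ∈ s, F i x ∂μ := by
    classical
    induction s using Finset.induction_on with
    | empty => simp
    | insert i s hi ih =>
      simp only [Finset.sum_insert hi]
      exact (add_le_add_right ih _).trans (le_lintegral_add _ _)
  rw [ENNReal.tsum_eq_iSup_sum]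
  refine iSup_le fun s => (finite_sum s).trans (lintegral_mono fun x => ?_)
  exact ENNReal.sum_le_tsum (f := fun i => F i x) s

lemma lintegral_eq_tsum_Ico_zsmul (μ : Measure ℝ) {h : ℝ} (hh : 0 < h) (G : ℝ → ℝ≥0∞) :
    ∫⁻ x, G x ∂μ = ∑' n : ℤ, ∫⁻ x in Ico (n • h) ((n + 1) • h), G x ∂μ := by
  rw [← lintegral_iUnion (fun _ => measurableSet_Ico) (pairwise_disjoint_Ico_zsmul h),
    iUnion_Ico_zsmul hh, setLIntegral_univ]

lemma lintegral_lintegral_swap_le (μ : Measure ℝ) (ν : Measure X) {h : ℝ} (hh : 0 < h)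
    {A : ℝ≥0} {F : ℝ → X → ℝ≥0∞} (hF : ∀ x y z, |x - y| ≤ h → F x z ≤ A * F y z) :
    ∫⁻ x, ∫⁻ z, F x z ∂ν ∂μ ≤ A ^ 2 * ∫⁻ z, ∫⁻ x, F x z ∂μ ∂ν := by
  set I : ℤ → Set ℝ := fun n => Ico (n • h) ((n + 1) • h)
  have dist_le (n : ℤ) (x) (hx : x ∈ I n) : |x - n • h| ≤ h := by
    rw [abs_of_nonneg (sub_nonneg.2 hx.1), sub_le_iff_le_add, add_comm]
    simpa only [add_smul, one_smul] using hx.2.le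
  have freeze_left (n : ℤ) :
      ∫⁻ x in I n, ∫⁻ z, F x z ∂ν ∂μ ≤ ∫⁻ z, A * μ (I n) * F (n • h) z ∂ν := by
    calc ∫⁻ x in I n, ∫⁻ z, F x z ∂ν ∂μ ≤ ∫⁻ _ in I n, ∫⁻ z, A * F (n • h) z ∂ν ∂μ :=
          setLIntegral_mono' measurableSet_Ico fun x hx =>
            lintegral_mono fun z => hF _ _ _ (dist_le n x hx)
      _ = A * μ (I n) * ∫⁻ z, F (n • h) z ∂ν := by
          rw [setLIntegral_const, lintegral_const_mul' _ _ ENNReal.coe_ne_top]; ring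
      _ ≤ ∫⁻ z, A * μ (I n) * F (n • h) z ∂ν := lintegral_const_mul_le _ _
  have freeze_right (n : ℤ) (z : X) :
      A * μ (I n) * F (n • h) z ≤ A ^ 2 * ∫⁻ x in I n, F x z ∂μ := by
    calc A * μ (I n) * F (n • h) z = A * ∫⁻ _ in I n, F (n • h) z ∂μ := by
          rw [setLIntegral_const]; ring
      _ ≤ A * ∫⁻ x in I n, A * F x z ∂μ := by
          refine mul_le_mul_right (setLIntegral_mono' measurableSet_Ico fun x hx => ?_) _
          exact hF _ _ _ (abs_sub_comm x _ ▸ dist_le n x hx)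
      _ = A ^ 2 * ∫⁻ x in I n, F x z ∂μ := by
          rw [lintegral_const_mul' _ _ ENNReal.coe_ne_top]; ring
  calc ∫⁻ x, ∫⁻ z, F x z ∂ν ∂μ
      ≤ ∑' n, ∫⁻ z, A * μ (I n) * F (n • h) z ∂ν := by
        rw [lintegral_eq_tsum_Ico_zsmul μ hh]
        exact ENNReal.tsum_le_tsum freeze_left
    _ ≤ ∫⁻ z, ∑' n, A ^ 2 * ∫⁻ x in I n, F x z ∂μ ∂ν :=
        (tsum_lintegral_le _).trans
          (lintegral_mono fun z => ENNReal.tsum_le_tsum (freeze_right · z))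
    _ = A ^ 2 * ∫⁻ z, ∫⁻ x, F x z ∂μ ∂ν := by
        rw [← lintegral_const_mul' _ _ (ENNReal.pow_ne_top ENNReal.coe_ne_top)]
        simp only [ENNReal.tsum_mul_left, lintegral_eq_tsum_Ico_zsmul μ hh, I]

variable {Y : Type*} [MeasurableSpace Y] {ρ : Measure X} {τ : Measure Y} {σ : Measure ℝ}
  {v : X → ℝ≥0∞} {k : ℝ → Y → ℝ≥0∞} {M M' : ℝ≥0∞} {h : ℝ} {A : ℝ≥0}

lemma rpow_lintegral_mul_lintegral_mul_le (hpq : p.HolderConjugate q) (hv : Measurable v)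
    (hv_top : ∀ r, v r < ∞) {κ : Y → ℝ≥0∞} (hκ : Measurable κ) (hκ_top : ∀ z, κ z < ∞)
    (hM : ∫⁻ z, κ z ∂τ ≤ M) (hM_top : M ≠ ∞) (g : X → Y → ℝ≥0∞) :
    (∫⁻ r, v r * ∫⁻ z, κ z * g r z ∂τ ∂ρ) ^ p ≤
      (∫⁻ r, v r ^ q ∂ρ) ^ (p / q) * (M ^ (p - 1) * ∫⁻ r, ∫⁻ z, κ z * g r z ^ p ∂τ ∂ρ) := by
  have hp : 0 < p := hpq.pos
  have hp1 : 0 < p - 1 := sub_pos.2 hpq.lt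
  calc (∫⁻ r, v r * ∫⁻ z, κ z * g r z ∂τ ∂ρ) ^ p
      ≤ ((∫⁻ r, v r ^ q ∂ρ) ^ (1 / q) *
          (∫⁻ r, (∫⁻ z, κ z * g r z ∂τ) ^ p ∂ρ) ^ (1 / p)) ^ p := by
        gcongr
        exact lintegral_mul_le_Lp_mul_Lq_of_measurable_left hpq hv hv_top _
    _ = (∫⁻ r, v r ^ q ∂ρ) ^ (p / q) * ∫⁻ r, (∫⁻ z, κ z * g r z ∂τ) ^ p ∂ρ := by
        rw [ENNReal.mul_rpow_of_nonneg _ _ hp.le, ← ENNReal.rpow_mul, ← ENNReal.rpow_mul,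
          one_div_mul_cancel hp.ne', ENNReal.rpow_one, one_div_mul_eq_div]
    _ ≤ (∫⁻ r, v r ^ q ∂ρ) ^ (p / q) *
          ∫⁻ r, (∫⁻ z, κ z ∂τ) ^ (p - 1) * ∫⁻ z, κ z * g r z ^ p ∂τ ∂ρ := by
        gcongr with r
        exact rpow_lintegral_mul_le hpq.lt hκ hκ_top _
    _ ≤ (∫⁻ r, v r ^ q ∂ρ) ^ (p / q) *
          (M ^ (p - 1) * ∫⁻ r, ∫⁻ z, κ z * g r z ^ p ∂τ ∂ρ) := by
        rw [lintegral_const_mul' _ _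
          (ENNReal.rpow_ne_top_of_nonneg hp1.le (ne_top_of_le_ne_top hM_top hM))]
        gcongr

lemma lintegral_lintegral_lintegral_mul_le (hh : 0 < h) (hk : ∀ z, Measurable fun x => k x z)
    (hk_slow : ∀ x y z, |x - y| ≤ h → k x z ≤ A * k y z)
    (hM' : ∀ z, ∫⁻ x, k x z ∂σ ≤ M') (hM'_top : M' ≠ ∞) (g : X → Y → ℝ≥0∞) :
    ∫⁻ x, ∫⁻ r, ∫⁻ z, k x z * g r z ∂τ ∂ρ ∂σ ≤ A ^ 4 * M' * ∫⁻ r, ∫⁻ z, g r z ∂τ ∂ρ := by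
  calc ∫⁻ x, ∫⁻ r, ∫⁻ z, k x z * g r z ∂τ ∂ρ ∂σ
      ≤ A ^ 2 * ∫⁻ r, ∫⁻ x, ∫⁻ z, k x z * g r z ∂τ ∂σ ∂ρ := by
        refine lintegral_lintegral_swap_le σ ρ hh fun x y r hxy => ?_
        rw [← lintegral_const_mul' _ _ ENNReal.coe_ne_top]
        refine lintegral_mono fun z => ?_
        rw [← mul_assoc]
        gcongr
        exact hk_slow x y z hxy
    _ ≤ A ^ 2 * ∫⁻ r, A ^ 2 * ∫⁻ z, ∫⁻ x, k x z * g r z ∂σ ∂τ ∂ρ := by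
        gcongr with r
        refine lintegral_lintegral_swap_le σ τ hh fun x y z hxy => ?_
        rw [← mul_assoc]
        gcongr
        exact hk_slow x y z hxy
    _ ≤ A ^ 2 * ∫⁻ r, A ^ 2 * ∫⁻ z, M' * g r z ∂τ ∂ρ := by
        gcongr with r z
        rw [lintegral_mul_const _ (hk z)]
        gcongr
        exact hM' z
    _ = A ^ 4 * M' * ∫⁻ r, ∫⁻ z, g r z ∂τ ∂ρ := by
        simp only [lintegral_const_mul' _ _ hM'_top,
          lintegral_const_mul' _ _ (ENNReal.pow_ne_top (ENNReal.coe_ne_top (r := A)))]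
        ring

theorem lintegral_rpow_lintegral_mul_lintegral_mul_le (hpq : p.HolderConjugate q)
    (hv : Measurable v) (hv_top : ∀ r, v r < ∞) (hk : Measurable (Function.uncurry k))
    (hk_top : ∀ x z, k x z < ∞) (hh : 0 < h)
    (hk_slow : ∀ x y z, |x - y| ≤ h → k x z ≤ A * k y z)
    (hM : ∀ x, ∫⁻ z, k x z ∂τ ≤ M) (hM_top : M ≠ ∞)
    (hM' : ∀ z, ∫⁻ x, k x z ∂σ ≤ M') (hM'_top : M' ≠ ∞) (hv_int : ∫⁻ r, v r ^ q ∂ρ ≠ ∞)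
    (g : X → Y → ℝ≥0∞) :
    ∫⁻ x, (∫⁻ r, v r * ∫⁻ z, k x z * g r z ∂τ ∂ρ) ^ p ∂σ ≤
      (∫⁻ r, v r ^ q ∂ρ) ^ (p / q) * (M ^ (p - 1) * (A ^ 4 * M' *
        ∫⁻ r, ∫⁻ z, g r z ^ p ∂τ ∂ρ)) := by
  have hp1 : 0 ≤ p - 1 := (sub_pos.2 hpq.lt).le
  calc ∫⁻ x, (∫⁻ r, v r * ∫⁻ z, k x z * g r z ∂τ ∂ρ) ^ p ∂σ
      ≤ ∫⁻ x, (∫⁻ r, v r ^ q ∂ρ) ^ (p / q) *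
          (M ^ (p - 1) * ∫⁻ r, ∫⁻ z, k x z * g r z ^ p ∂τ ∂ρ) ∂σ :=
        lintegral_mono fun x => rpow_lintegral_mul_lintegral_mul_le hpq hv hv_top
          hk.of_uncurry_left (hk_top x) (hM x) hM_top g
    _ = (∫⁻ r, v r ^ q ∂ρ) ^ (p / q) * (M ^ (p - 1) *
          ∫⁻ x, ∫⁻ r, ∫⁻ z, k x z * g r z ^ p ∂τ ∂ρ ∂σ) := by
        have hpq0 : 0 ≤ p / q := div_nonneg hpq.nonneg hpq.symm.nonneg
        rw [lintegral_const_mul' _ _ (ENNReal.rpow_ne_top_of_nonneg hpq0 hv_int),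
          lintegral_const_mul' _ _ (ENNReal.rpow_ne_top_of_nonneg hp1 hM_top)]
    _ ≤ _ := by
        gcongr
        exact lintegral_lintegral_lintegral_mul_le hh (fun z => hk.of_uncurry_right) hk_slow
          hM' hM'_top _

end NonMeasurable

section PolarOperator

/-- The measure `r dr` on `(0, ∞)`, the radial part of Lebesgue measure on `ℝ²`. -/
def radialMeasure : Measure ℝ := (volume.restrict (Ioi 0)).withDensity ENNReal.ofReal

/-- The integral operator on `ℝ²` whose kernel in polar coordinates is `K r₁ r₂ (θ₁ - θ₂)`. -/
def polarOp (K : ℝ → ℝ → ℝ → ℂ) (f : ℝ → ℝ → ℂ) (r₁ θ₁ : ℝ) : ℂ :=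
  ∫ r₂ in Ioi (0 : ℝ), (∫ θ₂ in Ico 0 (2 * π), K r₁ r₂ (θ₁ - θ₂) * f r₂ θ₂) * (r₂ : ℂ)

lemma lintegral_radialMeasure (g : ℝ → ℝ≥0∞) :
    ∫⁻ r, g r ∂radialMeasure = ∫⁻ r in Ioi 0, g r * ENNReal.ofReal r := by
  simp only [mul_comm (g _)]
  exact lintegral_withDensity_eq_lintegral_mul_non_measurable _ ENNReal.measurable_ofReal
    (ae_of_all _ fun _ => ENNReal.ofReal_lt_top) g

lemma ae_radialMeasure_pos : ∀ᵐ r ∂radialMeasure, 0 < r :=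
  (withDensity_absolutelyContinuous _ _).ae_le (ae_restrict_mem measurableSet_Ioi)

lemma polarLp_eq (p : ℝ) (g : ℝ → ℝ → ℂ) :
    polarLp p g =
      (∫⁻ r, ∫⁻ θ in Ico 0 (2 * π), ‖g r θ‖ₑ ^ p ∂volume ∂radialMeasure) ^ (1 / p) := by
  rw [lintegral_radialMeasure]
  rfl

/-- Weights for convolution on the circle which are essentially constant at scale `h`, up to the
factor `A`, and whose mass is at most `M`; these dominate the angular part of a kernel. -/
structure IsAngularWeight (w : ℝ → ℝ≥0∞) (h : ℝ) (A M : ℝ≥0) : Prop where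
  measurable : Measurable w
  lt_top : ∀ φ, w φ < ∞
  even : ∀ φ, w (-φ) = w φ
  scale_pos : 0 < h
  le_mul_of_abs_sub_le : ∀ x y, |x - y| ≤ h → w x ≤ A * w y
  lintegral_sub_le : ∀ t, ∫⁻ θ in Ico 0 (2 * π), w (t - θ) ≤ M

variable {K : ℝ → ℝ → ℝ → ℂ} {u v w : ℝ → ℝ≥0∞} {p q h : ℝ} {A M : ℝ≥0}

lemma enorm_polarOp_le (K : ℝ → ℝ → ℝ → ℂ) (f : ℝ → ℝ → ℂ) (r₁ θ₁ : ℝ) :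
    ‖polarOp K f r₁ θ₁‖ₑ ≤
      ∫⁻ r₂, ∫⁻ θ₂ in Ico 0 (2 * π), ‖K r₁ r₂ (θ₁ - θ₂)‖ₑ * ‖f r₂ θ₂‖ₑ ∂volume ∂radialMeasure := by
  rw [lintegral_radialMeasure]
  refine (enorm_integral_le_lintegral_enorm _).trans (setLIntegral_mono' measurableSet_Ioi ?_)
  intro r₂ hr₂
  rw [enorm_mul, ← ofReal_norm (r₂ : ℂ), Complex.norm_real, Real.norm_of_nonneg hr₂.le]
  gcongr
  simpa only [enorm_mul] using enorm_integral_le_lintegral_enorm (μ := volume.restrict _)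
    fun θ₂ => K r₁ r₂ (θ₁ - θ₂) * f r₂ θ₂

lemma enorm_polarOp_le_of_enorm_le
    (hK : ∀ r₁ > 0, ∀ r₂ > 0, ∀ φ, ‖K r₁ r₂ φ‖ₑ ≤ u r₁ * v r₂ * w φ) (hu_top : ∀ r, u r < ∞)
    (hv_top : ∀ r, v r < ∞) (f : ℝ → ℝ → ℂ) {r₁ : ℝ} (hr₁ : 0 < r₁) (θ₁ : ℝ) :
    ‖polarOp K f r₁ θ₁‖ₑ ≤ u r₁ * ∫⁻ r₂, v r₂ *
      ∫⁻ θ₂ in Ico 0 (2 * π), w (θ₁ - θ₂) * ‖f r₂ θ₂‖ₑ ∂volume ∂radialMeasure := by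
  refine (enorm_polarOp_le K f r₁ θ₁).trans ?_
  simp only [← lintegral_const_mul' _ _ (hu_top _).ne, ← lintegral_const_mul' _ _ (hv_top _).ne]
  refine lintegral_mono_ae (ae_radialMeasure_pos.mono fun r₂ hr₂ => lintegral_mono fun θ₂ => ?_)
  simp only [← mul_assoc]
  gcongr
  exact hK r₁ hr₁ r₂ hr₂ _

lemma lintegral_enorm_polarOp_rpow_le (hpq : p.HolderConjugate q)
    (hK : ∀ r₁ > 0, ∀ r₂ > 0, ∀ φ, ‖K r₁ r₂ φ‖ₑ ≤ u r₁ * v r₂ * w φ)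
    (hu_top : ∀ r, u r < ∞) (hv : Measurable v) (hv_top : ∀ r, v r < ∞)
    (hv_int : ∫⁻ r, v r ^ q ∂radialMeasure ≠ ∞) (hw : IsAngularWeight w h A M)
    (f : ℝ → ℝ → ℂ) {r₁ : ℝ} (hr₁ : 0 < r₁) :
    ∫⁻ θ₁ in Ico 0 (2 * π), ‖polarOp K f r₁ θ₁‖ₑ ^ p ≤
      u r₁ ^ p * ((∫⁻ r, v r ^ q ∂radialMeasure) ^ (p / q) * (M ^ (p - 1) * (A ^ 4 * M *
        ∫⁻ r, ∫⁻ θ in Ico 0 (2 * π), ‖f r θ‖ₑ ^ p ∂volume ∂radialMeasure))) := by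
  have hp : 0 < p := hpq.pos
  have lintegral_sub_le' (θ₂ : ℝ) : ∫⁻ θ₁ in Ico 0 (2 * π), w (θ₁ - θ₂) ≤ M := by
    simpa only [← hw.even (_ - θ₂), neg_sub] using hw.lintegral_sub_le θ₂
  calc ∫⁻ θ₁ in Ico 0 (2 * π), ‖polarOp K f r₁ θ₁‖ₑ ^ p
      ≤ ∫⁻ θ₁ in Ico 0 (2 * π), u r₁ ^ p * (∫⁻ r₂, v r₂ *
          ∫⁻ θ₂ in Ico 0 (2 * π), w (θ₁ - θ₂) * ‖f r₂ θ₂‖ₑ ∂volume ∂radialMeasure) ^ p := by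
        refine lintegral_mono fun θ₁ => ?_
        rw [← ENNReal.mul_rpow_of_nonneg _ _ hp.le]
        gcongr
        exact enorm_polarOp_le_of_enorm_le hK hu_top hv_top f hr₁ θ₁
    _ ≤ _ := by
        rw [lintegral_const_mul' _ _ (ENNReal.rpow_ne_top_of_nonneg hp.le (hu_top _).ne)]
        gcongr
        refine lintegral_rpow_lintegral_mul_lintegral_mul_le (k := fun x z => w (x - z)) hpq hv
          hv_top (hw.measurable.comp measurable_sub) (fun _ _ => hw.lt_top _) hw.scale_pos
          (fun x y z hxy => hw.le_mul_of_abs_sub_le _ _ ?_) hw.lintegral_sub_le ENNReal.coe_ne_top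
          lintegral_sub_le' ENNReal.coe_ne_top hv_int fun r θ => ‖f r θ‖ₑ
        rwa [sub_sub_sub_cancel_right]

theorem polarLp_polarOp_le (hpq : p.HolderConjugate q)
    (hK : ∀ r₁ > 0, ∀ r₂ > 0, ∀ φ, ‖K r₁ r₂ φ‖ₑ ≤ u r₁ * v r₂ * w φ)
    (hu : Measurable u) (hu_top : ∀ r, u r < ∞) (hv : Measurable v) (hv_top : ∀ r, v r < ∞)
    (hv_int : ∫⁻ r, v r ^ q ∂radialMeasure ≠ ∞) (hw : IsAngularWeight w h A M)
    (f : ℝ → ℝ → ℂ) :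
    polarLp p (polarOp K f) ≤ A ^ (4 / p) * (∫⁻ r, v r ^ q ∂radialMeasure) ^ (1 / q) * M *
      (∫⁻ r, u r ^ p ∂radialMeasure) ^ (1 / p) * polarLp p f := by
  have hp : 0 < p := hpq.pos
  have hp' : 0 ≤ 1 / p := (one_div_pos.2 hp).le
  set U := ∫⁻ r, u r ^ p ∂radialMeasure
  set V := ∫⁻ r, v r ^ q ∂radialMeasure
  set N := ∫⁻ r, ∫⁻ θ in Ico 0 (2 * π), ‖f r θ‖ₑ ^ p ∂volume ∂radialMeasure
  have M_rpow : (M : ℝ≥0∞) ^ p = M ^ (p - 1) * M := by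
    nth_rewrite 3 [← ENNReal.rpow_one M]
    rw [← ENNReal.rpow_add_of_nonneg _ _ (sub_pos.2 hpq.lt).le zero_le_one, sub_add_cancel]
  calc polarLp p (polarOp K f)
      ≤ (∫⁻ r, u r ^ p * (V ^ (p / q) * (M ^ (p - 1) * (A ^ 4 * M * N))) ∂radialMeasure) ^
          (1 / p) := by
        rw [polarLp_eq]
        gcongr ?_ ^ (1 / p)
        refine lintegral_mono_ae (ae_radialMeasure_pos.mono fun r hr => ?_)
        exact lintegral_enorm_polarOp_rpow_le hpq hK hu_top hv hv_top hv_int hw f hr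
    _ = (U * V ^ (p / q) * M ^ p * A ^ 4 * N) ^ (1 / p) := by
        rw [lintegral_mul_const _ (hu.pow_const p), M_rpow]
        congr 1
        ring
    _ = A ^ (4 / p) * V ^ (1 / q) * M * U ^ (1 / p) * polarLp p f := by
        rw [polarLp_eq]
        simp only [ENNReal.mul_rpow_of_nonneg _ _ hp', ← ENNReal.rpow_mul, ← ENNReal.rpow_natCast]
        rw [mul_one_div_cancel hp.ne', ENNReal.rpow_one, show p / q * (1 / p) = 1 / q by field_simp,
          show ((4 : ℕ) : ℝ) * (1 / p) = 4 / p by push_cast; ring]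
        ring

end PolarOperator

section AngularWeight

/-- The weight `(1 + Q |b|)^(-α)` as a function of `φ = θ₁ - θ₂`: the angular decay at frequency
`Q` which the oscillatory integral in `Hker` provides. -/
def angWeight (Q α φ : ℝ) : ℝ≥0∞ := ENNReal.ofReal ((1 + Q * |bb φ|) ^ (-α))

variable {Q α : ℝ}

lemma continuous_one_add_mul_abs_bb_rpow (hQ : 0 ≤ Q) (α : ℝ) :
    Continuous fun φ => (1 + Q * |bb φ|) ^ (-α) :=
  (continuous_const.add (continuous_const.mul continuous_bb.abs)).rpow_const
    fun _ => .inl (add_pos_of_pos_of_nonneg one_pos (mul_nonneg hQ (abs_nonneg _))).ne'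

lemma angWeight_le_two_mul (hQ : 0 < Q) (hα : 0 ≤ α) (hα1 : α ≤ 1) {x y : ℝ}
    (hxy : |x - y| ≤ Q⁻¹) : angWeight Q α x ≤ 2 * angWeight Q α y := by
  have comparable : 1 + Q * |bb y| ≤ 2 * (1 + Q * |bb x|) := by
    have bb_close : |bb y| - |bb x| ≤ Q⁻¹ :=
      (abs_sub_abs_le_abs_sub _ _).trans ((abs_bb_sub_bb_le y x).trans (abs_sub_comm x y ▸ hxy))
    have : Q * (|bb y| - |bb x|) ≤ 1 := by
      calc Q * (|bb y| - |bb x|) ≤ Q * Q⁻¹ := by gcongr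
        _ = 1 := mul_inv_cancel₀ hQ.ne'
    nlinarith [mul_nonneg hQ.le (abs_nonneg (bb x))]
  rw [angWeight, angWeight, ← ENNReal.ofReal_ofNat 2, ← ENNReal.ofReal_mul zero_le_two]
  refine ENNReal.ofReal_le_ofReal ?_
  rw [rpow_neg (by positivity), rpow_neg (by positivity), ← div_eq_mul_inv,
    inv_le_comm₀ (by positivity) (by positivity), inv_div, div_le_iff₀ two_pos]
  calc (1 + Q * |bb y|) ^ α ≤ (2 * (1 + Q * |bb x|)) ^ α := by gcongr
    _ = 2 ^ α * (1 + Q * |bb x|) ^ α := mul_rpow zero_le_two (by positivity)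
    _ ≤ 2 ^ (1 : ℝ) * (1 + Q * |bb x|) ^ α := by gcongr; exact one_le_two
    _ = (1 + Q * |bb x|) ^ α * 2 := by rw [rpow_one, mul_comm]

lemma intervalIntegral_one_add_mul_abs_bb_rpow_eq (Q α t : ℝ) :
    ∫ θ in (0 : ℝ)..2 * π, (1 + Q * |bb (t - θ)|) ^ (-α) =
      ∫ u in -π..π, (1 + Q * |bb (u - π)|) ^ (-α) := by
  have periodic : Function.Periodic (fun φ => (1 + Q * |bb φ|) ^ (-α)) (2 * π) :=
    abs_bb_periodic.comp fun b => (1 + Q * b) ^ (-α)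
  rw [intervalIntegral.integral_comp_sub_left (fun φ => (1 + Q * |bb φ|) ^ (-α)),
    intervalIntegral.integral_comp_sub_right (fun φ => (1 + Q * |bb φ|) ^ (-α))]
  have shift := periodic.intervalIntegral_add_eq (t - 2 * π) (-π - π)
  convert shift using 2 <;> ring

lemma intervalIntegral_one_add_mul_abs_bb_sub_pi_rpow_le (hQ : 0 < Q) (hα : 0 ≤ α)
    (hα1 : α < 1) :
    ∫ u in (0 : ℝ)..π, (1 + Q * |bb (u - π)|) ^ (-α) ≤ π / (1 - α) * Q ^ (-α) := by
  have pow_int : IntervalIntegrable (fun u : ℝ => (Q / π) ^ (-α) * u ^ (-α)) volume 0 π :=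
    (intervalIntegral.intervalIntegrable_rpow' (by linarith)).const_mul _
  have weight_cont : Continuous fun u => (1 + Q * |bb (u - π)|) ^ (-α) :=
    (continuous_one_add_mul_abs_bb_rpow hQ.le α).comp (continuous_sub_right π)
  calc ∫ u in (0 : ℝ)..π, (1 + Q * |bb (u - π)|) ^ (-α)
      ≤ ∫ u in (0 : ℝ)..π, (Q / π) ^ (-α) * u ^ (-α) := by
        refine intervalIntegral.integral_mono_on_of_le_Ioo pi_nonneg
          (weight_cont.intervalIntegrable _ _) pow_int fun u hu => ?_
        have hu0 : 0 < u := hu.1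
        have u_le : u ≤ π * |bb (u - π)| := by
          have := abs_le_pi_mul_abs_bb_sub_pi (u := u) (by rw [abs_of_pos hu0]; exact hu.2.le)
          rwa [abs_of_pos hu0] at this
        rw [← mul_rpow (by positivity) hu0.le]
        refine rpow_le_rpow_of_nonpos (by positivity) ?_ (neg_nonpos.2 hα)
        calc Q / π * u ≤ Q / π * (π * |bb (u - π)|) := by gcongr
          _ = Q * |bb (u - π)| := by field_simp
          _ ≤ 1 + Q * |bb (u - π)| := le_add_of_nonneg_left zero_le_one
    _ = π / (1 - α) * Q ^ (-α) := by
        rw [intervalIntegral.integral_const_mul, integral_rpow (.inl (by linarith)),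
          zero_rpow (by linarith), sub_zero, div_rpow hQ.le pi_nonneg, neg_add_eq_sub,
          sub_eq_add_neg 1, rpow_add pi_pos, rpow_one]
        have := (rpow_pos_of_pos pi_pos (-α)).ne'
        field_simp

lemma intervalIntegral_one_add_mul_abs_bb_rpow_le (hQ : 0 < Q) (hα : 0 ≤ α) (hα1 : α < 1)
    (t : ℝ) :
    ∫ θ in (0 : ℝ)..2 * π, (1 + Q * |bb (t - θ)|) ^ (-α) ≤ 2 * π / (1 - α) * Q ^ (-α) := by
  set g : ℝ → ℝ := fun u => (1 + Q * |bb (u - π)|) ^ (-α)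
  have g_cont : Continuous g :=
    (continuous_one_add_mul_abs_bb_rpow hQ.le α).comp (continuous_sub_right π)
  have g_even (u : ℝ) : g (-u) = g u := by
    have : |bb (-u - π)| = |bb (u - π)| := by
      calc |bb (-u - π)| = |bb (u - π + 2 * π)| := by rw [← bb_neg]; ring_nf
        _ = |bb (u - π)| := abs_bb_periodic (u - π)
    simp only [g, this]
  have fold : ∫ u in -π..0, g u = ∫ u in (0 : ℝ)..π, g u := by
    simpa only [g_even, neg_neg, neg_zero] using
      intervalIntegral.integral_comp_neg (a := -π) (b := 0) g
  calc ∫ θ in (0 : ℝ)..2 * π, (1 + Q * |bb (t - θ)|) ^ (-α)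
      = (∫ u in -π..0, g u) + ∫ u in (0 : ℝ)..π, g u := by
        rw [intervalIntegral_one_add_mul_abs_bb_rpow_eq,
          intervalIntegral.integral_add_adjacent_intervals (g_cont.intervalIntegrable _ _)
            (g_cont.intervalIntegrable _ _)]
    _ ≤ π / (1 - α) * Q ^ (-α) + π / (1 - α) * Q ^ (-α) := by
        rw [fold]
        gcongr <;> exact intervalIntegral_one_add_mul_abs_bb_sub_pi_rpow_le hQ hα hα1
    _ = 2 * π / (1 - α) * Q ^ (-α) := by ring

theorem isAngularWeight_angWeight (hQ : 0 < Q) (hα : 0 ≤ α) (hα1 : α < 1) :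
    IsAngularWeight (angWeight Q α) Q⁻¹ 2 (2 * π / (1 - α) * Q ^ (-α)).toNNReal where
  measurable := (continuous_one_add_mul_abs_bb_rpow hQ.le α).measurable.ennreal_ofReal
  lt_top _ := ENNReal.ofReal_lt_top
  even φ := by rw [angWeight, angWeight, bb_neg]
  scale_pos := inv_pos.2 hQ
  le_mul_of_abs_sub_le _ _ hxy := angWeight_le_two_mul hQ hα hα1.le hxy
  lintegral_sub_le t := by
    have cont : Continuous fun θ => (1 + Q * |bb (t - θ)|) ^ (-α) :=
      (continuous_one_add_mul_abs_bb_rpow hQ.le α).comp (continuous_sub_left t)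
    have integrable : IntegrableOn (fun θ => (1 + Q * |bb (t - θ)|) ^ (-α)) (Ico 0 (2 * π)) :=
      cont.integrableOn_Icc.mono_set Ico_subset_Icc_self
    simp only [angWeight]
    rw [← ofReal_integral_eq_lintegral_ofReal integrable (ae_of_all _ fun θ => by positivity),
      integral_Ico_eq_integral_Ioc, ← intervalIntegral.integral_of_le two_pi_pos.le]
    exact ENNReal.ofReal_le_ofReal (intervalIntegral_one_add_mul_abs_bb_rpow_le hQ hα hα1 t)

end AngularWeight

section RadialWeight

/-- The weight `(η + r)^(-α/2)` cut off to `0 < r ≤ R`. With `η = Q⁻²` it carries the dependence of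
the kernel on the output radius, with `η = 0` and `α = 1` that on the input radius. -/
def radialWeight (R η α : ℝ) : ℝ → ℝ≥0∞ :=
  (Ioc 0 R).indicator fun r => ENNReal.ofReal ((η + r) ^ (-α / 2))

variable {R η α s : ℝ}

lemma measurable_radialWeight : Measurable (radialWeight R η α) :=
  ((measurable_id.const_add η).pow_const _).ennreal_ofReal.indicator measurableSet_Ioc

lemma radialWeight_lt_top (r : ℝ) : radialWeight R η α r < ∞ := by
  by_cases hr : r ∈ Ioc 0 R <;> simp [radialWeight, hr]

lemma radialWeight_le_radialWeight_zero (hη : 0 ≤ η) (hα : 0 ≤ α) (r : ℝ) :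
    radialWeight R η α r ≤ radialWeight R 0 α r := by
  refine indicator_le_indicator' fun hr => ENNReal.ofReal_le_ofReal ?_
  rw [zero_add]
  exact rpow_le_rpow_of_nonpos hr.1 (by linarith) (by linarith)

lemma lintegral_radialWeight_rpow (hη : 0 ≤ η) (hs : 0 < s) :
    ∫⁻ r, radialWeight R η α r ^ s ∂radialMeasure =
      ∫⁻ r in Ioc 0 R, ENNReal.ofReal ((η + r) ^ (-(α * s / 2)) * r) := by
  have cutoff : (fun r => radialWeight R η α r ^ s * ENNReal.ofReal r) =
      (Ioc 0 R).indicator fun r => ENNReal.ofReal ((η + r) ^ (-(α * s / 2)) * r) := by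
    ext r
    by_cases hr : r ∈ Ioc 0 R
    · have hηr : 0 < η + r := add_pos_of_nonneg_of_pos hη hr.1
      rw [radialWeight, indicator_of_mem hr, indicator_of_mem hr,
        ENNReal.ofReal_rpow_of_pos (by positivity), ← ENNReal.ofReal_mul (by positivity),
        ← rpow_mul hηr.le]
      ring_nf
    · simp [radialWeight, hr, ENNReal.zero_rpow_of_pos hs]
  rw [lintegral_radialMeasure, cutoff, setLIntegral_indicator measurableSet_Ioc,
    inter_eq_left.2 Ioc_subset_Ioi_self]

lemma lintegral_radialWeight_zero_rpow_ne_top (hs : 0 < s) (hαs : α * s < 4) :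
    ∫⁻ r, radialWeight R 0 α r ^ s ∂radialMeasure ≠ ∞ := by
  have integrable : IntegrableOn (fun r : ℝ => r ^ (1 - α * s / 2)) (Ioc 0 R) :=
    (intervalIntegral.intervalIntegrable_rpow' (by linarith)).1
  rw [lintegral_radialWeight_rpow le_rfl hs]
  refine ne_top_of_le_ne_top integrable.lintegral_lt_top.ne
    (setLIntegral_mono' measurableSet_Ioc fun r hr => ENNReal.ofReal_le_ofReal ?_)
  rw [zero_add, ← rpow_add_one hr.1.ne', neg_add_eq_sub]

lemma lintegral_radialWeight_rpow_le (hη : 0 < η) (hs : 0 < s) (hαs : 4 < α * s) :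
    ∫⁻ r, radialWeight R η α r ^ s ∂radialMeasure ≤
      ENNReal.ofReal (η ^ (2 - α * s / 2) / (α * s / 2 - 2)) := by
  have exponent_lt : 1 - α * s / 2 < -1 := by linarith
  calc ∫⁻ r, radialWeight R η α r ^ s ∂radialMeasure
      ≤ ∫⁻ r in Ioc 0 R, ENNReal.ofReal ((r + η) ^ (1 - α * s / 2)) := by
        rw [lintegral_radialWeight_rpow hη.le hs]
        refine setLIntegral_mono' measurableSet_Ioc fun r hr => ENNReal.ofReal_le_ofReal ?_
        have hr0 : 0 < r := hr.1
        calc (η + r) ^ (-(α * s / 2)) * r ≤ (η + r) ^ (-(α * s / 2)) * (η + r) := by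
              gcongr
              exact le_add_of_nonneg_left hη.le
          _ = (r + η) ^ (1 - α * s / 2) := by
              rw [← rpow_add_one (by positivity), add_comm η r, neg_add_eq_sub]
    _ ≤ ∫⁻ r in (· + η) ⁻¹' Ioi η, ENNReal.ofReal ((r + η) ^ (1 - α * s / 2)) :=
        lintegral_mono_set fun r hr => lt_add_of_pos_left η hr.1
    _ = ∫⁻ t in Ioi η, ENNReal.ofReal (t ^ (1 - α * s / 2)) :=
        (measurePreserving_add_right volume η).setLIntegral_comp_preimage
          measurableSet_Ioi (f := fun t => ENNReal.ofReal (t ^ (1 - α * s / 2))) (by fun_prop)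
    _ = ENNReal.ofReal (∫ t in Ioi η, t ^ (1 - α * s / 2)) := by
        refine (ofReal_integral_eq_lintegral_ofReal
          (integrableOn_Ioi_rpow_of_lt exponent_lt hη) ?_).symm
        filter_upwards [ae_restrict_mem measurableSet_Ioi] with t ht
        exact rpow_nonneg (hη.trans ht).le _
    _ = ENNReal.ofReal (η ^ (2 - α * s / 2) / (α * s / 2 - 2)) := by
        rw [integral_Ioi_rpow_of_lt exponent_lt hη, neg_div, ← div_neg]
        ring_nf

end RadialWeight

section KernelBound

/-- The frequency `2^(j/2)` at which `Hker` oscillates in the angle `φ = θ₁ - θ₂`. -/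
def angScale (j : ℕ) : ℝ := 2 ^ ((j : ℝ) / 2)

lemma one_le_angScale (j : ℕ) : 1 ≤ angScale j :=
  one_le_rpow one_le_two (by positivity)

lemma angScale_sq (j : ℕ) : angScale j ^ 2 = 2 ^ (j : ℝ) := by
  rw [angScale, ← rpow_natCast, ← rpow_mul zero_le_two]
  norm_num

lemma ofReal_two_rpow (x : ℝ) : ENNReal.ofReal (2 ^ x) = 2 ^ x := by
  rw [← ENNReal.ofReal_rpow_of_pos two_pos, ENNReal.ofReal_ofNat]

lemma ofReal_angScale_rpow (j : ℕ) (x : ℝ) :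
    ENNReal.ofReal (angScale j ^ x) = 2 ^ ((j : ℝ) * x / 2) := by
  rw [angScale, ← rpow_mul zero_le_two, ofReal_two_rpow]
  ring_nf

section RealBound

variable {Q r₁ r₂ R b α : ℝ}

lemma mul_sqrt_mul_sqrt_le (hQ : 0 ≤ Q) (h₁ : 0 < r₁) (h₂ : 0 < r₂) (hR : r₁ + r₂ ≤ R) :
    Q * √r₁ * √r₂ ≤ √R * √(Q ^ 2 * (r₁ * r₂ / (r₁ + r₂))) := by
  have prod_le : r₁ * r₂ ≤ R * (r₁ * r₂ / (r₁ + r₂)) := by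
    calc r₁ * r₂ = (r₁ + r₂) * (r₁ * r₂ / (r₁ + r₂)) := by field_simp
      _ ≤ R * (r₁ * r₂ / (r₁ + r₂)) := by gcongr
  calc Q * √r₁ * √r₂ = Q * √(r₁ * r₂) := by rw [mul_assoc, sqrt_mul h₁.le]
    _ ≤ Q * √(R * (r₁ * r₂ / (r₁ + r₂))) := by gcongr
    _ = √R * √(Q ^ 2 * (r₁ * r₂ / (r₁ + r₂))) := by
        rw [sqrt_mul (by linarith), sqrt_mul (sq_nonneg Q), sqrt_sq hQ]
        ring

lemma sqrt_add_mul_one_add_mul_mul_sqrt_le (hQ : 1 ≤ Q) (h₁ : 0 < r₁) (h₂ : 0 < r₂)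
    (hR : r₁ + r₂ ≤ R) (hb : 0 ≤ b) (hb2 : b ≤ 2) :
    √((Q ^ 2)⁻¹ + r₁) * (1 + Q * b) * √r₂ ≤
      (3 * √R + R) * (1 + √(Q ^ 2 * (r₁ * r₂ / (r₁ + r₂))) * b) := by
  have hQ0 : 0 < Q := one_pos.trans_le hQ
  have hR0 : 0 < R := by linarith
  have sqrt_r₁_le : √r₁ ≤ √R := sqrt_le_sqrt (by linarith)
  have sqrt_r₂_le : √r₂ ≤ √R := sqrt_le_sqrt (by linarith)
  have sqrt_add_le : √((Q ^ 2)⁻¹ + r₁) ≤ Q⁻¹ + √r₁ := by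
    rw [sqrt_le_left (by positivity), add_sq, sq_sqrt h₁.le, inv_pow, add_le_add_iff_right]
    exact le_add_of_nonneg_right (by positivity)
  set x := √(Q ^ 2 * (r₁ * r₂ / (r₁ + r₂))) * b
  have hx : 0 ≤ x := by positivity
  calc √((Q ^ 2)⁻¹ + r₁) * (1 + Q * b) * √r₂
      ≤ (Q⁻¹ + √r₁) * (1 + Q * b) * √r₂ := by gcongr
    _ = Q⁻¹ * √r₂ + (Q⁻¹ * Q) * (b * √r₂) + √r₁ * √r₂ + Q * √r₁ * √r₂ * b := by ring
    _ ≤ 1 * √R + 1 * (2 * √R) + √R * √R + √R * √(Q ^ 2 * (r₁ * r₂ / (r₁ + r₂))) * b := by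
        gcongr ?_ * ?_ + ?_ * (?_ * ?_) + ?_ * ?_ + ?_ * b
        · exact inv_le_one_of_one_le₀ hQ
        · exact (inv_mul_cancel₀ hQ0.ne').le
        · exact mul_sqrt_mul_sqrt_le hQ0.le h₁ h₂ hR
    _ = 3 * √R + R + √R * x := by rw [mul_self_sqrt hR0.le, mul_assoc]; ring
    _ ≤ (3 * √R + R) * (1 + x) := by nlinarith [mul_nonneg (sqrt_nonneg R) hx, mul_nonneg hR0.le hx]

lemma rpow_le_one_add (hb : 0 ≤ b) (hα : 0 ≤ α) (hα1 : α ≤ 1) : b ^ α ≤ 1 + b := by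
  calc b ^ α ≤ (1 + b) ^ α := by gcongr; linarith
    _ ≤ (1 + b) ^ (1 : ℝ) := by gcongr; linarith
    _ = 1 + b := rpow_one _

-- Interpolates, with exponent `α`, between the trivial bound and the full decay in `Q |b|`.
lemma one_div_one_add_sqrt_mul_le (hQ : 1 ≤ Q) (h₁ : 0 < r₁) (h₂ : 0 < r₂) (hR : r₁ + r₂ ≤ R)
    (hb : 0 ≤ b) (hb2 : b ≤ 2) (hα : 0 ≤ α) (hα1 : α ≤ 1) :
    1 / (1 + √(Q ^ 2 * (r₁ * r₂ / (r₁ + r₂))) * b) ≤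
      (4 * √R + R) *
        (((Q ^ 2)⁻¹ + r₁) ^ (-α / 2) * r₂ ^ (-(1 : ℝ) / 2) * (1 + Q * b) ^ (-α)) := by
  have : 0 < Q := one_pos.trans_le hQ
  set S := √((Q ^ 2)⁻¹ + r₁)
  set x := √(Q ^ 2 * (r₁ * r₂ / (r₁ + r₂))) * b
  have hx : 0 ≤ x := by positivity
  have hS : 0 < S := sqrt_pos.2 (by positivity)
  have weight_eq : ((Q ^ 2)⁻¹ + r₁) ^ (-α / 2) * r₂ ^ (-(1 : ℝ) / 2) * (1 + Q * b) ^ (-α) =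
      ((S * (1 + Q * b)) ^ α * √r₂)⁻¹ := by
    rw [neg_div, neg_div, rpow_neg (by positivity), rpow_neg h₂.le, rpow_neg (by positivity),
      ← sqrt_eq_rpow, rpow_div_two_eq_sqrt α (by positivity), mul_rpow hS.le (by positivity)]
    ring
  have : 0 < √r₂ := sqrt_pos.2 h₂
  rw [weight_eq, ← div_eq_mul_inv, div_le_div_iff₀ (by positivity) (by positivity), one_mul]
  calc (S * (1 + Q * b)) ^ α * √r₂ ≤ (1 + S * (1 + Q * b)) * √r₂ := by
        gcongr
        exact rpow_le_one_add (by positivity) hα hα1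
    _ = √r₂ + S * (1 + Q * b) * √r₂ := by ring
    _ ≤ √R * (1 + x) + (3 * √R + R) * (1 + x) := by
        gcongr ?_ + ?_
        · calc √r₂ ≤ √R := sqrt_le_sqrt (by linarith)
            _ ≤ √R * (1 + x) := le_mul_of_one_le_right (sqrt_nonneg R) (by linarith)
        · exact sqrt_add_mul_one_add_mul_mul_sqrt_le hQ h₁ h₂ hR hb hb2
    _ = (4 * √R + R) * (1 + x) := by ring

end RealBound

variable {δ : ℝ} {a : ℝ → ℂ} {β χ : ℝ → ℝ} {c R : ℝ}

lemma Hker_eq (δ : ℝ) (a : ℝ → ℂ) (β : ℝ → ℝ) (j : ℕ) (r₁ r₂ φ : ℝ) :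
    Hker δ a β j r₁ r₂ φ =
      ((2 ^ (-(j : ℝ) * (3 / 2 + δ)) : ℝ) : ℂ) * (β (r₁ + r₂) : ℂ) *
        ((((r₁ + r₂) ^ (-(3 / 2 + δ)) : ℝ) : ℂ) * a (2 ^ (j : ℝ) * (r₁ + r₂)) *
          ∫ s in Ioi (0 : ℝ),
            Complex.exp (Complex.I * ((2 ^ (j : ℝ) * (r₁ * r₂ / (r₁ + r₂)) * s ^ 2 : ℝ) : ℂ)) *
              ((sin (φ + π) / (s ^ 2 / 2 + 2 * sin ((φ + π) / 2) ^ 2) : ℝ) : ℂ)) := by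
  rw [Hker, ← integral_const_mul (_ * a _)]
  simp only [psi3m]
  congr! 3
  ring

lemma norm_Hker_le {Ma Mβ : ℝ} (ha : ∀ r > 0, ‖a r‖ ≤ Ma) (hβ : ∀ r, |β r| ≤ Mβ) (j : ℕ)
    {r₁ r₂ : ℝ} (h₁ : 0 < r₁) (h₂ : 0 < r₂) (φ : ℝ) :
    ‖Hker δ a β j r₁ r₂ φ‖ ≤ Mβ * Ma * (r₁ + r₂) ^ (-(3 / 2 + δ)) * 8 *
      2 ^ (-(j : ℝ) * (3 / 2 + δ)) *
        (1 / (1 + √(angScale j ^ 2 * (r₁ * r₂ / (r₁ + r₂))) * |bb φ|)) := by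
  have symbol_le : ‖a (2 ^ (j : ℝ) * (r₁ + r₂))‖ ≤ Ma := ha _ (by positivity)
  have osc_le := norm_integral_Ioi_cexp_mul_sin_div_le
    (l := 2 ^ (j : ℝ) * (r₁ * r₂ / (r₁ + r₂))) (by positivity) φ
  have hMa : 0 ≤ Ma := (norm_nonneg _).trans symbol_le
  have hMβ : 0 ≤ Mβ := (abs_nonneg _).trans (hβ 0)
  rw [Hker_eq, angScale_sq]
  simp only [norm_mul, Complex.norm_real, norm_eq_abs (β _)]
  rw [Real.norm_of_nonneg (by positivity), Real.norm_of_nonneg (by positivity)]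
  calc _ ≤ 2 ^ (-(j : ℝ) * (3 / 2 + δ)) * Mβ * ((r₁ + r₂) ^ (-(3 / 2 + δ)) * Ma *
        (8 / (1 + √(2 ^ (j : ℝ) * (r₁ * r₂ / (r₁ + r₂))) * |bb φ|))) := by
        gcongr
        exact hβ _
    _ = _ := by ring

lemma exists_norm_chi_mul_Hker_le (δ : ℝ) (ha : ∃ M, ∀ r > 0, ‖a r‖ ≤ M) (hc : 0 < c)
    (hβ : ∃ M, ∀ r, |β r| ≤ M) (hχ : ∃ M, ∀ x, |χ x| ≤ M) :
    ∃ B : ℝ, 0 ≤ B ∧ ∀ j : ℕ, ∀ r₁ > 0, ∀ r₂ > 0, r₁ + r₂ ∈ Icc c R → ∀ φ,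
      ‖(χ (bb φ) : ℂ) * Hker δ a β j r₁ r₂ φ‖ ≤ B * 2 ^ (-(j : ℝ) * (3 / 2 + δ)) *
        (1 / (1 + √(angScale j ^ 2 * (r₁ * r₂ / (r₁ + r₂))) * |bb φ|)) := by
  obtain ⟨Ma, hMa⟩ := ha
  obtain ⟨Mβ, hMβ⟩ := hβ
  obtain ⟨Mχ, hMχ⟩ := hχ
  have rpow_cont : ContinuousOn (fun r : ℝ => r ^ (-(3 / 2 + δ))) (Icc c R) :=
    continuousOn_id.rpow_const fun r hr => .inl (hc.trans_le hr.1).ne'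
  obtain ⟨Mr, hMr⟩ := isCompact_Icc.exists_bound_of_continuousOn rpow_cont
  have hMa0 : 0 ≤ Ma := (norm_nonneg _).trans (hMa 1 one_pos)
  have hMβ0 : 0 ≤ Mβ := (abs_nonneg _).trans (hMβ 0)
  have hMχ0 : 0 ≤ Mχ := (abs_nonneg _).trans (hMχ 0)
  refine ⟨Mχ * (Mβ * Ma * |Mr| * 8), by positivity, fun j r₁ h₁ r₂ h₂ hr φ => ?_⟩
  have rpow_le : (r₁ + r₂) ^ (-(3 / 2 + δ)) ≤ |Mr| :=
    (le_abs_self _).trans ((hMr _ hr).trans (le_abs_self _))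
  rw [norm_mul, Complex.norm_real]
  calc ‖χ (bb φ)‖ * ‖Hker δ a β j r₁ r₂ φ‖
      ≤ Mχ * (Mβ * Ma * |Mr| * 8 * 2 ^ (-(j : ℝ) * (3 / 2 + δ)) *
          (1 / (1 + √(angScale j ^ 2 * (r₁ * r₂ / (r₁ + r₂))) * |bb φ|))) := by
        gcongr
        · exact hMχ _
        · refine (norm_Hker_le hMa hMβ j h₁ h₂ φ).trans ?_
          gcongr
    _ = _ := by ring

theorem exists_enorm_chi_mul_Hker_le (δ : ℝ) (ha : ∃ M, ∀ r > 0, ‖a r‖ ≤ M) (hc : 0 < c)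
    (hβ : ∃ M, ∀ r, |β r| ≤ M) (hβs : Function.support β ⊆ Icc c R)
    (hχ : ∃ M, ∀ x, |χ x| ≤ M) {α : ℝ} (hα : 0 ≤ α) (hα1 : α ≤ 1) :
    ∃ B : ℝ≥0, ∀ j : ℕ, ∀ r₁ > 0, ∀ r₂ > 0, ∀ φ,
      ‖(χ (bb φ) : ℂ) * Hker δ a β j r₁ r₂ φ‖ₑ ≤
        B * 2 ^ (-(j : ℝ) * (3 / 2 + δ)) * radialWeight R (angScale j ^ 2)⁻¹ α r₁ *
          radialWeight R 0 1 r₂ * angWeight (angScale j) α φ := by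
  obtain ⟨B, hB, norm_le⟩ := exists_norm_chi_mul_Hker_le (R := R) δ ha hc hβ hχ
  refine ⟨(B * (4 * √R + |R|)).toNNReal, fun j r₁ h₁ r₂ h₂ φ => ?_⟩
  by_cases hr : r₁ + r₂ ∈ Icc c R
  · have hR : 0 < R := by linarith [hr.2]
    have hQ := one_le_angScale j
    have mem₁ : r₁ ∈ Ioc 0 R := ⟨h₁, by linarith [hr.2]⟩
    have mem₂ : r₂ ∈ Ioc 0 R := ⟨h₂, by linarith [hr.2]⟩
    rw [radialWeight, radialWeight, indicator_of_mem mem₁, indicator_of_mem mem₂, angWeight,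
      ← ENNReal.ofReal, ← ofReal_two_rpow, ← ENNReal.ofReal_mul (by positivity),
      ← ENNReal.ofReal_mul (by positivity), ← ENNReal.ofReal_mul (by positivity),
      ← ENNReal.ofReal_mul (by positivity), ← ofReal_norm, zero_add, abs_of_pos hR]
    refine ENNReal.ofReal_le_ofReal ((norm_le j r₁ h₁ r₂ h₂ hr φ).trans ?_)
    have weight_le := one_div_one_add_sqrt_mul_le hQ h₁ h₂ hr.2 (abs_nonneg _)
      (abs_bb_le_two φ) hα hα1
    refine (mul_le_mul_of_nonneg_left weight_le (by positivity)).trans_eq ?_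
    ring
  · have β_zero : β (r₁ + r₂) = 0 := Function.notMem_support.1 fun h => hr (hβs h)
    simp [Hker, β_zero]

end KernelBound

section OperatorBound

variable {δ : ℝ} {a : ℝ → ℂ} {β χ : ℝ → ℝ} {c R p α γ : ℝ}

theorem exists_polarLp_TH_le (δ : ℝ) (ha : ∃ M, ∀ r > 0, ‖a r‖ ≤ M) (hc : 0 < c)
    (hβ : ∃ M, ∀ r, |β r| ≤ M) (hβs : Function.support β ⊆ Icc c R)
    (hχ : ∃ M, ∀ x, |χ x| ≤ M) (hp : 4 / 3 < p) (hα : 0 ≤ α) (hα1 : α < 1) :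
    ∃ D : ℝ≥0, ∀ (j : ℕ) (f : ℝ → ℝ → ℂ),
      polarLp p (TH δ a β χ j f) ≤ D * 2 ^ (-(j : ℝ) * (3 / 2 + δ)) *
        (ENNReal.ofReal (angScale j ^ (-α)) *
          (∫⁻ r, radialWeight R (angScale j ^ 2)⁻¹ α r ^ p ∂radialMeasure) ^ (1 / p)) *
        polarLp p f := by
  obtain ⟨B, enorm_le⟩ := exists_enorm_chi_mul_Hker_le δ ha hc hβ hβs hχ hα hα1.le
  have hpq : p.HolderConjugate p.conjExponent := .conjExponent (by linarith)
  have conj_lt : 1 * p.conjExponent < 4 := by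
    rw [one_mul, Real.conjExponent, div_lt_iff₀ (by linarith)]
    linarith
  have hV := lintegral_radialWeight_zero_rpow_ne_top (R := R) hpq.symm.pos conj_lt
  set V := ∫⁻ r, radialWeight R 0 1 r ^ p.conjExponent ∂radialMeasure
  have : 0 < 1 - α := sub_pos.2 hα1
  refine ⟨2 ^ (4 / p) * (V ^ (1 / p.conjExponent)).toNNReal * (2 * π / (1 - α)).toNNReal * B,
    fun j f => ?_⟩
  have hQ : 0 < angScale j := one_pos.trans_le (one_le_angScale j)
  set κ : ℝ≥0∞ := B * 2 ^ (-(j : ℝ) * (3 / 2 + δ))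
  have hκ : κ ≠ ∞ := by finiteness
  have polar_le := polarLp_polarOp_le hpq (enorm_le j) (measurable_radialWeight.const_mul κ)
    (fun r => ENNReal.mul_lt_top hκ.lt_top (radialWeight_lt_top r)) measurable_radialWeight
    radialWeight_lt_top hV (isAngularWeight_angWeight hQ hα hα1) f
  refine polar_le.trans_eq ?_
  rw [rpow_lintegral_const_mul_rpow hpq.pos hκ, Real.toNNReal_mul (by positivity)]
  push_cast
  rw [ENNReal.coe_toNNReal (ENNReal.rpow_ne_top_of_nonneg (by simp [hpq.symm.nonneg]) hV),
    ENNReal.coe_rpow_of_nonneg _ (by positivity)]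
  simp only [κ, ENNReal.ofReal, ENNReal.coe_ofNat]
  ring

lemma exists_lintegral_radialWeight_rpow_le (R : ℝ) (hp : 0 < p) (hα : 0 ≤ α) (hαp : α * p < 4) :
    ∃ C : ℝ≥0, ∀ j : ℕ,
      (∫⁻ r, radialWeight R (angScale j ^ 2)⁻¹ α r ^ p ∂radialMeasure) ^ (1 / p) ≤ C := by
  refine ⟨((∫⁻ r, radialWeight R 0 α r ^ p ∂radialMeasure) ^ (1 / p)).toNNReal, fun j => ?_⟩
  rw [ENNReal.coe_toNNReal (ENNReal.rpow_ne_top_of_nonneg (by positivity)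
    (lintegral_radialWeight_zero_rpow_ne_top hp hαp))]
  gcongr
  exact radialWeight_le_radialWeight_zero (by positivity) hα _

lemma exists_angScale_rpow_mul_le (R : ℝ) (hp : 0 < p) (hαp : 4 < α * p) :
    ∃ C : ℝ≥0, ∀ j : ℕ, ENNReal.ofReal (angScale j ^ (-α)) *
      (∫⁻ r, radialWeight R (angScale j ^ 2)⁻¹ α r ^ p ∂radialMeasure) ^ (1 / p) ≤
        C * 2 ^ (-(j : ℝ) * (2 / p)) := by
  have gap : 0 < α * p / 2 - 2 := by linarith
  refine ⟨((α * p / 2 - 2)⁻¹ ^ (1 / p)).toNNReal, fun j => ?_⟩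
  have hQ : 0 < angScale j := one_pos.trans_le (one_le_angScale j)
  have scale_eq : ((angScale j ^ 2)⁻¹) ^ (2 - α * p / 2) = angScale j ^ (α * p - 4) := by
    rw [← rpow_natCast, ← rpow_neg hQ.le, ← rpow_mul hQ.le]
    congr 1
    push_cast
    ring
  calc ENNReal.ofReal (angScale j ^ (-α)) *
        (∫⁻ r, radialWeight R (angScale j ^ 2)⁻¹ α r ^ p ∂radialMeasure) ^ (1 / p)
      ≤ ENNReal.ofReal (angScale j ^ (-α)) * ENNReal.ofReal
          (((angScale j ^ 2)⁻¹) ^ (2 - α * p / 2) / (α * p / 2 - 2)) ^ (1 / p) := by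
        gcongr
        exact lintegral_radialWeight_rpow_le (by positivity) hp hαp
    _ = ENNReal.ofReal ((α * p / 2 - 2)⁻¹ ^ (1 / p) * angScale j ^ (-(4 / p))) := by
        have exponent_eq : -(4 / p) = -α + (α * p - 4) * (1 / p) := by field_simp; ring
        rw [scale_eq, ENNReal.ofReal_rpow_of_pos (by positivity),
          ← ENNReal.ofReal_mul (by positivity), div_rpow (by positivity) gap.le, ← rpow_mul hQ.le,
          inv_rpow gap.le, exponent_eq, rpow_add hQ]
        ring_nf
    _ = ENNReal.ofReal ((α * p / 2 - 2)⁻¹ ^ (1 / p)) * 2 ^ (-(j : ℝ) * (2 / p)) := by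
        rw [ENNReal.ofReal_mul (by positivity), ofReal_angScale_rpow]
        ring_nf

-- `α = 4 / p` is critical for the radial integral: below it the integral stays bounded, above it
-- the radial factor loses `Q^(α - 4/p)`, which leaves `Q^(-4/p) = 2^(-2j/p)` of the angular gain.
lemma exists_angular_exponent (R : ℝ) (hp : 0 < p) (hγ : γ < 1 / 2) (hγp : γ ≤ 2 / p) :
    ∃ α ∈ Ico (0 : ℝ) 1, ∃ C : ℝ≥0, ∀ j : ℕ, ENNReal.ofReal (angScale j ^ (-α)) *
      (∫⁻ r, radialWeight R (angScale j ^ 2)⁻¹ α r ^ p ∂radialMeasure) ^ (1 / p) ≤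
        C * 2 ^ (-(j : ℝ) * γ) := by
  rcases hγp.lt_or_eq with hlt | rfl
  · have hγp' : γ * p < 2 := (lt_div_iff₀ hp).1 hlt
    have subcritical : max (2 * γ) 0 * p < 4 := by
      rw [max_mul_of_nonneg _ _ hp.le]
      exact max_lt (by linarith) (by linarith)
    obtain ⟨C, hC⟩ := exists_lintegral_radialWeight_rpow_le R hp (le_max_right _ 0) subcritical
    refine ⟨max (2 * γ) 0, ⟨le_max_right _ _, max_lt (by linarith) one_pos⟩, C, fun j => ?_⟩
    have angular_le : ENNReal.ofReal (angScale j ^ (-max (2 * γ) 0)) ≤ 2 ^ (-(j : ℝ) * γ) := by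
      calc ENNReal.ofReal (angScale j ^ (-max (2 * γ) 0))
          ≤ ENNReal.ofReal (angScale j ^ (-(2 * γ))) := by
            gcongr
            exacts [one_le_angScale j, le_max_left _ _]
        _ = 2 ^ (-(j : ℝ) * γ) := by rw [ofReal_angScale_rpow]; ring_nf
    rw [mul_comm (C : ℝ≥0∞)]
    exact mul_le_mul' angular_le (hC j)
  · obtain ⟨α, hα, hα1⟩ := exists_between (show 4 / p < 1 by linear_combination 2 * hγ)
    obtain ⟨C, hC⟩ := exists_angScale_rpow_mul_le R hp ((div_lt_iff₀ hp).1 hα)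
    exact ⟨α, ⟨(div_pos four_pos hp).le.trans hα.le, hα1⟩, C, hC⟩

end OperatorBound

theorem stmt13_general (δ : ℝ) {a : ℝ → ℂ} {β χ : ℝ → ℝ} (ha : ∃ M, ∀ r > 0, ‖a r‖ ≤ M)
    {c R : ℝ} (hc : 0 < c) (hβ : ∃ M, ∀ r, |β r| ≤ M) (hβs : Function.support β ⊆ Icc c R)
    (hχ : ∃ M, ∀ x, |χ x| ≤ M) {p γ : ℝ} (hp : 4 / 3 < p) (hγ : γ < 1 / 2) (hγp : γ ≤ 2 / p) :
    ∃ C : ℝ≥0, ∀ (j : ℕ) (f : ℝ → ℝ → ℂ),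
      polarLp p (TH δ a β χ j f) ≤
        C * 2 ^ (-(j : ℝ) * (3 / 2 + δ)) * 2 ^ (-(j : ℝ) * γ) * polarLp p f := by
  obtain ⟨α, ⟨hα, hα1⟩, C, radial_le⟩ := exists_angular_exponent R (by linarith) hγ hγp
  obtain ⟨D, polarLp_le⟩ := exists_polarLp_TH_le δ ha hc hβ hβs hχ hp hα hα1
  refine ⟨D * C, fun j f => (polarLp_le j f).trans ?_⟩
  calc _ ≤ D * 2 ^ (-(j : ℝ) * (3 / 2 + δ)) * (C * 2 ^ (-(j : ℝ) * γ)) * polarLp p f := by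
        gcongr ?_ * polarLp p f
        exact mul_le_mul_right (radial_le j) _
    _ = _ := by push_cast; ring

theorem stmt13 (δ : ℝ) (hδ : 0 ≤ δ) (a : ℝ → ℂ) (ha : IsSymbol0 a)
    (β : ℝ → ℝ) (hβ : ContDiff ℝ (⊤ : ℕ∞) β)
    (hβs : Function.support β ⊆ Set.Icc (3 / 8) (4 / 3)) :
    ∃ ε₀ : ℝ, 0 < ε₀ ∧ ∀ ε : ℝ, 0 < ε → ε ≤ ε₀ →
      ∀ χ : ℝ → ℝ, ContDiff ℝ (⊤ : ℕ∞) χ → (∀ x, χ (-x) = χ x) →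
        Function.support χ ⊆ Set.Icc (-ε) ε →
        (∀ x ∈ Set.Icc (-(ε / 2)) (ε / 2), χ x = 1) →
        (∀ p : ℝ, 6 ≤ p → ∃ C : ℝ≥0, ∀ (j : ℕ), 1 ≤ j → ∀ f : ℝ → ℝ → ℂ,
            polarLp p (TH δ a β χ j f) ≤
              (C : ℝ≥0∞) * (2 : ℝ≥0∞) ^ (-(j : ℝ) * (3 / 2 + δ)) *
                (2 : ℝ≥0∞) ^ (-2 * (j : ℝ) / p) * polarLp p f) ∧
        (∀ p : ℝ, 4 ≤ p → p < 6 → ∀ ε' : ℝ, 0 < ε' → ε' < 1 →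
            ∃ C : ℝ≥0, ∀ (j : ℕ), 1 ≤ j → ∀ f : ℝ → ℝ → ℂ,
              polarLp p (TH δ a β χ j f) ≤
                (C : ℝ≥0∞) * (2 : ℝ≥0∞) ^ (-(j : ℝ) * (3 / 2 + δ)) *
                  (2 : ℝ≥0∞) ^ (-(j : ℝ) * (2 / p - ε')) * polarLp p f) := by
  refine ⟨1, one_pos, fun ε _ _ χ hχ _ hχs _ => ?_⟩
  have general {p γ : ℝ} (hp : 4 ≤ p) (hγ : γ < 1 / 2) (hγp : γ ≤ 2 / p) :=
    stmt13_general δ ha.2.1 (by norm_num : (0 : ℝ) < 3 / 8)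
      ((HasCompactSupport.of_support_subset_isCompact isCompact_Icc
        hβs).exists_bound_of_continuous hβ.continuous) hβs
      ((HasCompactSupport.of_support_subset_isCompact isCompact_Icc
        hχs).exists_bound_of_continuous hχ.continuous) (by linarith : 4 / 3 < p) hγ hγp
  refine ⟨fun p hp => ?_, fun p hp _ ε' hε' _ => ?_⟩
  · obtain ⟨C, hC⟩ := general (by linarith) (by rw [div_lt_iff₀] <;> linarith) le_rfl
    exact ⟨C, fun j _ f => (show -2 * (j : ℝ) / p = -j * (2 / p) by ring) ▸ hC j f⟩
  · have two_div_le : 2 / p ≤ 1 / 2 := by rw [div_le_iff₀] <;> linarith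
    obtain ⟨C, hC⟩ := general (γ := 2 / p - ε') hp (by linarith) (by linarith)
    exact ⟨C, fun j _ f => hC j f⟩

end
end

section
/- Fix δ ≥ 0, a symbol a of order 0, the bump β, and an even bump function χ ∈ C_c^∞(ℝ) supported in [−ε, ε] with 0 < ε ≪ 1. For j ≥ 1, r₁, r₂ > 0 define H̃(r₁,r₂;θ) = 2^{−j(3/2+δ)} χ(θ) (r₁+r₂)^{−3/2−δ} β(r₁+r₂) a(2^j(r₁+r₂)) ∫₀^∞ e^{i 2^{j+1} (r₁ r₂/(r₁+r₂)) s²} · (√2 θ)/(s² + 2θ²) ds for θ ∈ ℝ, and let Ĥ̃(r₁,r₂;ζ) = ∫_ℝ e^{−iζθ} H̃(r₁,r₂;θ) dθ be its Fourier transform in θ. Then there exist constants C, c₀, C₀ > 0, independent of j, r₁, r₂, ζ, such that for all j ≥ 1 and all r₁, r₂ > 0: if |ζ| ≤ c₀ (2^j r₁ r₂)^{1/2} then |Ĥ̃(r₁,r₂;ζ)| ≤ C 2^{−j(3/2+δ)} (2^j r₁ r₂)^{−1/2}, and if |ζ| ≥ C₀ (2^j r₁ r₂)^{1/2} then |Ĥ̃(r₁,r₂;ζ)|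 ≤ C 2^{−j(3/2+δ)} |ζ|^{−1}. -/
open MeasureTheory Real Set

noncomputable section

/-- The kernel `H̃(r₁, r₂; θ)`. -/
def Htil (δ : ℝ) (a : ℝ → ℂ) (β χ : ℝ → ℝ) (j : ℕ) (r₁ r₂ θ : ℝ) : ℂ :=
  (((2 : ℝ) ^ (-(j : ℝ) * (3 / 2 + δ)) : ℝ) : ℂ) * ((χ θ : ℝ) : ℂ) *
    (((r₁ + r₂) ^ (-(3 / 2 + δ)) : ℝ) : ℂ) * ((β (r₁ + r₂) : ℝ) : ℂ) *
    a ((2 : ℝ) ^ (j : ℝ) * (r₁ + r₂)) *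
    ∫ s in Set.Ioi (0 : ℝ),
      Complex.exp (Complex.I *
        (((2 : ℝ) ^ ((j : ℝ) + 1) * (r₁ * r₂ / (r₁ + r₂)) * s ^ 2 : ℝ) : ℂ)) *
        ((Real.sqrt 2 * θ / (s ^ 2 + 2 * θ ^ 2) : ℝ) : ℂ)

/-- The Fourier transform of `H̃` in the angular variable. -/
def HtilFT (δ : ℝ) (a : ℝ → ℂ) (β χ : ℝ → ℝ) (j : ℕ) (r₁ r₂ ζ : ℝ) : ℂ :=
  ∫ θ : ℝ, Complex.exp (-Complex.I * ((ζ * θ : ℝ) : ℂ)) * Htil δ a β χ j r₁ r₂ θ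

/-!
The `θ`-dependent part of the kernel is `χ(θ)` times the oscillatory integral `I(θ)`, which is odd,
so its Fourier transform is `-2i ∫₀^∞ sin(ζθ) χ(θ) I(θ) dθ`. Rescaling `s`, writing
`(1 + u²)⁻¹ = ∫₀^∞ e^{-(1 + u²)τ} dτ` and evaluating the Gaussian integral in `u` gives, for `θ > 0`
and `B = 2A` with `A = 2^{j+1} r₁r₂/(r₁+r₂)`,

  `I(θ) = (√π / 2) ∫₀^∞ e^{-τ} G(θ) dτ`,  `G(θ) = (τ - iBθ²)^{-1/2}`.

For fixed `τ` both `G` and `θ ↦ θ G(θ)` have supremum and total variation under control, by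
`O(τ^{-1/2})` and `O(B^{-1/2})` respectively. Integrating `sin(ζθ)` by parts against the first
bounds the slice by `O(|ζ|⁻¹ τ^{-1/2})`. Integrating `sin(ζθ)/θ`, whose primitive `Si(ζθ)` is
bounded uniformly in `ζ`, by parts against the second bounds it by `O(B^{-1/2})`. Both bounds are
integrable against `e^{-τ}`, and `A` is comparable to `2^j r₁r₂` where `β(r₁ + r₂) ≠ 0`.
-/

section OscillatoryIntegral

lemma integral_norm_le_sub_of_hasDerivAt {E : Type*} [NormedAddCommGroup E] {a b : ℝ}
    {V v : ℝ → ℝ} {f : ℝ → E} (hab : a ≤ b) (hf : IntervalIntegrable f volume a b)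
    (hV : ∀ x ∈ Icc a b, HasDerivAt V (v x) x) (hv : IntervalIntegrable v volume a b)
    (h : ∀ x ∈ Icc a b, ‖f x‖ ≤ v x) :
    ∫ x in a..b, ‖f x‖ ≤ V b - V a := by
  rw [← intervalIntegral.integral_eq_sub_of_hasDerivAt (by rwa [uIcc_of_le hab]) hv]
  exact intervalIntegral.integral_mono_on hab hf.norm hv h

variable {E : Type*} [NormedAddCommGroup E] [NormedSpace ℝ E] [CompleteSpace E]

lemma norm_integral_deriv_smul_le {a b M : ℝ} {W w : ℝ → ℝ} {g g' : ℝ → E}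
    (hab : a ≤ b) (hW : ∀ x ∈ Icc a b, HasDerivAt W (w x) x)
    (hw : IntervalIntegrable w volume a b) (hM : ∀ x ∈ Icc a b, |W x| ≤ M)
    (hg : ∀ x ∈ Icc a b, HasDerivAt g (g' x) x) (hg' : IntervalIntegrable g' volume a b) :
    ‖∫ x in a..b, w x • g x‖ ≤ M * (‖g a‖ + ‖g b‖ + ∫ x in a..b, ‖g' x‖) := by
  have by_parts : ∫ x in a..b, w x • g x = W b • g b - W a • g a - ∫ x in a..b, W x • g' x := by
    rw [intervalIntegral.integral_smul_deriv_eq_deriv_smul (u := W) (v := g) (u' := w) (v' := g')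
      (by rwa [uIcc_of_le hab]) (by rwa [uIcc_of_le hab]) hw hg', sub_sub_cancel]
  have interior : ‖∫ x in a..b, W x • g' x‖ ≤ M * ∫ x in a..b, ‖g' x‖ := by
    rw [← intervalIntegral.integral_const_mul]
    refine intervalIntegral.norm_integral_le_of_norm_le hab (.of_forall fun x hx => ?_)
      (hg'.norm.const_mul M)
    rw [norm_smul]
    exact mul_le_mul_of_nonneg_right (hM x (Ioc_subset_Icc_self hx)) (norm_nonneg _)
  have endpoint : ∀ x ∈ Icc a b, ‖W x • g x‖ ≤ M * ‖g x‖ := fun x hx => by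
    rw [norm_smul]
    exact mul_le_mul_of_nonneg_right (hM x hx) (norm_nonneg _)
  rw [by_parts]
  linarith [norm_sub_le (W b • g b - W a • g a) (∫ x in a..b, W x • g' x),
    norm_sub_le (W b • g b) (W a • g a), endpoint a (left_mem_Icc.2 hab),
    endpoint b (right_mem_Icc.2 hab)]

lemma norm_integral_deriv_smul_cutoff_smul_le {a b M K X₀ X₁ : ℝ}
    {W w χ : ℝ → ℝ} {g g' : ℝ → E} (hab : a ≤ b) (hW : ∀ x ∈ Icc a b, HasDerivAt W (w x) x)
    (hw : IntervalIntegrable w volume a b) (hM : ∀ x ∈ Icc a b, |W x| ≤ M)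
    (hχ : ContDiff ℝ 1 χ) (hχ₀ : ∀ x, |χ x| ≤ X₀) (hχ₁ : ∀ x, |deriv χ x| ≤ X₁)
    (hg : ∀ x ∈ Icc a b, HasDerivAt g (g' x) x) (hg' : IntervalIntegrable g' volume a b)
    (hK : ∀ x ∈ Icc a b, ‖g x‖ ≤ K) (hvar : ∫ x in a..b, ‖g' x‖ ≤ K) :
    ‖∫ x in a..b, w x • χ x • g x‖ ≤ M * ((3 * X₀ + X₁ * (b - a)) * K) := by
  have hM0 : 0 ≤ M := (abs_nonneg _).trans (hM a (left_mem_Icc.2 hab))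
  have hX₀ : 0 ≤ X₀ := (abs_nonneg _).trans (hχ₀ a)
  have hX₁ : 0 ≤ X₁ := (abs_nonneg _).trans (hχ₁ a)
  have hgc : ContinuousOn g (uIcc a b) := fun x hx =>
    (hg x (uIcc_of_le hab ▸ hx)).continuousAt.continuousWithinAt
  have hder : ∀ x ∈ Icc a b,
      HasDerivAt (fun x => χ x • g x) (χ x • g' x + deriv χ x • g x) x := fun x hx =>
    ((hχ.differentiable one_ne_zero x).hasDerivAt).smul (hg x hx)
  have hint₀ : IntervalIntegrable (fun x => χ x • g' x) volume a b :=
    hg'.continuousOn_smul hχ.continuous.continuousOn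
  have hint₁ : IntervalIntegrable (fun x => deriv χ x • g x) volume a b :=
    ((hχ.continuous_deriv le_rfl).continuousOn.smul hgc).intervalIntegrable
  have value : ∀ x ∈ Icc a b, ‖χ x • g x‖ ≤ X₀ * K := fun x hx => by
    rw [norm_smul]
    exact mul_le_mul (hχ₀ x) (hK x hx) (norm_nonneg _) hX₀
  have variation : ∫ x in a..b, ‖χ x • g' x + deriv χ x • g x‖ ≤ (X₀ + X₁ * (b - a)) * K :=
    calc ∫ x in a..b, ‖χ x • g' x + deriv χ x • g x‖
        ≤ ∫ x in a..b, (X₀ * ‖g' x‖ + X₁ * K) := by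
          refine intervalIntegral.integral_mono_on hab (hint₀.add hint₁).norm
            ((hg'.norm.const_mul X₀).add intervalIntegrable_const) fun x hx => ?_
          refine (norm_add_le _ _).trans (add_le_add ?_ ?_) <;> rw [norm_smul]
          · exact mul_le_mul_of_nonneg_right (hχ₀ x) (norm_nonneg _)
          · exact mul_le_mul (hχ₁ x) (hK x hx) (norm_nonneg _) hX₁
      _ = X₀ * (∫ x in a..b, ‖g' x‖) + X₁ * (b - a) * K := by
          rw [intervalIntegral.integral_add (hg'.norm.const_mul X₀) intervalIntegrable_const,
            intervalIntegral.integral_const_mul, intervalIntegral.integral_const, smul_eq_mul]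
          ring
      _ ≤ (X₀ + X₁ * (b - a)) * K := by
          rw [add_mul]
          gcongr
  refine (norm_integral_deriv_smul_le hab hW hw hM hder (hint₀.add hint₁)).trans ?_
  gcongr
  linarith [value a (left_mem_Icc.2 hab), value b (right_mem_Icc.2 hab)]

end OscillatoryIntegral

section SineIntegral

/-- The sine integral `Si`, the primitive of `sinc` vanishing at `0`. It is the bounded factor in
the integration by parts that is uniform in the frequency. -/
def sineIntegral (x : ℝ) : ℝ := ∫ t in (0 : ℝ)..x, sinc t

lemma hasDerivAt_sineIntegral (x : ℝ) : HasDerivAt sineIntegral (sinc x) x :=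
  intervalIntegral.integral_hasDerivAt_right (continuous_sinc.intervalIntegrable _ _)
    (continuous_sinc.stronglyMeasurableAtFilter _ _) continuous_sinc.continuousAt

lemma sineIntegral_neg (x : ℝ) : sineIntegral (-x) = -sineIntegral x := by
  have h := intervalIntegral.integral_comp_neg (a := 0) (b := x) sinc
  simp only [sinc_neg, neg_zero] at h
  rw [sineIntegral, sineIntegral, h, intervalIntegral.integral_symm]

lemma abs_sineIntegral_le_abs (x : ℝ) : |sineIntegral x| ≤ |x| := by
  simpa [sineIntegral] using intervalIntegral.norm_integral_le_of_norm_le_const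
    (a := 0) (b := x) (f := sinc) fun t _ => abs_sinc_le_one t

lemma abs_integral_one_sinc_le {x : ℝ} (hx : 1 ≤ x) : |∫ t in (1 : ℝ)..x, sinc t| ≤ 2 := by
  have hpos : ∀ t ∈ Icc 1 x, t ≠ 0 := fun t ht => (zero_lt_one.trans_le ht.1).ne'
  have hcont : ContinuousOn (fun t : ℝ => (t ^ 2)⁻¹) (uIcc 1 x) :=
    (continuousOn_pow 2).inv₀ fun t ht => pow_ne_zero 2 (hpos t (uIcc_of_le hx ▸ ht))
  have variation : ∫ t in (1 : ℝ)..x, ‖-(t ^ 2)⁻¹‖ ≤ 1 - x⁻¹ := by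
    refine (integral_norm_le_sub_of_hasDerivAt (V := fun t => -t⁻¹) hx
      hcont.neg.intervalIntegrable (fun t ht => (hasDerivAt_inv (hpos t ht)).neg)
      hcont.neg.neg.intervalIntegrable fun t _ => ?_).trans_eq (by ring)
    simp only [Pi.neg_apply, neg_neg, norm_neg]
    exact (norm_of_nonneg (by positivity)).le
  have h := norm_integral_deriv_smul_le (W := fun t => -cos t) (w := sin) (M := 1) hx
    (fun t _ => (hasDerivAt_cos t).neg.congr_deriv (neg_neg _))
    (continuous_sin.intervalIntegrable _ _) (fun t _ => by simpa using abs_cos_le_one t)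
    (fun t ht => hasDerivAt_inv (hpos t ht)) hcont.neg.intervalIntegrable
  have sinc_eq : ∫ t in (1 : ℝ)..x, sinc t = ∫ t in (1 : ℝ)..x, sin t • t⁻¹ :=
    intervalIntegral.integral_congr fun t ht => by
      simp only [sinc_of_ne_zero (hpos t (uIcc_of_le hx ▸ ht)), smul_eq_mul, div_eq_mul_inv]
  have hx0 : 0 ≤ x⁻¹ := inv_nonneg.2 (zero_le_one.trans hx)
  rw [inv_one, norm_one, norm_of_nonneg hx0] at h
  rw [sinc_eq, ← norm_eq_abs]
  linarith

lemma abs_sineIntegral_le (x : ℝ) : |sineIntegral x| ≤ 3 := by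
  wlog hx : 0 ≤ x generalizing x
  · rw [← abs_neg, ← sineIntegral_neg]
    exact this (-x) (by linarith)
  rcases le_total x 1 with h | h
  · linarith [abs_sineIntegral_le_abs x, abs_of_nonneg hx]
  have split : sineIntegral x = sineIntegral 1 + ∫ t in (1 : ℝ)..x, sinc t :=
    (intervalIntegral.integral_add_adjacent_intervals (continuous_sinc.intervalIntegrable _ _)
      (continuous_sinc.intervalIntegrable _ _)).symm
  have head := abs_sineIntegral_le_abs 1
  rw [abs_one] at head
  rw [split]
  linarith [abs_add_le (sineIntegral 1) (∫ t in (1 : ℝ)..x, sinc t), abs_integral_one_sinc_le h]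

end SineIntegral

section GaussianAmplitude

/-- The complex Gaussian width `p(θ) = τ - i B θ²`, chosen so that
`exp (-τ u²) * exp (i B θ² u²) = exp (-p(θ) u²)`. -/
def gaussianWidth (τ B θ : ℝ) : ℂ := τ - Complex.I * (B * θ ^ 2 : ℝ)

/-- The amplitude `p(θ) ^ (-1/2)`, which is `∫ u in (0, ∞), exp (-p(θ) u²)` up to the factor
`√π / 2`. -/
def gaussianAmplitude (τ B θ : ℝ) : ℂ := gaussianWidth τ B θ ^ ((-(1 / 2) : ℝ) : ℂ)

variable {τ B θ : ℝ}

lemma gaussianWidth_re (τ B θ : ℝ) : (gaussianWidth τ B θ).re = τ := by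
  simp [gaussianWidth, -Complex.ofReal_pow]

lemma gaussianWidth_im (τ B θ : ℝ) : (gaussianWidth τ B θ).im = -(B * θ ^ 2) := by
  simp [gaussianWidth, -Complex.ofReal_pow]

lemma gaussianWidth_mem_slitPlane (hτ : 0 < τ) (B θ : ℝ) :
    gaussianWidth τ B θ ∈ Complex.slitPlane :=
  .inl (by rwa [gaussianWidth_re])

lemma gaussianWidth_ne_zero (hτ : 0 < τ) (B θ : ℝ) : gaussianWidth τ B θ ≠ 0 :=
  Complex.slitPlane_ne_zero (gaussianWidth_mem_slitPlane hτ B θ)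

lemma half_le_norm_gaussianWidth (τ B θ : ℝ) : (τ + B * θ ^ 2) / 2 ≤ ‖gaussianWidth τ B θ‖ := by
  have hre := (le_abs_self _).trans (Complex.abs_re_le_norm (gaussianWidth τ B θ))
  have him := (neg_le_abs _).trans (Complex.abs_im_le_norm (gaussianWidth τ B θ))
  rw [gaussianWidth_re] at hre
  rw [gaussianWidth_im, neg_neg] at him
  linarith

lemma norm_gaussianWidth_cpow_neg_le {e : ℝ} (hq : 0 < τ + B * θ ^ 2) (he : 0 ≤ e) (he' : e ≤ 2) :
    ‖gaussianWidth τ B θ ^ ((-e : ℝ) : ℂ)‖ ≤ 4 * (τ + B * θ ^ 2) ^ (-e) := by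
  rw [Complex.norm_cpow_real]
  calc ‖gaussianWidth τ B θ‖ ^ (-e)
      ≤ ((τ + B * θ ^ 2) / 2) ^ (-e) :=
        rpow_le_rpow_of_nonpos (by positivity) (half_le_norm_gaussianWidth τ B θ) (by linarith)
    _ = 2 ^ e * (τ + B * θ ^ 2) ^ (-e) := by
        rw [div_rpow hq.le zero_le_two, rpow_neg zero_le_two, div_inv_eq_mul, mul_comm]
    _ ≤ 2 ^ (2 : ℝ) * (τ + B * θ ^ 2) ^ (-e) := by
        gcongr
        exact one_le_two
    _ = 4 * (τ + B * θ ^ 2) ^ (-e) := by norm_num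

lemma norm_gaussianAmplitude_le_rpow (hτ : 0 < τ) (hB : 0 ≤ B) (θ : ℝ) :
    ‖gaussianAmplitude τ B θ‖ ≤ 4 * (τ + B * θ ^ 2) ^ (-(1 / 2) : ℝ) :=
  norm_gaussianWidth_cpow_neg_le (by positivity) (by norm_num) (by norm_num)

lemma norm_gaussianAmplitude_le (hτ : 0 < τ) (hB : 0 ≤ B) (θ : ℝ) :
    ‖gaussianAmplitude τ B θ‖ ≤ 4 * τ ^ (-(1 / 2) : ℝ) := by
  refine (norm_gaussianAmplitude_le_rpow hτ hB θ).trans (mul_le_mul_of_nonneg_left ?_ zero_le_four)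
  exact rpow_le_rpow_of_nonpos hτ (le_add_of_nonneg_right (by positivity)) (by norm_num)

lemma mul_rpow_neg_half_le (hτ : 0 ≤ τ) (hB : 0 < B) (hθ : 0 ≤ θ) :
    θ * (τ + B * θ ^ 2) ^ (-(1 / 2) : ℝ) ≤ B ^ (-(1 / 2) : ℝ) := by
  rcases hθ.eq_or_lt with rfl | hθ
  · rw [zero_mul]
    positivity
  calc θ * (τ + B * θ ^ 2) ^ (-(1 / 2) : ℝ)
      ≤ θ * (B * θ ^ 2) ^ (-(1 / 2) : ℝ) := mul_le_mul_of_nonneg_left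
        (rpow_le_rpow_of_nonpos (by positivity) (le_add_of_nonneg_left hτ) (by norm_num)) hθ.le
    _ = B ^ (-(1 / 2) : ℝ) := by
        rw [mul_rpow hB.le (by positivity), rpow_neg (sq_nonneg θ), ← sqrt_eq_rpow, sqrt_sq hθ.le,
          mul_left_comm, mul_inv_cancel₀ hθ.ne', mul_one]

lemma norm_smul_gaussianAmplitude_le (hτ : 0 < τ) (hB : 0 < B) (hθ : 0 ≤ θ) :
    ‖θ • gaussianAmplitude τ B θ‖ ≤ 4 * B ^ (-(1 / 2) : ℝ) := by
  rw [norm_smul, norm_of_nonneg hθ]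
  linarith [mul_le_mul_of_nonneg_left (norm_gaussianAmplitude_le_rpow hτ hB.le θ) hθ,
    mul_rpow_neg_half_le hτ.le hB hθ]

lemma hasDerivAt_mul_sq (B θ : ℝ) : HasDerivAt (fun θ => B * θ ^ 2) (2 * B * θ) θ :=
  ((hasDerivAt_pow 2 θ).const_mul B).congr_deriv (by norm_num; ring)

lemma hasDerivAt_rpow_neg_half (hq : 0 < τ + B * θ ^ 2) :
    HasDerivAt (fun θ => (τ + B * θ ^ 2) ^ (-(1 / 2) : ℝ))
      (-(B * θ * (τ + B * θ ^ 2) ^ (-(3 / 2) : ℝ))) θ :=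
  (((hasDerivAt_mul_sq B θ).const_add τ).rpow_const (.inl hq.ne')).congr_deriv (by
    rw [show (-(1 / 2) : ℝ) - 1 = -(3 / 2) by norm_num]
    ring)

lemma hasDerivAt_mul_rpow_neg_half (hq : 0 < τ + B * θ ^ 2) :
    HasDerivAt (fun θ => θ * (τ + B * θ ^ 2) ^ (-(1 / 2) : ℝ))
      (τ * (τ + B * θ ^ 2) ^ (-(3 / 2) : ℝ)) θ := by
  refine ((hasDerivAt_id' θ).mul (hasDerivAt_rpow_neg_half hq)).congr_deriv ?_
  rw [show (-(1 / 2) : ℝ) = 1 + -(3 / 2) by norm_num, rpow_add hq, rpow_one]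
  ring

lemma hasDerivAt_gaussianWidth (τ B θ : ℝ) :
    HasDerivAt (gaussianWidth τ B) (-Complex.I * (2 * B * θ : ℝ)) θ :=
  (((hasDerivAt_mul_sq B θ).ofReal_comp.const_mul Complex.I).const_sub (τ : ℂ)).congr_deriv
    (neg_mul _ _).symm

lemma hasDerivAt_gaussianAmplitude (hτ : 0 < τ) (B θ : ℝ) :
    HasDerivAt (gaussianAmplitude τ B)
      ((B * θ) • (Complex.I * gaussianWidth τ B θ ^ ((-(3 / 2) : ℝ) : ℂ))) θ := by
  refine ((Complex.hasStrictDerivAt_cpow_const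
    (gaussianWidth_mem_slitPlane hτ B θ)).hasDerivAt.comp θ
      (hasDerivAt_gaussianWidth τ B θ)).congr_deriv ?_
  rw [show ((-(1 / 2) : ℝ) : ℂ) - 1 = ((-(3 / 2) : ℝ) : ℂ) by push_cast; ring, Complex.real_smul]
  push_cast
  ring

lemma hasDerivAt_smul_gaussianAmplitude (hτ : 0 < τ) (B θ : ℝ) :
    HasDerivAt (fun θ : ℝ => θ • gaussianAmplitude τ B θ)
      (τ • gaussianWidth τ B θ ^ ((-(3 / 2) : ℝ) : ℂ)) θ := by
  have factor : gaussianAmplitude τ B θ =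
      gaussianWidth τ B θ * gaussianWidth τ B θ ^ ((-(3 / 2) : ℝ) : ℂ) := by
    rw [gaussianAmplitude, show ((-(1 / 2) : ℝ) : ℂ) = 1 + ((-(3 / 2) : ℝ) : ℂ) by push_cast; ring,
      Complex.cpow_add _ _ (gaussianWidth_ne_zero hτ B θ), Complex.cpow_one]
  refine ((hasDerivAt_id' θ).smul (hasDerivAt_gaussianAmplitude hτ B θ)).congr_deriv ?_
  rw [factor]
  generalize gaussianWidth τ B θ ^ ((-(3 / 2) : ℝ) : ℂ) = z
  simp only [gaussianWidth, Complex.real_smul, one_smul]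
  push_cast
  ring

lemma continuous_gaussianWidth_cpow (hτ : 0 < τ) (B : ℝ) (e : ℂ) :
    Continuous fun θ => gaussianWidth τ B θ ^ e :=
  (by unfold gaussianWidth; fun_prop : Continuous (gaussianWidth τ B)).cpow continuous_const
    (gaussianWidth_mem_slitPlane hτ B)

lemma continuous_rpow_quadratic (hτ : 0 < τ) (hB : 0 ≤ B) (e : ℝ) :
    Continuous fun θ => (τ + B * θ ^ 2) ^ e :=
  (by fun_prop : Continuous fun θ => τ + B * θ ^ 2).rpow_const fun θ => .inl (by positivity)

lemma integral_norm_deriv_gaussianAmplitude_le {R : ℝ} (hτ : 0 < τ) (hB : 0 ≤ B) (hR : 0 ≤ R) :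
    ∫ θ in (0 : ℝ)..R, ‖(B * θ) • (Complex.I * gaussianWidth τ B θ ^ ((-(3 / 2) : ℝ) : ℂ))‖
      ≤ 4 * τ ^ (-(1 / 2) : ℝ) := by
  have hcont := continuous_gaussianWidth_cpow hτ B ((-(3 / 2) : ℝ) : ℂ)
  have hcont' := continuous_rpow_quadratic hτ hB (-(3 / 2))
  refine (integral_norm_le_sub_of_hasDerivAt
    (V := fun θ => -4 * (τ + B * θ ^ 2) ^ (-(1 / 2) : ℝ)) hR
    (Continuous.intervalIntegrable (by fun_prop) _ _)
    (fun θ _ => (hasDerivAt_rpow_neg_half (by positivity)).const_mul (-4))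
    (Continuous.intervalIntegrable (by fun_prop) _ _) fun θ hθ => ?_).trans ?_
  · have hBθ : 0 ≤ B * θ := mul_nonneg hB hθ.1
    rw [norm_smul, norm_of_nonneg hBθ, norm_mul, Complex.norm_I, one_mul]
    linarith [mul_le_mul_of_nonneg_left (norm_gaussianWidth_cpow_neg_le (τ := τ) (B := B) (θ := θ)
      (e := 3 / 2) (by positivity) (by norm_num) (by norm_num)) hBθ]
  · have : 0 ≤ (τ + B * R ^ 2) ^ (-(1 / 2) : ℝ) := by positivity
    simp only [ne_eq, OfNat.ofNat_ne_zero, not_false_eq_true, zero_pow, mul_zero, add_zero]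
    linarith

lemma integral_norm_deriv_smul_gaussianAmplitude_le {R : ℝ} (hτ : 0 < τ) (hB : 0 < B)
    (hR : 0 ≤ R) :
    ∫ θ in (0 : ℝ)..R, ‖τ • gaussianWidth τ B θ ^ ((-(3 / 2) : ℝ) : ℂ)‖
      ≤ 4 * B ^ (-(1 / 2) : ℝ) := by
  have hcont := continuous_gaussianWidth_cpow hτ B ((-(3 / 2) : ℝ) : ℂ)
  have hcont' := continuous_rpow_quadratic hτ hB.le (-(3 / 2))
  refine (integral_norm_le_sub_of_hasDerivAt
    (V := fun θ => 4 * (θ * (τ + B * θ ^ 2) ^ (-(1 / 2) : ℝ))) hR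
    (Continuous.intervalIntegrable (by fun_prop) _ _)
    (fun θ _ => (hasDerivAt_mul_rpow_neg_half (by positivity)).const_mul 4)
    (Continuous.intervalIntegrable (by fun_prop) _ _) fun θ _ => ?_).trans ?_
  · rw [norm_smul, norm_of_nonneg hτ.le]
    linarith [mul_le_mul_of_nonneg_left (norm_gaussianWidth_cpow_neg_le (τ := τ) (B := B) (θ := θ)
      (e := 3 / 2) (by positivity) (by norm_num) (by norm_num)) hτ.le]
  · simp only [zero_mul, mul_zero, sub_zero]
    linarith [mul_rpow_neg_half_le hτ.le hB hR]

end GaussianAmplitude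

section Slices

variable {τ B R X₀ X₁ ζ : ℝ} {χ : ℝ → ℝ}

lemma norm_integral_sin_smul_gaussianAmplitude_le_div (hτ : 0 < τ) (hB : 0 ≤ B) (hR : 0 ≤ R)
    (hζ : ζ ≠ 0) (hχ : ContDiff ℝ 1 χ) (hχ₀ : ∀ x, |χ x| ≤ X₀) (hχ₁ : ∀ x, |deriv χ x| ≤ X₁) :
    ‖∫ θ in (0 : ℝ)..R, sin (ζ * θ) • χ θ • gaussianAmplitude τ B θ‖
      ≤ |ζ|⁻¹ * ((3 * X₀ + X₁ * R) * (4 * τ ^ (-(1 / 2) : ℝ))) := by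
  have hcont := continuous_gaussianWidth_cpow hτ B ((-(3 / 2) : ℝ) : ℂ)
  have h := norm_integral_deriv_smul_cutoff_smul_le (W := fun θ => -cos (ζ * θ) / ζ)
    (w := fun θ => sin (ζ * θ)) (M := |ζ|⁻¹) hR (fun θ _ => ?_)
    (Continuous.intervalIntegrable (by fun_prop) _ _) (fun θ _ => ?_) hχ hχ₀ hχ₁
    (fun θ _ => hasDerivAt_gaussianAmplitude hτ B θ)
    (Continuous.intervalIntegrable (by fun_prop) _ _)
    (fun θ _ => norm_gaussianAmplitude_le hτ hB θ)
    (integral_norm_deriv_gaussianAmplitude_le hτ hB hR)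
  · rwa [sub_zero] at h
  · refine (((hasDerivAt_const_mul ζ).cos).neg.div_const ζ).congr_deriv ?_
    field_simp
  · rw [abs_div, abs_neg, div_eq_mul_inv]
    exact mul_le_of_le_one_left (by positivity) (abs_cos_le_one _)

lemma mul_sinc_mul (ζ θ : ℝ) : ζ * sinc (ζ * θ) * θ = sin (ζ * θ) := by
  rcases eq_or_ne (ζ * θ) 0 with h | h
  · rw [mul_right_comm, h, zero_mul, sin_zero]
  · rw [mul_right_comm, sinc_of_ne_zero h, mul_div_cancel₀ _ h]

lemma norm_integral_sin_smul_gaussianAmplitude_le (hτ : 0 < τ) (hB : 0 < B) (hR : 0 ≤ R)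
    (hχ : ContDiff ℝ 1 χ) (hχ₀ : ∀ x, |χ x| ≤ X₀) (hχ₁ : ∀ x, |deriv χ x| ≤ X₁) :
    ‖∫ θ in (0 : ℝ)..R, sin (ζ * θ) • χ θ • gaussianAmplitude τ B θ‖
      ≤ 3 * ((3 * X₀ + X₁ * R) * (4 * B ^ (-(1 / 2) : ℝ))) := by
  have hcont := continuous_gaussianWidth_cpow hτ B ((-(3 / 2) : ℝ) : ℂ)
  have transfer : ∀ θ : ℝ, sin (ζ * θ) • χ θ • gaussianAmplitude τ B θ =
      (ζ * sinc (ζ * θ)) • χ θ • θ • gaussianAmplitude τ B θ := fun θ => by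
    rw [smul_comm (χ θ) θ, smul_smul _ θ, mul_sinc_mul]
  have h := norm_integral_deriv_smul_cutoff_smul_le (W := fun θ => sineIntegral (ζ * θ))
    (w := fun θ => ζ * sinc (ζ * θ)) hR
    (fun θ _ => ((hasDerivAt_sineIntegral (ζ * θ)).comp θ (hasDerivAt_const_mul ζ)).congr_deriv
      (mul_comm _ _))
    (Continuous.intervalIntegrable (by fun_prop) _ _) (fun θ _ => abs_sineIntegral_le _) hχ hχ₀ hχ₁
    (fun θ _ => hasDerivAt_smul_gaussianAmplitude hτ B θ)
    (Continuous.intervalIntegrable (by fun_prop) _ _)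
    (fun θ hθ => norm_smul_gaussianAmplitude_le hτ hB hθ.1)
    (integral_norm_deriv_smul_gaussianAmplitude_le hτ hB hR)
  simpa only [transfer, sub_zero] using h

end Slices

section Subordination

variable {A B θ : ℝ}

/-- The inner integral of `Htil`, as a function of the phase parameter
`A = 2 ^ (j + 1) * (r₁ * r₂ / (r₁ + r₂))` and of `θ`. -/
def phaseIntegral (A θ : ℝ) : ℂ :=
  ∫ s in Ioi (0 : ℝ), Complex.exp (Complex.I * (A * s ^ 2 : ℝ)) *
    (√2 * θ / (s ^ 2 + 2 * θ ^ 2) : ℝ)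

lemma phaseIntegral_neg (A θ : ℝ) : phaseIntegral A (-θ) = -phaseIntegral A θ := by
  simp only [phaseIntegral, ← integral_neg, neg_sq, mul_neg, neg_div, Complex.ofReal_neg]

lemma phaseIntegral_eq_integral_inv_one_add_sq (A : ℝ) (hθ : 0 < θ) :
    phaseIntegral A θ = ∫ u in Ioi (0 : ℝ),
      Complex.exp (Complex.I * (2 * A * θ ^ 2 * u ^ 2 : ℝ)) * ((1 + u ^ 2)⁻¹ : ℝ) := by
  have rescale := integral_comp_mul_left_Ioi' (fun s : ℝ =>
    Complex.exp (Complex.I * (A * s ^ 2 : ℝ)) * (√2 * θ / (s ^ 2 + 2 * θ ^ 2) : ℝ)) 0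
    (show 0 < √2 * θ by positivity)
  rw [mul_zero] at rescale
  rw [phaseIntegral, ← rescale, ← integral_smul]
  refine integral_congr_ae (.of_forall fun u => ?_)
  have phase : A * (√2 * θ * u) ^ 2 = 2 * A * θ ^ 2 * u ^ 2 := by
    rw [mul_pow, mul_pow, sq_sqrt zero_le_two]
    ring
  have weight : √2 * θ * (√2 * θ / ((√2 * θ * u) ^ 2 + 2 * θ ^ 2)) = (1 + u ^ 2)⁻¹ := by
    rw [mul_pow, mul_pow, sq_sqrt zero_le_two, mul_div_assoc', ← sq, mul_pow,
      sq_sqrt zero_le_two]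
    field_simp
    ring
  simp only [Complex.real_smul]
  rw [mul_left_comm, ← Complex.ofReal_mul, phase, weight]

lemma integral_exp_neg_mul_Ioi {b : ℝ} (hb : 0 < b) :
    ∫ τ in Ioi (0 : ℝ), exp (-b * τ) = b⁻¹ := by
  rw [integral_exp_mul_Ioi (neg_neg_of_pos hb), mul_zero, exp_zero, neg_div_neg_eq, one_div]

lemma ofReal_mul_cpow {x : ℝ} (hx : 0 < x) {z : ℂ} (hz : z ≠ 0) (w : ℂ) :
    ((x : ℂ) * z) ^ w = (x : ℂ) ^ w * z ^ w := by
  have hx' : (x : ℂ) ≠ 0 := Complex.ofReal_ne_zero.2 hx.ne'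
  simp only [Complex.cpow_def_of_ne_zero hx', Complex.cpow_def_of_ne_zero hz,
    Complex.cpow_def_of_ne_zero (mul_ne_zero hx' hz), Complex.log_ofReal_mul hx hz, add_mul,
    Complex.exp_add, Complex.ofReal_log hx.le]

lemma integral_exp_neg_gaussianWidth_mul_sq {τ : ℝ} (hτ : 0 < τ) (B θ : ℝ) :
    ∫ u in Ioi (0 : ℝ), Complex.exp (-gaussianWidth τ B θ * (u : ℂ) ^ 2) =
      (√π / 2) • gaussianAmplitude τ B θ := by
  have power : ((π : ℂ) / gaussianWidth τ B θ) ^ (1 / 2 : ℂ) = √π * gaussianAmplitude τ B θ := by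
    rw [div_eq_mul_inv,
      ofReal_mul_cpow pi_pos (inv_ne_zero (gaussianWidth_ne_zero hτ B θ)),
      Complex.inv_cpow _ _ (Complex.slitPlane_arg_ne_pi (gaussianWidth_mem_slitPlane hτ B θ)),
      ← Complex.cpow_neg, gaussianAmplitude, sqrt_eq_rpow, Complex.ofReal_cpow pi_pos.le]
    push_cast
    rfl
  rw [integral_gaussian_complex_Ioi (by rwa [gaussianWidth_re]), power, Complex.real_smul]
  push_cast
  ring

lemma exp_neg_smul_exp_gaussianWidth (τ B θ u : ℝ) :
    exp (-τ) • Complex.exp (-gaussianWidth τ B θ * (u : ℂ) ^ 2) =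
      exp (-(1 + u ^ 2) * τ) • Complex.exp (Complex.I * (B * θ ^ 2 * u ^ 2 : ℝ)) := by
  simp only [Complex.real_smul, Complex.ofReal_exp, ← Complex.exp_add, gaussianWidth]
  congr 1
  push_cast
  ring

lemma integrable_exp_neg_one_add_sq_mul_smul (b : ℝ) :
    Integrable (Function.uncurry fun u τ : ℝ =>
      exp (-(1 + u ^ 2) * τ) • Complex.exp (Complex.I * (b * u ^ 2 : ℝ)))
      ((volume.restrict (Ioi 0)).prod (volume.restrict (Ioi 0))) := by
  have norm_eq : ∀ u τ : ℝ, ‖exp (-(1 + u ^ 2) * τ) • Complex.exp (Complex.I * (b * u ^ 2 : ℝ))‖ =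
      exp (-(1 + u ^ 2) * τ) := fun u τ => by
    rw [norm_smul, mul_comm Complex.I, Complex.norm_exp_ofReal_mul_I, mul_one,
      norm_of_nonneg (exp_pos _).le]
  refine (integrable_prod_iff (Continuous.aestronglyMeasurable ?_)).2 ⟨.of_forall fun u => ?_, ?_⟩
  · unfold Function.uncurry
    fun_prop
  · have hexp : IntegrableOn (fun τ : ℝ => exp (-(1 + u ^ 2) * τ)) (Ioi 0) :=
      integrableOn_exp_mul_Ioi (neg_neg_of_pos (by positivity)) 0
    exact hexp.integrable.smul_const (Complex.exp (Complex.I * (b * u ^ 2 : ℝ)))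
  · simp only [Function.uncurry_apply_pair, norm_eq]
    simp only [integral_exp_neg_mul_Ioi (by positivity : (0 : ℝ) < 1 + _ ^ 2)]
    exact integrable_inv_one_add_sq.integrableOn

lemma phaseIntegral_eq_integral_gaussianAmplitude (A : ℝ) (hθ : 0 < θ) :
    phaseIntegral A θ =
      (√π / 2) • ∫ τ in Ioi (0 : ℝ), exp (-τ) • gaussianAmplitude τ (2 * A) θ := by
  calc phaseIntegral A θ
      = ∫ u in Ioi (0 : ℝ), ∫ τ in Ioi (0 : ℝ),
          exp (-(1 + u ^ 2) * τ) • Complex.exp (Complex.I * (2 * A * θ ^ 2 * u ^ 2 : ℝ)) := by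
        rw [phaseIntegral_eq_integral_inv_one_add_sq A hθ]
        refine integral_congr_ae (.of_forall fun u => ?_)
        simp only [integral_smul_const, integral_exp_neg_mul_Ioi (by positivity : 0 < 1 + u ^ 2)]
        rw [Complex.real_smul, mul_comm]
    _ = ∫ τ in Ioi (0 : ℝ), ∫ u in Ioi (0 : ℝ),
          exp (-(1 + u ^ 2) * τ) • Complex.exp (Complex.I * (2 * A * θ ^ 2 * u ^ 2 : ℝ)) :=
        integral_integral_swap (integrable_exp_neg_one_add_sq_mul_smul _)
    _ = ∫ τ in Ioi (0 : ℝ), (√π / 2) • exp (-τ) • gaussianAmplitude τ (2 * A) θ := by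
        refine setIntegral_congr_fun measurableSet_Ioi fun τ hτ => ?_
        simp only [← exp_neg_smul_exp_gaussianWidth, integral_smul,
          integral_exp_neg_gaussianWidth_mul_sq hτ]
        rw [smul_comm]
    _ = (√π / 2) • ∫ τ in Ioi (0 : ℝ), exp (-τ) • gaussianAmplitude τ (2 * A) θ :=
        integral_smul _ _

lemma integrable_smul_exp_neg_smul_gaussianAmplitude {c : ℝ → ℝ} (hB : 0 ≤ B)
    (hc : IntegrableOn c (Ioi 0)) :
    Integrable (Function.uncurry fun θ τ => c θ • exp (-τ) • gaussianAmplitude τ B θ)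
      ((volume.restrict (Ioi 0)).prod (volume.restrict (Ioi 0))) := by
  have majorant : IntegrableOn (fun τ : ℝ => 4 * (exp (-τ) * τ ^ ((1 / 2 : ℝ) - 1))) (Ioi 0) :=
    (GammaIntegral_convergent one_half_pos).const_mul 4
  have hmeas : Measurable fun p : ℝ × ℝ => exp (-p.2) • gaussianAmplitude p.2 B p.1 := by
    have : Measurable fun p : ℝ × ℝ => gaussianAmplitude p.2 B p.1 := by
      unfold gaussianAmplitude gaussianWidth
      exact Measurable.pow_const (by fun_prop) _
    fun_prop
  refine (hc.norm.mul_prod majorant).mono'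
    (hc.aestronglyMeasurable.comp_fst.smul hmeas.aestronglyMeasurable) ?_
  rw [Measure.prod_restrict]
  refine ae_restrict_of_forall_mem (measurableSet_Ioi.prod measurableSet_Ioi) fun p hp => ?_
  simp only [Function.uncurry, norm_smul]
  rw [norm_of_nonneg (exp_pos _).le, show (1 / 2 : ℝ) - 1 = -(1 / 2) by norm_num,
    mul_left_comm (4 : ℝ)]
  gcongr
  exact norm_gaussianAmplitude_le hp.2 hB _

lemma smul_phaseIntegral_eqOn (c : ℝ → ℝ) (A : ℝ) :
    EqOn (fun θ => c θ • phaseIntegral A θ)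
      (fun θ => (√π / 2) • ∫ τ in Ioi (0 : ℝ), c θ • exp (-τ) • gaussianAmplitude τ (2 * A) θ)
      (Ioi 0) := fun θ hθ => by
  simp only [phaseIntegral_eq_integral_gaussianAmplitude A hθ, integral_smul]
  exact smul_comm _ _ _

lemma integrableOn_smul_phaseIntegral {c : ℝ → ℝ} (hA : 0 ≤ A) (hc : IntegrableOn c (Ioi 0)) :
    IntegrableOn (fun θ => c θ • phaseIntegral A θ) (Ioi 0) :=
  IntegrableOn.congr_fun
    ((integrable_smul_exp_neg_smul_gaussianAmplitude (by positivity) hc).integral_prod_left.smul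
      (√π / 2))
    (smul_phaseIntegral_eqOn c A).symm measurableSet_Ioi

lemma norm_integral_smul_phaseIntegral_le {c : ℝ → ℝ} {K s : ℝ} (hA : 0 ≤ A)
    (hc : IntegrableOn c (Ioi 0)) (hs : 0 < s)
    (hslice : ∀ τ > 0, ‖∫ θ in Ioi (0 : ℝ), c θ • gaussianAmplitude τ (2 * A) θ‖ ≤
      K * τ ^ (s - 1)) :
    ‖∫ θ in Ioi (0 : ℝ), c θ • phaseIntegral A θ‖ ≤ √π / 2 * (K * Gamma s) := by
  rw [setIntegral_congr_fun measurableSet_Ioi (smul_phaseIntegral_eqOn c A), integral_smul,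
    integral_integral_swap (integrable_smul_exp_neg_smul_gaussianAmplitude (by positivity) hc),
    norm_smul, norm_of_nonneg (by positivity), Gamma_eq_integral hs, ← integral_const_mul]
  gcongr
  refine norm_integral_le_of_norm_le ((GammaIntegral_convergent hs).const_mul K)
    (ae_restrict_of_forall_mem measurableSet_Ioi fun τ hτ => ?_)
  simp only [smul_comm (c _) (exp (-τ)), integral_smul]
  rw [norm_smul, norm_of_nonneg (exp_pos _).le, mul_left_comm]
  gcongr
  exact hslice τ hτ

end Subordination

section OddFourier

lemma integral_exp_neg_mul_eq_of_odd {f : ℝ → ℂ} (hf : IntegrableOn f (Ioi 0))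
    (hodd : ∀ x, f (-x) = -f x) (ζ : ℝ) :
    ∫ x : ℝ, Complex.exp (-Complex.I * (ζ * x : ℝ)) * f x =
      -2 * Complex.I * ∫ x in Ioi (0 : ℝ), sin (ζ * x) • f x := by
  set g : ℝ → ℂ := fun x => Complex.exp (-Complex.I * (ζ * x : ℝ)) * f x with hg
  have bounded : ∀ x : ℝ, ‖Complex.exp (-Complex.I * (ζ * x : ℝ))‖ ≤ 1 := fun x => by
    rw [neg_mul, mul_comm, ← neg_mul, ← Complex.ofReal_neg, Complex.norm_exp_ofReal_mul_I]
  have integrable_mul : ∀ {s : Set ℝ}, IntegrableOn f s → IntegrableOn g s := fun h =>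
    h.bdd_mul (c := 1) (Continuous.aestronglyMeasurable (by fun_prop)) (.of_forall bounded)
  have hfIic : IntegrableOn f (Iic 0) := by
    have h : IntegrableOn (fun x => f (-x)) (Iio 0) := by
      apply IntegrableOn.comp_neg_Iio
      rwa [neg_zero]
    simpa [hodd, integrableOn_Iic_iff_integrableOn_Iio] using h.neg
  have reflect : ∫ x in Iic (0 : ℝ), g x = ∫ x in Ioi (0 : ℝ), g (-x) := by
    rw [integral_comp_neg_Ioi, neg_zero]
  have hneg : IntegrableOn (fun x => g (-x)) (Ioi 0) := by
    apply IntegrableOn.comp_neg_Ioi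
    rw [neg_zero, ← integrableOn_Iic_iff_integrableOn_Iio]
    exact integrable_mul hfIic
  have fold : ∀ x, g (-x) + g x = -2 * Complex.I * sin (ζ * x) • f x := fun x => by
    simp only [hg, hodd, Complex.real_smul, Complex.ofReal_sin, Complex.sin, mul_neg, neg_mul,
      Complex.ofReal_neg, neg_neg, mul_comm Complex.I]
    linear_combination (f x * (Complex.exp (-((ζ * x : ℝ) * Complex.I)) -
      Complex.exp ((ζ * x : ℝ) * Complex.I))) * Complex.I_sq
  rw [← intervalIntegral.integral_Iic_add_Ioi (integrable_mul hfIic) (integrable_mul hf), reflect,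
    ← integral_add hneg (integrable_mul hf)]
  simp only [fold, integral_const_mul]

end OddFourier

section Cutoff

variable {A R ζ : ℝ} {χ : ℝ → ℝ}

lemma setIntegral_Ioi_eq_intervalIntegral {E : Type*} [NormedAddCommGroup E] [NormedSpace ℝ E]
    {f : ℝ → E} {a b : ℝ} (hab : a ≤ b) (hf : ∀ x > b, f x = 0) :
    ∫ x in Ioi a, f x = ∫ x in a..b, f x := by
  rw [intervalIntegral.integral_of_le hab]
  exact setIntegral_eq_of_subset_of_forall_sdiff_eq_zero measurableSet_Ioi Ioc_subset_Ioi_self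
    fun x hx => hf x (not_le.1 fun hxb => hx.2 ⟨hx.1, hxb⟩)

lemma norm_integral_sin_mul_cutoff_smul_phaseIntegral_le {K s : ℝ} (hA : 0 ≤ A) (hR : 0 ≤ R)
    (hχ : Continuous χ) (hχc : HasCompactSupport χ) (hχR : ∀ x > R, χ x = 0) (hs : 0 < s)
    (hslice : ∀ τ > 0, ‖∫ θ in (0 : ℝ)..R, sin (ζ * θ) • χ θ • gaussianAmplitude τ (2 * A) θ‖ ≤
      K * τ ^ (s - 1)) :
    ‖∫ θ in Ioi (0 : ℝ), sin (ζ * θ) • χ θ • phaseIntegral A θ‖ ≤ √π / 2 * (K * Gamma s) := by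
  have hc : IntegrableOn (fun θ => sin (ζ * θ) * χ θ) (Ioi 0) :=
    (Continuous.integrable_of_hasCompactSupport (by fun_prop) hχc.mul_left).integrableOn
  simp only [smul_smul] at hslice ⊢
  refine norm_integral_smul_phaseIntegral_le hA hc hs fun τ hτ => ?_
  rw [setIntegral_Ioi_eq_intervalIntegral hR fun θ hθ => by rw [hχR θ hθ, mul_zero, zero_smul]]
  exact hslice τ hτ

lemma exists_norm_integral_sin_smul_cutoff_smul_phaseIntegral_le (hχ : ContDiff ℝ 1 χ)
    (hχc : HasCompactSupport χ) :
    ∃ C > 0, ∀ A > 0, ∀ ζ : ℝ,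
      ‖∫ θ in Ioi (0 : ℝ), sin (ζ * θ) • χ θ • phaseIntegral A θ‖ ≤ C * A ^ (-(1 / 2) : ℝ) ∧
      (ζ ≠ 0 → ‖∫ θ in Ioi (0 : ℝ), sin (ζ * θ) • χ θ • phaseIntegral A θ‖ ≤ C * |ζ|⁻¹) := by
  obtain ⟨X₀, hX₀⟩ := hχ.continuous.bounded_above_of_compact_support hχc
  obtain ⟨X₁, hX₁⟩ := (hχ.continuous_deriv le_rfl).bounded_above_of_compact_support hχc.deriv
  obtain ⟨R, hR, hχR⟩ : ∃ R, 0 ≤ R ∧ ∀ x > R, χ x = 0 := by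
    obtain ⟨R, hR, hsub⟩ := hχc.isCompact.isBounded.subset_closedBall_lt 0 0
    refine ⟨R, hR.le, fun x hx => image_eq_zero_of_notMem_tsupport fun hmem => ?_⟩
    have := hsub hmem
    rw [mem_closedBall_zero_iff, norm_eq_abs] at this
    linarith [le_abs_self x]
  have hX₀' : 0 ≤ X₀ := (norm_nonneg _).trans (hX₀ 0)
  have hX₁' : 0 ≤ X₁ := (norm_nonneg _).trans (hX₁ 0)
  set D := 3 * X₀ + X₁ * R
  have hD : 0 ≤ D := by positivity
  have hπ := sqrt_nonneg π
  refine ⟨6 * √π * D + 2 * π * D + 1, by positivity, fun A hA ζ => ⟨?_, fun hζ => ?_⟩⟩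
  · have h := norm_integral_sin_mul_cutoff_smul_phaseIntegral_le (ζ := ζ) (s := 1) hA.le hR
      hχ.continuous hχc hχR one_pos fun τ hτ => by
        rw [sub_self, rpow_zero, mul_one]
        exact norm_integral_sin_smul_gaussianAmplitude_le hτ (by positivity) hR hχ hX₀ hX₁
    calc _ ≤ _ := h
      _ = 6 * √π * D * (2 * A) ^ (-(1 / 2) : ℝ) := by rw [Gamma_one]; ring
      _ ≤ (6 * √π * D + 2 * π * D + 1) * A ^ (-(1 / 2) : ℝ) :=
        mul_le_mul (by nlinarith [pi_pos])
          (rpow_le_rpow_of_nonpos hA (by linarith) (by norm_num)) (by positivity) (by positivity)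
  · have h := norm_integral_sin_mul_cutoff_smul_phaseIntegral_le (ζ := ζ) (s := 1 / 2)
      (K := |ζ|⁻¹ * (D * 4)) hA.le hR hχ.continuous hχc hχR one_half_pos fun τ hτ => by
        refine (norm_integral_sin_smul_gaussianAmplitude_le_div hτ (by positivity) hR hζ hχ
          hX₀ hX₁).trans_eq ?_
        norm_num [mul_assoc, D]
    calc _ ≤ _ := h
      _ = 2 * (√π * √π) * D * |ζ|⁻¹ := by rw [Gamma_one_half_eq]; ring
      _ ≤ (6 * √π * D + 2 * π * D + 1) * |ζ|⁻¹ := by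
        rw [mul_self_sqrt pi_pos.le]
        gcongr
        linarith [mul_nonneg hπ hD]

end Cutoff

lemma exists_norm_fourier_cutoff_smul_phaseIntegral_le {χ : ℝ → ℝ} (hχ : ContDiff ℝ 1 χ)
    (hχe : ∀ x, χ (-x) = χ x) (hχc : HasCompactSupport χ) :
    ∃ C > 0, ∀ A > 0, ∀ ζ : ℝ,
      ‖∫ θ : ℝ, Complex.exp (-Complex.I * (ζ * θ : ℝ)) * χ θ • phaseIntegral A θ‖ ≤
        C * A ^ (-(1 / 2) : ℝ) ∧
      (ζ ≠ 0 → ‖∫ θ : ℝ, Complex.exp (-Complex.I * (ζ * θ : ℝ)) * χ θ • phaseIntegral A θ‖ ≤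
        C * |ζ|⁻¹) := by
  obtain ⟨C, hC, hbound⟩ := exists_norm_integral_sin_smul_cutoff_smul_phaseIntegral_le hχ hχc
  refine ⟨2 * C, by positivity, fun A hA ζ => ?_⟩
  have integrable : IntegrableOn (fun θ => χ θ • phaseIntegral A θ) (Ioi 0) :=
    integrableOn_smul_phaseIntegral hA.le
      (hχ.continuous.integrable_of_hasCompactSupport hχc).integrableOn
  have odd : ∀ θ, χ (-θ) • phaseIntegral A (-θ) = -(χ θ • phaseIntegral A θ) := fun θ => by
    rw [hχe, phaseIntegral_neg, smul_neg]
  rw [integral_exp_neg_mul_eq_of_odd integrable odd, norm_mul, norm_mul, Complex.norm_I, norm_neg,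
    Complex.norm_ofNat, mul_one, mul_assoc, mul_assoc]
  exact ⟨mul_le_mul_of_nonneg_left (hbound A hA ζ).1 zero_le_two,
    fun hζ => mul_le_mul_of_nonneg_left ((hbound A hA ζ).2 hζ) zero_le_two⟩

section Kernel

variable {a : ℝ → ℂ} {β : ℝ → ℝ} {b b' M N r₁ r₂ : ℝ}

/-- The factor of `Htil` that does not depend on `θ`, as a function of `r = r₁ + r₂`. -/
def kernelPrefactor (δ : ℝ) (a : ℝ → ℂ) (β : ℝ → ℝ) (j : ℕ) (r : ℝ) : ℂ :=
  ((2 : ℝ) ^ (-(j : ℝ) * (3 / 2 + δ)) : ℝ) * (r ^ (-(3 / 2 + δ)) : ℝ) * (β r : ℝ) *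
    a ((2 : ℝ) ^ (j : ℝ) * r)

lemma HtilFT_eq (δ : ℝ) (a : ℝ → ℂ) (β χ : ℝ → ℝ) (j : ℕ) (r₁ r₂ ζ : ℝ) :
    HtilFT δ a β χ j r₁ r₂ ζ = kernelPrefactor δ a β j (r₁ + r₂) *
      ∫ θ : ℝ, Complex.exp (-Complex.I * (ζ * θ : ℝ)) *
        χ θ • phaseIntegral (2 ^ ((j : ℝ) + 1) * (r₁ * r₂ / (r₁ + r₂))) θ := by
  rw [HtilFT, ← integral_const_mul]
  refine integral_congr_ae (.of_forall fun θ => ?_)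
  simp only [Htil, kernelPrefactor, phaseIntegral, Complex.real_smul]
  ring

lemma exists_norm_kernelPrefactor_le (hb : 0 < b) (haM : ∀ r > 0, ‖a r‖ ≤ M)
    (hβN : ∀ x, |β x| ≤ N) (hβs : Function.support β ⊆ Icc b b') (δ : ℝ) :
    ∃ K > 0, ∀ (j : ℕ), ∀ r > 0,
      ‖kernelPrefactor δ a β j r‖ ≤ K * 2 ^ (-(j : ℝ) * (3 / 2 + δ)) := by
  have hM : 0 ≤ M := (norm_nonneg _).trans (haM 1 one_pos)
  have hN : 0 ≤ N := (abs_nonneg _).trans (hβN 0)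
  obtain ⟨P, hP⟩ := isCompact_Icc.exists_bound_of_continuousOn
    (f := fun r : ℝ => r ^ (-(3 / 2 + δ))) (s := Icc b b')
    fun r hr => (continuousAt_rpow_const r _ (.inl (hb.trans_le hr.1).ne')).continuousWithinAt
  refine ⟨|P| * N * M + 1, by positivity, fun j r hr => ?_⟩
  have weight : ‖r ^ (-(3 / 2 + δ))‖ * ‖β r‖ ≤ |P| * N := by
    rcases eq_or_ne (β r) 0 with h | h
    · rw [h, norm_zero, mul_zero]
      positivity
    · exact mul_le_mul ((hP r (hβs h)).trans (le_abs_self P)) (hβN r) (norm_nonneg _)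
        (abs_nonneg P)
  have hpow : (0 : ℝ) < 2 ^ (-(j : ℝ) * (3 / 2 + δ)) := by positivity
  calc ‖kernelPrefactor δ a β j r‖
      = 2 ^ (-(j : ℝ) * (3 / 2 + δ)) *
          (‖r ^ (-(3 / 2 + δ))‖ * ‖β r‖ * ‖a (2 ^ (j : ℝ) * r)‖) := by
        simp only [kernelPrefactor, norm_mul, Complex.norm_real, mul_assoc]
        rw [norm_of_nonneg hpow.le]
    _ ≤ 2 ^ (-(j : ℝ) * (3 / 2 + δ)) * (|P| * N * M) := by
        gcongr
        exact haM _ (by positivity)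
    _ ≤ (|P| * N * M + 1) * 2 ^ (-(j : ℝ) * (3 / 2 + δ)) := by linarith

lemma rpow_neg_half_phase_le (hr₁ : 0 < r₁) (hr₂ : 0 < r₂) (hb' : r₁ + r₂ ≤ b') (t : ℝ) :
    (2 ^ (t + 1) * (r₁ * r₂ / (r₁ + r₂))) ^ (-(1 / 2) : ℝ) ≤
      (2 / b') ^ (-(1 / 2) : ℝ) * ((2 : ℝ) ^ t * r₁ * r₂) ^ (-(1 / 2) : ℝ) := by
  have hb'0 : 0 < b' := by linarith
  have phase : 2 ^ (t + 1) * (r₁ * r₂ / (r₁ + r₂)) = 2 / (r₁ + r₂) * ((2 : ℝ) ^ t * r₁ * r₂) := by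
    rw [rpow_add_one two_ne_zero]
    ring
  rw [phase, ← mul_rpow (by positivity) (by positivity)]
  refine rpow_le_rpow_of_nonpos (by positivity) ?_ (by norm_num)
  gcongr

lemma HtilFT_eq_zero (h : β (r₁ + r₂) = 0) (δ : ℝ) (a : ℝ → ℂ) (χ : ℝ → ℝ) (j : ℕ) (ζ : ℝ) :
    HtilFT δ a β χ j r₁ r₂ ζ = 0 := by
  rw [HtilFT_eq, kernelPrefactor, h, Complex.ofReal_zero, mul_zero, zero_mul, zero_mul]

end Kernel

theorem stmt15_general {a : ℝ → ℂ} {β χ : ℝ → ℝ} {b b' M N : ℝ} (δ : ℝ) (hb : 0 < b)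
    (haM : ∀ r > 0, ‖a r‖ ≤ M) (hβN : ∀ x, |β x| ≤ N) (hβs : Function.support β ⊆ Icc b b')
    (hχ : ContDiff ℝ 1 χ) (hχe : ∀ x, χ (-x) = χ x) (hχc : HasCompactSupport χ) :
    ∃ C > 0, ∀ (j : ℕ) (r₁ r₂ ζ : ℝ), 0 < r₁ → 0 < r₂ →
      ‖HtilFT δ a β χ j r₁ r₂ ζ‖ ≤
        C * 2 ^ (-(j : ℝ) * (3 / 2 + δ)) * (2 ^ (j : ℝ) * r₁ * r₂) ^ (-(1 : ℝ) / 2) ∧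
      (ζ ≠ 0 → ‖HtilFT δ a β χ j r₁ r₂ ζ‖ ≤ C * 2 ^ (-(j : ℝ) * (3 / 2 + δ)) / |ζ|) := by
  obtain ⟨K, hK, prefactor⟩ := exists_norm_kernelPrefactor_le hb haM hβN hβs δ
  obtain ⟨C, hC, fourier⟩ := exists_norm_fourier_cutoff_smul_phaseIntegral_le hχ hχe hχc
  set Q := (2 / b') ^ (-(1 / 2) : ℝ)
  refine ⟨K * C * (1 + |Q|), by positivity, fun j r₁ r₂ ζ hr₁ hr₂ => ?_⟩
  set T : ℝ := 2 ^ (-(j : ℝ) * (3 / 2 + δ))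
  have : 0 < T := by positivity
  by_cases hβ : β (r₁ + r₂) = 0
  · rw [HtilFT_eq_zero hβ, norm_zero]
    exact ⟨by positivity, fun _ => by positivity⟩
  have size := prefactor j (r₁ + r₂) (by positivity)
  obtain ⟨low, high⟩ := fourier (2 ^ ((j : ℝ) + 1) * (r₁ * r₂ / (r₁ + r₂))) (by positivity) ζ
  have compare := rpow_neg_half_phase_le hr₁ hr₂ (hβs hβ).2 j
  rw [HtilFT_eq, norm_mul, neg_div]
  set l : ℝ := (2 ^ (j : ℝ) * r₁ * r₂) ^ (-(1 / 2) : ℝ)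
  have : 0 ≤ l := by positivity
  refine ⟨?_, fun hζ => ?_⟩
  · calc _ ≤ K * T * (C * (Q * l)) := by
          gcongr
          exact low.trans (mul_le_mul_of_nonneg_left compare hC.le)
      _ = K * C * T * l * Q := by ring
      _ ≤ K * C * T * l * (1 + |Q|) := by
          gcongr
          linarith [le_abs_self Q]
      _ = K * C * (1 + |Q|) * T * l := by ring
  · calc _ ≤ K * T * (C * |ζ|⁻¹) := by
          gcongr
          exact high hζ
      _ = K * C * 1 * T / |ζ| := by ring
      _ ≤ K * C * (1 + |Q|) * T / |ζ| := by
          gcongr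
          exact le_add_of_nonneg_right (abs_nonneg Q)

theorem stmt15 (δ : ℝ) (hδ : 0 ≤ δ) (a : ℝ → ℂ) (ha : IsSymbol0 a)
    (β : ℝ → ℝ) (hβ : ContDiff ℝ (⊤ : ℕ∞) β)
    (hβs : Function.support β ⊆ Set.Icc (3 / 8) (4 / 3)) :
    ∃ ε₀ : ℝ, 0 < ε₀ ∧ ∀ ε : ℝ, 0 < ε → ε ≤ ε₀ →
      ∀ χ : ℝ → ℝ, ContDiff ℝ (⊤ : ℕ∞) χ → (∀ x, χ (-x) = χ x) →
        Function.support χ ⊆ Set.Icc (-ε) ε →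
        ∃ C c₀ C₀ : ℝ, 0 < C ∧ 0 < c₀ ∧ 0 < C₀ ∧
          ∀ (j : ℕ), 1 ≤ j → ∀ r₁ r₂ ζ : ℝ, 0 < r₁ → 0 < r₂ →
            (|ζ| ≤ c₀ * ((2 : ℝ) ^ (j : ℝ) * r₁ * r₂) ^ ((1 : ℝ) / 2) →
              ‖HtilFT δ a β χ j r₁ r₂ ζ‖ ≤
                C * (2 : ℝ) ^ (-(j : ℝ) * (3 / 2 + δ)) *
                  ((2 : ℝ) ^ (j : ℝ) * r₁ * r₂) ^ (-(1 : ℝ) / 2)) ∧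
            (C₀ * ((2 : ℝ) ^ (j : ℝ) * r₁ * r₂) ^ ((1 : ℝ) / 2) ≤ |ζ| →
              ‖HtilFT δ a β χ j r₁ r₂ ζ‖ ≤
                C * (2 : ℝ) ^ (-(j : ℝ) * (3 / 2 + δ)) / |ζ|) := by
  obtain ⟨M, haM⟩ := ha.2.1
  obtain ⟨N, hβN⟩ := hβ.continuous.bounded_above_of_compact_support
    (.of_support_subset_isCompact isCompact_Icc hβs)
  refine ⟨1, one_pos, fun ε _ _ χ hχ hχe hχs => ?_⟩
  obtain ⟨C, hC, bound⟩ := stmt15_general δ (by norm_num) haM hβN hβs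
    (hχ.of_le (by exact_mod_cast le_top)) hχe (.of_support_subset_isCompact isCompact_Icc hχs)
  refine ⟨C, 1, 1, hC, one_pos, one_pos, fun j _ r₁ r₂ ζ hr₁ hr₂ => ?_⟩
  obtain ⟨low, high⟩ := bound j r₁ r₂ ζ hr₁ hr₂
  have scale : 0 < 1 * ((2 : ℝ) ^ (j : ℝ) * r₁ * r₂) ^ ((1 : ℝ) / 2) := by positivity
  exact ⟨fun _ => low, fun h => high (abs_pos.1 (scale.trans_le h))⟩

end
end

section
/- Let n ≥ 1 be an integer and δ ≥ 0, and let K^δ(x) = ∫_{ℝⁿ} e^{i x·ξ} (1 − |ξ|²)₊^δ dξ be the kernel of the Bochner–Riesz mean of order δ for the Laplacian at λ = 1. Then there exist smooth functions a₁, a₂ : (0,∞) → ℂ and a constant C such that: (i) a₁ and a₂ are bounded and for every integer N ≥ 0 there is C_N with |a_i^{(N)}(r)| ≤ C_N r^{−N} for all r > 0 and i = 1,2; (ii) there exist c > 0 and R > 0 with |a_i(r)| ≥ c for all r ≥ R and i = 1,2; (iii) |K^δ(x) − a₁(|x|) e^{i|x|} (1+|x|)^{−(n+1)/2−δ} − a₂(|x|)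 e^{−i|x|} (1+|x|)^{−(n+1)/2−δ}| ≤ C (1+|x|)^{−n−1} for all x ∈ ℝⁿ∖{0}. -/
open MeasureTheory Real Set
open scoped RealInnerProductSpace

noncomputable section

/-- The kernel of the Bochner–Riesz mean of order `δ` at `λ = 1` on `ℝⁿ`:
`K^δ(x) = ∫_{ℝⁿ} e^{i x·ξ} (1 - |ξ|²)₊^δ dξ`. -/
def BRker (n : ℕ) (δ : ℝ) (x : EuclideanSpace ℝ (Fin n)) : ℂ :=
  ∫ ξ : EuclideanSpace ℝ (Fin n),
    Complex.exp (Complex.I * ((⟪x, ξ⟫ : ℝ) : ℂ)) *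
      (((if 0 ≤ 1 - ‖ξ‖ ^ 2 then (1 - ‖ξ‖ ^ 2) ^ δ else 0 : ℝ)) : ℂ)

/-!
Integrating over the hyperplanes orthogonal to `x`, on which the phase is constant, turns the
kernel on `ℝ^(m + 1)` into a positive multiple of Poisson's integral
`∫ e^{i|x|s} (1 - s²)^μ ds` over `[-1, 1]`, with `μ = δ + m / 2`. Push the segment `[-1, 1]` up to
`[-1, 1] + i`, where `e^{i|x|z}` has size `e^{-|x|}`. The two vertical sides of the rectangle, which
start at the branch points `±1`, contribute `e^{±i|x|}` times complex conjugate Laplace transforms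
`∫₀¹ t^μ e^{-|x|t} h(t) dt` with `h(0) ≠ 0`; these are symbols of exact order `-(μ + 1)`.
-/

open Filter Topology

section DerivativeFamily

variable {𝕜 F : Type*} [NontriviallyNormedField 𝕜] [NormedAddCommGroup F] [NormedSpace 𝕜 F]
  {s : Set 𝕜} {f : ℕ → 𝕜 → F}

lemma eqOn_iteratedDerivWithin_of_hasDerivWithinAt (hs : UniqueDiffOn 𝕜 s)
    (hf : ∀ k, ∀ x ∈ s, HasDerivWithinAt (f k) (f (k + 1) x) s x) (k : ℕ) :
    EqOn (iteratedDerivWithin k (f 0) s) (f k) s := by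
  induction k with
  | zero => exact fun x _ => by rw [iteratedDerivWithin_zero]
  | succ k ih =>
    intro x hx
    rw [iteratedDerivWithin_succ, derivWithin_congr ih (ih hx)]
    exact (hf k x hx).derivWithin (hs x hx)

lemma contDiffOn_of_forall_hasDerivWithinAt (hs : UniqueDiffOn 𝕜 s)
    (hf : ∀ k, ∀ x ∈ s, HasDerivWithinAt (f k) (f (k + 1) x) s x) :
    ContDiffOn 𝕜 (⊤ : ℕ∞) (f 0) s :=
  contDiffOn_of_differentiableOn_deriv fun k _ =>
    DifferentiableOn.congr (fun x hx => (hf k x hx).differentiableWithinAt)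
      (eqOn_iteratedDerivWithin_of_hasDerivWithinAt hs hf k)

end DerivativeFamily

section Symbol

variable {E F : Type*} [NormedAddCommGroup E] [NormedSpace ℝ E]
  [NormedAddCommGroup F] [NormedSpace ℝ F] {m m' : ℝ}

/-- Symbols of order `m` on the half-line: smooth functions on `(0, ∞)` whose `k`-th derivative is
`O((1 + r) ^ (m - k))`, uniformly down to `r = 0`. -/
def IsSymbol (m : ℝ) (f : ℝ → E) : Prop :=
  ContDiffOn ℝ (⊤ : ℕ∞) f (Ioi 0) ∧
    ∀ k : ℕ, ∃ C : ℝ, ∀ r > 0, ‖iteratedDerivWithin k f (Ioi 0) r‖ ≤ C * (1 + r) ^ (m - k)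

lemma IsSymbol.of_hasDerivAt {f : ℕ → ℝ → E}
    (hf : ∀ k, ∀ r > 0, HasDerivAt (f k) (f (k + 1) r) r)
    (hbound : ∀ k : ℕ, ∃ C : ℝ, ∀ r > 0, ‖f k r‖ ≤ C * (1 + r) ^ (m - k)) :
    IsSymbol m (f 0) := by
  have hf' : ∀ k, ∀ r ∈ Ioi (0 : ℝ), HasDerivWithinAt (f k) (f (k + 1) r) (Ioi 0) r :=
    fun k r hr => (hf k r hr).hasDerivWithinAt
  refine ⟨contDiffOn_of_forall_hasDerivWithinAt (uniqueDiffOn_Ioi 0) hf', fun k => ?_⟩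
  obtain ⟨C, hC⟩ := hbound k
  refine ⟨C, fun r hr => ?_⟩
  rw [eqOn_iteratedDerivWithin_of_hasDerivWithinAt (uniqueDiffOn_Ioi 0) hf' k hr]
  exact hC r hr

lemma IsSymbol.smul {f : ℝ → ℝ} {g : ℝ → E} (hf : IsSymbol m f) (hg : IsSymbol m' g) :
    IsSymbol (m + m') (fun r => f r • g r) := by
  refine ⟨hf.1.smul hg.1, fun k => ?_⟩
  choose Cf hCf using hf.2
  choose Cg hCg using hg.2
  refine ⟨∑ i ∈ Finset.range (k + 1), k.choose i * (Cf i * Cg (k - i)), fun r hr => ?_⟩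
  have leibniz := norm_iteratedFDerivWithin_smul_le hf.1 hg.1 (uniqueDiffOn_Ioi 0) hr
    (n := k) (by exact_mod_cast le_top)
  simp only [norm_iteratedFDerivWithin_eq_norm_iteratedDerivWithin] at leibniz
  refine leibniz.trans ?_
  rw [Finset.sum_mul]
  refine Finset.sum_le_sum fun i hi => ?_
  have hik : i ≤ k := Finset.mem_range_succ_iff.mp hi
  have hexp : (1 + r) ^ (m + m' - k) = (1 + r) ^ (m - i) * (1 + r) ^ (m' - (k - i : ℕ)) := by
    rw [← rpow_add (by positivity), Nat.cast_sub hik]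
    ring_nf
  rw [hexp, mul_assoc, mul_assoc, mul_mul_mul_comm]
  gcongr
  · exact (norm_nonneg _).trans (hCf i r hr)
  · exact hCf i r hr
  · exact hCg _ r hr

lemma IsSymbol.const_smul {f : ℝ → E} (hf : IsSymbol m f) (c : ℝ) :
    IsSymbol m (fun r => c • f r) := by
  refine ⟨hf.1.const_smul c, fun k => ?_⟩
  obtain ⟨C, hC⟩ := hf.2 k
  refine ⟨‖c‖ * C, fun r hr => ?_⟩
  rw [iteratedDerivWithin_fun_const_smul_field, norm_smul, mul_assoc]
  gcongr
  exact hC r hr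

lemma IsSymbol.comp_linearIsometryEquiv {f : ℝ → E} (hf : IsSymbol m f) (L : E ≃ₗᵢ[ℝ] F) :
    IsSymbol m (L ∘ f) := by
  refine ⟨L.contDiff.comp_contDiffOn hf.1, fun k => ?_⟩
  obtain ⟨C, hC⟩ := hf.2 k
  refine ⟨C, fun r hr => ?_⟩
  rw [← norm_iteratedFDerivWithin_eq_norm_iteratedDerivWithin,
    L.norm_iteratedFDerivWithin_comp_left f (uniqueDiffOn_Ioi 0) hr k,
    norm_iteratedFDerivWithin_eq_norm_iteratedDerivWithin]
  exact hC r hr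

lemma isSymbol_one_add_rpow (m : ℝ) : IsSymbol m (fun r => (1 + r) ^ m) := by
  have hderiv : ∀ k : ℕ, ∀ r > 0, HasDerivAt
      (fun r => (descPochhammer ℝ k).eval m * (1 + r) ^ (m - k))
      ((descPochhammer ℝ (k + 1)).eval m * (1 + r) ^ (m - (k + 1 : ℕ))) r := by
    intro k r hr
    have hpow := ((hasDerivAt_id r).const_add 1).rpow_const (p := m - k)
      (Or.inl (by simp only [id]; positivity))
    refine (hpow.const_mul _).congr_deriv ?_
    simp only [id, descPochhammer_succ_right, Polynomial.eval_mul, Polynomial.eval_sub,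
      Polynomial.eval_X, Polynomial.eval_natCast, Nat.cast_succ, ← sub_sub]
    ring
  have hbound : ∀ k : ℕ, ∃ C : ℝ, ∀ r > 0,
      ‖(descPochhammer ℝ k).eval m * (1 + r) ^ (m - k)‖ ≤ C * (1 + r) ^ (m - k) := by
    refine fun k => ⟨‖(descPochhammer ℝ k).eval m‖, fun r hr => le_of_eq ?_⟩
    rw [norm_mul, norm_of_nonneg (by positivity : 0 ≤ (1 + r) ^ (m - k))]
  simpa using IsSymbol.of_hasDerivAt hderiv hbound

lemma IsSymbol.exists_norm_iteratedDerivWithin_le {f : ℝ → E} (hf : IsSymbol 0 f) (k : ℕ) :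
    ∃ C : ℝ, ∀ r > 0, ‖iteratedDerivWithin k f (Ioi 0) r‖ ≤ C * r ^ (-(k : ℝ)) := by
  obtain ⟨C, hC⟩ := hf.2 k
  have hC0 : 0 ≤ C := nonneg_of_mul_nonneg_left ((norm_nonneg _).trans (hC 1 one_pos))
    (by positivity)
  refine ⟨C, fun r hr => (hC r hr).trans ?_⟩
  rw [zero_sub]
  gcongr ?_ * ?_
  exact rpow_le_rpow_of_nonpos hr (by linarith) (by simp)

end Symbol

lemma tendsto_intervalIntegral_atTop_of_dominated {E : Type*} [NormedAddCommGroup E]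
    [NormedSpace ℝ E] {F : ℝ → ℝ → E} {f : ℝ → E} {a : ℝ} (bound : ℝ → ℝ)
    (hmeas : ∀ r, AEStronglyMeasurable (F r) (volume.restrict (Ioc a r)))
    (hbound : ∀ r, ∀ u ∈ Ioc a r, ‖F r u‖ ≤ bound u) (hintegrable : IntegrableOn bound (Ioi a))
    (hlim : ∀ u > a, Tendsto (fun r => F r u) atTop (𝓝 (f u))) :
    Tendsto (fun r => ∫ u in a..r, F r u) atTop (𝓝 (∫ u in Ioi a, f u)) := by
  have hbound_nonneg : ∀ u > a, 0 ≤ bound u := fun u hu =>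
    (norm_nonneg _).trans (hbound u u ⟨hu, le_rfl⟩)
  have hmeas' : ∀ r, AEStronglyMeasurable ((Ioc a r).indicator (F r))
      (volume.restrict (Ioi a)) := by
    intro r
    rw [aestronglyMeasurable_indicator_iff measurableSet_Ioc,
      Measure.restrict_restrict_of_subset Ioc_subset_Ioi_self]
    exact hmeas r
  have hbound' : ∀ r, ∀ u ∈ Ioi a, ‖(Ioc a r).indicator (F r) u‖ ≤ bound u := by
    intro r u hu
    by_cases hur : u ∈ Ioc a r
    · simpa only [indicator_of_mem hur] using hbound r u hur
    · simpa only [indicator_of_notMem hur, norm_zero] using hbound_nonneg u hu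
  have hlim' : ∀ u ∈ Ioi a,
      Tendsto (fun r => (Ioc a r).indicator (F r) u) atTop (𝓝 (f u)) := by
    intro u hu
    refine (hlim u hu).congr' ?_
    filter_upwards [eventually_ge_atTop u] with r hr
    rw [indicator_of_mem (show u ∈ Ioc a r from ⟨hu, hr⟩)]
  refine (tendsto_integral_filter_of_dominated_convergence bound (.of_forall hmeas')
    (.of_forall fun r => ae_restrict_of_forall_mem measurableSet_Ioi (hbound' r)) hintegrable
    (ae_restrict_of_forall_mem measurableSet_Ioi hlim')).congr' ?_
  filter_upwards [eventually_ge_atTop a] with r hr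
  rw [integral_indicator measurableSet_Ioc,
    Measure.restrict_restrict_of_subset Ioc_subset_Ioi_self, intervalIntegral.integral_of_le hr]

section TruncatedLaplace

variable {E : Type*} [NormedAddCommGroup E] [NormedSpace ℝ E] {s : ℝ} {h : ℝ → E}

/-- The Laplace transform of `t ^ s • h t` truncated to the unit interval; as `r → ∞` it only sees
the behaviour of `h` near `0`. -/
def truncLaplace (s : ℝ) (h : ℝ → E) (r : ℝ) : E :=
  ∫ t in (0 : ℝ)..1, (t ^ s * rexp (-(r * t))) • h t

lemma intervalIntegrable_rpow_mul_exp (hs : -1 < s) (r a b : ℝ) :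
    IntervalIntegrable (fun t => t ^ s * rexp (-(r * t))) volume a b :=
  (intervalIntegral.intervalIntegrable_rpow' hs).mul_continuousOn (by fun_prop)

lemma intervalIntegrable_rpow_mul_exp_smul (hs : -1 < s) (hh : ContinuousOn h (Icc 0 1)) (r : ℝ) :
    IntervalIntegrable (fun t => (t ^ s * rexp (-(r * t))) • h t) volume 0 1 :=
  (intervalIntegrable_rpow_mul_exp hs r 0 1).smul_continuousOn
    (by rwa [uIcc_of_le zero_le_one])

lemma integral_Ioi_rpow_mul_exp (hs : -1 < s) {r : ℝ} (hr : 0 < r) :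
    ∫ t in Ioi (0 : ℝ), t ^ s * rexp (-(r * t)) = Gamma (s + 1) * r ^ (-s - 1) := by
  have hGamma := integral_rpow_mul_exp_neg_mul_Ioi (a := s + 1) (by linarith) hr
  rwa [add_sub_cancel_right, one_div, inv_rpow hr.le, ← rpow_neg hr.le, neg_add',
    mul_comm] at hGamma

lemma integrableOn_Ioi_rpow_mul_exp (hs : -1 < s) {r : ℝ} (hr : 0 < r) :
    IntegrableOn (fun t => t ^ s * rexp (-(r * t))) (Ioi 0) := by
  simpa only [rpow_one, neg_mul] using integrableOn_rpow_mul_exp_neg_mul_rpow hs one_pos hr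

-- On `[0, 1]` one has `exp (-(r * t)) ≤ exp 1 * exp (-((1 + r) * t))`; the shift `r ↦ 1 + r` makes
-- the bound uniform down to `r = 0`.
lemma integral_rpow_mul_exp_le (hs : -1 < s) {r : ℝ} (hr : -1 < r) :
    ∫ t in (0 : ℝ)..1, t ^ s * rexp (-(r * t)) ≤
      rexp 1 * Gamma (s + 1) * (1 + r) ^ (-s - 1) := by
  have hr' : 0 < 1 + r := by linarith
  have hshift : ∀ t ∈ Icc (0 : ℝ) 1, t ^ s * rexp (-(r * t)) ≤
      rexp 1 * (t ^ s * rexp (-((1 + r) * t))) := by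
    intro t ht
    rw [mul_left_comm, ← exp_add]
    gcongr
    · exact rpow_nonneg ht.1 s
    · linarith [ht.2]
  calc ∫ t in (0 : ℝ)..1, t ^ s * rexp (-(r * t))
      ≤ ∫ t in (0 : ℝ)..1, rexp 1 * (t ^ s * rexp (-((1 + r) * t))) :=
        intervalIntegral.integral_mono_on zero_le_one (intervalIntegrable_rpow_mul_exp hs r 0 1)
          ((intervalIntegrable_rpow_mul_exp hs (1 + r) 0 1).const_mul _) hshift
    _ = rexp 1 * ∫ t in Ioc (0 : ℝ) 1, t ^ s * rexp (-((1 + r) * t)) := by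
        rw [intervalIntegral.integral_const_mul, intervalIntegral.integral_of_le zero_le_one]
    _ ≤ rexp 1 * ∫ t in Ioi (0 : ℝ), t ^ s * rexp (-((1 + r) * t)) := by
        refine mul_le_mul_of_nonneg_left (setIntegral_mono_set
          (integrableOn_Ioi_rpow_mul_exp hs hr') ?_ Ioc_subset_Ioi_self.eventuallyLE)
          (exp_nonneg 1)
        filter_upwards [ae_restrict_mem measurableSet_Ioi] with t ht
        exact mul_nonneg (rpow_nonneg (mem_Ioi.mp ht).le s) (exp_nonneg _)
    _ = rexp 1 * Gamma (s + 1) * (1 + r) ^ (-s - 1) := by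
        rw [integral_Ioi_rpow_mul_exp hs hr', mul_assoc]

lemma exists_norm_truncLaplace_le (hs : -1 < s) (hh : ContinuousOn h (Icc 0 1)) :
    ∃ C : ℝ, ∀ r > 0, ‖truncLaplace s h r‖ ≤ C * (1 + r) ^ (-s - 1) := by
  obtain ⟨B, hB⟩ := isCompact_Icc.exists_bound_of_continuousOn hh
  have hB0 : 0 ≤ B := (norm_nonneg _).trans (hB 0 (by simp))
  refine ⟨B * (rexp 1 * Gamma (s + 1)), fun r hr => ?_⟩
  calc ‖truncLaplace s h r‖
      ≤ ∫ t in (0 : ℝ)..1, B * (t ^ s * rexp (-(r * t))) := by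
        refine intervalIntegral.norm_integral_le_of_norm_le zero_le_one (.of_forall fun t ht => ?_)
          ((intervalIntegrable_rpow_mul_exp hs r 0 1).const_mul B)
        have hweight : 0 ≤ t ^ s * rexp (-(r * t)) :=
          mul_nonneg (rpow_nonneg ht.1.le s) (exp_nonneg _)
        rw [norm_smul, norm_of_nonneg hweight, mul_comm]
        gcongr
        exact hB t (Ioc_subset_Icc_self ht)
    _ ≤ B * (rexp 1 * Gamma (s + 1)) * (1 + r) ^ (-s - 1) := by
        rw [intervalIntegral.integral_const_mul, mul_assoc]
        gcongr
        exact integral_rpow_mul_exp_le hs (by linarith)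

lemma hasDerivAt_truncLaplace (hs : -1 < s) (hh : ContinuousOn h (Icc 0 1)) (r : ℝ) :
    HasDerivAt (truncLaplace s h) (-truncLaplace (s + 1) h r) r := by
  have hs' : -1 < s + 1 := by linarith
  have hintegrable := fun ρ => intervalIntegrable_rpow_mul_exp_smul (E := E) hs hh ρ
  have hintegrable' := fun ρ => intervalIntegrable_rpow_mul_exp_smul (E := E) hs' hh ρ
  have hderiv : ∀ t ∈ uIoc (0 : ℝ) 1, ∀ ρ : ℝ,
      HasDerivAt (fun ρ => (t ^ s * rexp (-(ρ * t))) • h t)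
        (-((t ^ (s + 1) * rexp (-(ρ * t))) • h t)) ρ := by
    intro t ht ρ
    rw [uIoc_of_le zero_le_one] at ht
    have hexp : HasDerivAt (fun ρ => rexp (-(ρ * t))) (rexp (-(ρ * t)) * -t) ρ :=
      (hasDerivAt_mul_const t).fun_neg.exp
    refine ((hexp.const_mul (t ^ s)).smul_const (h t)).congr_deriv ?_
    rw [rpow_add_one ht.1.ne', ← neg_smul]
    ring_nf
  have hdom : ∀ t ∈ uIoc (0 : ℝ) 1, ∀ ρ ∈ Ioi (r - 1),
      ‖-((t ^ (s + 1) * rexp (-(ρ * t))) • h t)‖ ≤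
        ‖(t ^ (s + 1) * rexp (-((r - 1) * t))) • h t‖ := by
    intro t ht ρ hρ
    rw [uIoc_of_le zero_le_one] at ht
    have ht0 := ht.1.le
    simp only [norm_neg, norm_smul, norm_mul, norm_of_nonneg (exp_nonneg _)]
    gcongr
    exact (mem_Ioi.mp hρ).le
  have main := intervalIntegral.hasDerivAt_integral_of_dominated_loc_of_deriv_le
    (Ioi_mem_nhds (sub_one_lt r))
    (.of_forall fun ρ => (hintegrable ρ).aestronglyMeasurable_restrict_uIoc) (hintegrable r)
    (hintegrable' r).neg.aestronglyMeasurable_restrict_uIoc (.of_forall hdom)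
    (hintegrable' (r - 1)).norm
    (.of_forall fun t ht ρ _ => hderiv t ht ρ)
  exact main.2.congr_deriv intervalIntegral.integral_neg

lemma isSymbol_truncLaplace (hs : -1 < s) (hh : ContinuousOn h (Icc 0 1)) :
    IsSymbol (-s - 1) (truncLaplace s h) := by
  have hs' : ∀ k : ℕ, -1 < s + k := fun k => by linarith [k.cast_nonneg (α := ℝ)]
  have hderiv : ∀ k : ℕ, ∀ r > 0,
      HasDerivAt ((-1 : ℝ) ^ k • truncLaplace (s + k) h)
        (((-1 : ℝ) ^ (k + 1) • truncLaplace (s + (k + 1 : ℕ)) h) r) r := by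
    intro k r _
    refine ((hasDerivAt_truncLaplace (hs' k) hh r).const_smul _).congr_deriv ?_
    rw [Pi.smul_apply, pow_succ, mul_neg_one, neg_smul, smul_neg, Nat.cast_succ, add_assoc]
  have hbound : ∀ k : ℕ, ∃ C : ℝ, ∀ r > 0,
      ‖((-1 : ℝ) ^ k • truncLaplace (s + k) h) r‖ ≤ C * (1 + r) ^ (-s - 1 - k) := by
    intro k
    obtain ⟨C, hC⟩ := exists_norm_truncLaplace_le (hs' k) hh
    refine ⟨C, fun r hr => ?_⟩
    rw [Pi.smul_apply, norm_smul, norm_pow, norm_neg, norm_one, one_pow, one_mul,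
      show -s - 1 - k = -(s + k) - 1 by ring]
    exact hC r hr
  simpa using IsSymbol.of_hasDerivAt hderiv hbound

lemma rpow_smul_truncLaplace (s : ℝ) (h : ℝ → E) {r : ℝ} (hr : 0 < r) :
    r ^ (s + 1) • truncLaplace s h r = ∫ u in (0 : ℝ)..r, (u ^ s * rexp (-u)) • h (u / r) := by
  have hscale : ∀ t ∈ uIcc (0 : ℝ) 1, (t ^ s * rexp (-(r * t))) • h t =
      r ^ (-s) • (((r * t) ^ s * rexp (-(r * t))) • h (r * t / r)) := by
    intro t ht
    rw [uIcc_of_le zero_le_one] at ht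
    rw [mul_div_cancel_left₀ t hr.ne', mul_rpow hr.le ht.1, smul_smul, mul_assoc, ← mul_assoc,
      ← rpow_add hr, neg_add_cancel, rpow_zero, one_mul]
  have hpow : r ^ (s + 1) * r ^ (-s) * r⁻¹ = 1 := by
    rw [← rpow_neg_one, ← rpow_add hr, ← rpow_add hr]
    ring_nf
    exact rpow_zero r
  rw [truncLaplace, intervalIntegral.integral_congr hscale, intervalIntegral.integral_smul,
    intervalIntegral.integral_comp_mul_left (fun u => (u ^ s * rexp (-u)) • h (u / r)) hr.ne',
    smul_smul, smul_smul, hpow, one_smul, mul_zero, mul_one]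

variable [CompleteSpace E]

lemma tendsto_integral_rpow_mul_exp_smul_comp_div (hs : -1 < s) (hh : ContinuousOn h (Icc 0 1)) :
    Tendsto (fun r => ∫ u in (0 : ℝ)..r, (u ^ s * rexp (-u)) • h (u / r)) atTop
      (𝓝 (Gamma (s + 1) • h 0)) := by
  obtain ⟨B, hB⟩ := isCompact_Icc.exists_bound_of_continuousOn hh
  have hweight : IntegrableOn (fun u => u ^ s * rexp (-u)) (Ioi 0) := by
    simpa only [one_mul] using integrableOn_Ioi_rpow_mul_exp hs one_pos
  have hdiv : ∀ {u r : ℝ}, u ∈ Ioc 0 r → u / r ∈ Icc (0 : ℝ) 1 := fun hu =>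
    ⟨div_nonneg hu.1.le (hu.1.le.trans hu.2), div_le_one_of_le₀ hu.2 (hu.1.le.trans hu.2)⟩
  have hGamma : ∫ u in Ioi (0 : ℝ), (u ^ s * rexp (-u)) • h 0 = Gamma (s + 1) • h 0 := by
    rw [integral_smul_const]
    simpa using congrArg (· • h 0) (integral_Ioi_rpow_mul_exp hs one_pos)
  rw [← hGamma]
  refine tendsto_intervalIntegral_atTop_of_dominated (fun u => u ^ s * rexp (-u) * B)
    (fun r => ?_) (fun r u hu => ?_) (hweight.mul_const B) fun u hu => ?_
  · exact (hweight.mono_set Ioc_subset_Ioi_self).aestronglyMeasurable.smul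
      ((hh.comp (by fun_prop) fun u hu => hdiv hu).aestronglyMeasurable measurableSet_Ioc)
  · have hnonneg : 0 ≤ u ^ s * rexp (-u) := mul_nonneg (rpow_nonneg hu.1.le s) (exp_nonneg _)
    rw [norm_smul, norm_of_nonneg hnonneg]
    gcongr
    exact hB _ (hdiv hu)
  · have hdiv0 : Tendsto (fun r => u / r) atTop (𝓝[Icc 0 1] 0) :=
      tendsto_nhdsWithin_iff.mpr ⟨tendsto_const_nhds.div_atTop tendsto_id,
        (eventually_ge_atTop u).mono fun r hr => hdiv ⟨hu, hr⟩⟩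
    exact ((hh 0 (by simp)).tendsto.comp hdiv0).const_smul _

lemma tendsto_one_add_rpow_smul_truncLaplace (hs : -1 < s) (hh : ContinuousOn h (Icc 0 1)) :
    Tendsto (fun r => (1 + r) ^ (s + 1) • truncLaplace s h r) atTop (𝓝 (Gamma (s + 1) • h 0)) := by
  have hratio : Tendsto (fun r : ℝ => (r⁻¹ + 1) ^ (s + 1)) atTop (𝓝 1) := by
    have hbase : Tendsto (fun r : ℝ => r⁻¹ + 1) atTop (𝓝 1) := by
      simpa using tendsto_inv_atTop_zero.add_const (1 : ℝ)
    simpa using hbase.rpow_const (p := s + 1) (Or.inl one_ne_zero)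
  have hlim := hratio.smul (tendsto_integral_rpow_mul_exp_smul_comp_div hs hh)
  rw [one_smul] at hlim
  refine hlim.congr' ?_
  filter_upwards [eventually_gt_atTop 0] with r hr
  rw [← rpow_smul_truncLaplace s h hr, smul_smul, ← mul_rpow (by positivity) hr.le, add_mul,
    inv_mul_cancel₀ hr.ne', one_mul]

end TruncatedLaplace

lemma ofReal_mul_cpow_s16 {t : ℝ} (ht : 0 ≤ t) (z a : ℂ) :
    ((t : ℂ) * z) ^ a = (t : ℂ) ^ a * z ^ a := by
  obtain rfl | ha := eq_or_ne a 0
  · simp only [Complex.cpow_zero, mul_one]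
  obtain rfl | ht := ht.eq_or_lt
  · simp [ha]
  obtain rfl | hz := eq_or_ne z 0
  · simp [ha]
  have ht' : (t : ℂ) ≠ 0 := mod_cast ht.ne'
  rw [Complex.cpow_def_of_ne_zero (mul_ne_zero ht' hz), Complex.cpow_def_of_ne_zero ht',
    Complex.cpow_def_of_ne_zero hz, Complex.log_ofReal_mul ht hz, ← Complex.exp_add, add_mul,
    Complex.ofReal_log ht.le]

section ContourShift

open Complex (I)
open scoped ComplexConjugate

variable {μ : ℝ}

/-- The integrand `e^{irz} (1 - z²)^μ` of Poisson's integral for the Bessel function of order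
`μ + 1/2`, continued to complex `z`. -/
def poissonIntegrand (μ r : ℝ) (z : ℂ) : ℂ :=
  Complex.exp (I * (r * z)) * (1 - z ^ 2) ^ (μ : ℂ)

lemma one_sub_sq_re (z : ℂ) : (1 - z ^ 2).re = 1 - z.re ^ 2 + z.im ^ 2 := by
  simp only [Complex.sub_re, Complex.one_re, pow_two, Complex.mul_re]
  ring

lemma continuousOn_cpow_re_nonneg (hμ : 0 ≤ μ) :
    ContinuousOn (fun z : ℂ => z ^ (μ : ℂ)) {z | 0 ≤ z.re} := by
  rcases hμ.eq_or_lt with rfl | hμ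
  · simpa using continuousOn_const
  · exact fun z hz => (Complex.continuousAt_cpow_const_of_re_pos (Or.inl hz)
      (by simpa using hμ)).continuousWithinAt

lemma one_sub_sq_re_nonneg {z : ℂ} (hz : |z.re| ≤ 1) : 0 ≤ (1 - z ^ 2).re := by
  rw [one_sub_sq_re]
  linarith [(sq_le_one_iff_abs_le_one z.re).mpr hz, sq_nonneg z.im]

lemma continuousOn_poissonIntegrand (hμ : 0 ≤ μ) (r : ℝ) :
    ContinuousOn (poissonIntegrand μ r) {z | |z.re| ≤ 1} :=
  ContinuousOn.mul (by fun_prop)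
    ((continuousOn_cpow_re_nonneg hμ).comp (by fun_prop) fun _ => one_sub_sq_re_nonneg)

lemma differentiableAt_poissonIntegrand (μ r : ℝ) {z : ℂ} (hz : |z.re| < 1) :
    DifferentiableAt ℂ (poissonIntegrand μ r) z := by
  have hslit : 1 - z ^ 2 ∈ Complex.slitPlane := by
    left
    rw [one_sub_sq_re]
    linarith [(sq_lt_one_iff_abs_lt_one z.re).mpr hz, sq_nonneg z.im]
  have hpow : DifferentiableAt ℂ (fun z : ℂ => 1 - z ^ 2) z := by fun_prop
  exact DifferentiableAt.mul (by fun_prop) (hpow.cpow_const hslit)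

lemma poissonIntegrand_neg_conj (μ r : ℝ) {z : ℂ} (hz : |z.re| ≤ 1) :
    poissonIntegrand μ r (-conj z) = conj (poissonIntegrand μ r z) := by
  have harg : (1 - z ^ 2).arg ≠ π := fun h => by
    have := (Complex.arg_eq_pi_iff.mp h).1
    linarith [one_sub_sq_re_nonneg hz]
  have hpow := Complex.conj_cpow (1 - z ^ 2) μ harg
  rw [Complex.conj_ofReal, map_sub, map_one, map_pow] at hpow
  simp only [poissonIntegrand, map_mul, ← Complex.exp_conj, hpow,
    Complex.conj_I, Complex.conj_ofReal, neg_sq, neg_mul, mul_neg]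

lemma norm_poissonIntegrand (μ r : ℝ) (z : ℂ) :
    ‖poissonIntegrand μ r z‖ = rexp (-(r * z.im)) * ‖poissonIntegrand μ 0 z‖ := by
  simp [poissonIntegrand, Complex.norm_exp]

lemma norm_integral_poissonIntegrand_add_I_le (μ r : ℝ) :
    ‖∫ x : ℝ in (-1)..1, poissonIntegrand μ r (x + I)‖ ≤
      (∫ x : ℝ in (-1)..1, ‖poissonIntegrand μ 0 (x + I)‖) * rexp (-r) := by
  refine (intervalIntegral.norm_integral_le_integral_norm (by norm_num)).trans_eq ?_
  rw [← intervalIntegral.integral_mul_const]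
  refine intervalIntegral.integral_congr fun x _ => ?_
  simpa [mul_comm] using norm_poissonIntegrand μ r (x + I)

/-- The profile `t ↦ -i (t - 2i)^μ` of `-i (1 - z²)^μ` along the ray `z = 1 + it`, after removing
the factor `t ^ μ` by which it vanishes at the branch point `z = 1`. -/
def edgeProfile (μ t : ℝ) : ℂ := -I * (t - 2 * I) ^ (μ : ℂ)

lemma continuous_edgeProfile (μ : ℝ) : Continuous (edgeProfile μ) := by
  refine continuous_const.mul ((by fun_prop : Continuous fun t : ℝ => (t - 2 * I : ℂ)).cpow
    continuous_const fun t => ?_)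
  right
  simp

lemma integral_poissonIntegrand_one_add (μ r : ℝ) :
    -I * ∫ t : ℝ in (0)..1, poissonIntegrand μ r (1 + t * I) =
      Complex.exp (I * r) * truncLaplace μ (edgeProfile μ) r := by
  rw [truncLaplace, ← intervalIntegral.integral_const_mul, ← intervalIntegral.integral_const_mul]
  refine intervalIntegral.integral_congr fun t ht => ?_
  rw [uIcc_of_le zero_le_one] at ht
  have hsq : 1 - (1 + t * I) ^ 2 = t * (t - 2 * I) := by
    linear_combination (-(t : ℂ) ^ 2) * Complex.I_sq
  have hphase : I * (r * (1 + t * I)) = I * r + ((-(r * t) : ℝ) : ℂ) := by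
    push_cast
    linear_combination (r * t : ℂ) * Complex.I_sq
  simp only [poissonIntegrand, edgeProfile]
  rw [hsq, hphase, ofReal_mul_cpow_s16 ht.1, Complex.exp_add, Complex.real_smul, Complex.ofReal_mul,
    Complex.ofReal_exp, Complex.ofReal_cpow ht.1]
  ring

lemma integral_poissonIntegrand_neg_one_add (μ r : ℝ) :
    ∫ t : ℝ in (0)..1, poissonIntegrand μ r (-1 + t * I) =
      conj (∫ t : ℝ in (0)..1, poissonIntegrand μ r (1 + t * I)) := by
  rw [← intervalIntegral.intervalIntegral_conj]
  refine intervalIntegral.integral_congr fun t _ => ?_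
  rw [← poissonIntegrand_neg_conj μ r (by simp)]
  simp [add_comm]

lemma integral_poissonIntegrand_eq_contour (hμ : 0 ≤ μ) (r : ℝ) :
    ∫ x : ℝ in (-1)..1, poissonIntegrand μ r x =
      (∫ x : ℝ in (-1)..1, poissonIntegrand μ r (x + I)) +
        (-I * ∫ t : ℝ in (0)..1, poissonIntegrand μ r (1 + t * I)) +
        conj (-I * ∫ t : ℝ in (0)..1, poissonIntegrand μ r (1 + t * I)) := by
  have hcauchy := Complex.integral_boundary_rect_eq_zero_of_continuousOn_of_differentiableOn
    (poissonIntegrand μ r) (-1) (1 + I)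
    ((continuousOn_poissonIntegrand hμ r).mono fun z hz => ?_)
    fun z hz => (differentiableAt_poissonIntegrand μ r ?_).differentiableWithinAt
  · simp only [Complex.neg_re, Complex.one_re, Complex.add_re, Complex.I_re, Complex.neg_im,
      Complex.one_im, Complex.add_im, Complex.I_im, add_zero, neg_zero, zero_add, smul_eq_mul,
      Complex.ofReal_zero, Complex.ofReal_one, Complex.ofReal_neg, zero_mul, one_mul,
      integral_poissonIntegrand_neg_one_add] at hcauchy
    rw [map_mul, map_neg, Complex.conj_I]
    linear_combination hcauchy
  · simpa [abs_le] using hz.1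
  · simpa [abs_lt] using hz.1

/-- The amplitude of the oscillation `e^{ir}` in Poisson's integral, normalised by its expected
decay `(1 + r)^{-(μ + 1)}`. -/
def poissonAmplitude (μ r : ℝ) : ℂ :=
  (1 + r) ^ (μ + 1) • truncLaplace μ (edgeProfile μ) r

lemma isSymbol_poissonAmplitude (hμ : -1 < μ) : IsSymbol 0 (poissonAmplitude μ) := by
  have h := (isSymbol_one_add_rpow (μ + 1)).smul
    (isSymbol_truncLaplace hμ (continuous_edgeProfile μ).continuousOn)
  rwa [show μ + 1 + (-μ - 1) = 0 by ring] at h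

lemma exists_tendsto_poissonAmplitude (hμ : -1 < μ) :
    ∃ l ≠ 0, Tendsto (poissonAmplitude μ) atTop (𝓝 l) := by
  refine ⟨Gamma (μ + 1) • edgeProfile μ 0, smul_ne_zero (Gamma_pos_of_pos (by linarith)).ne' ?_,
    tendsto_one_add_rpow_smul_truncLaplace hμ (continuous_edgeProfile μ).continuousOn⟩
  simp [edgeProfile, Complex.cpow_eq_zero_iff]

lemma integral_poissonIntegrand_eq (hμ : 0 ≤ μ) {r : ℝ} (hr : 0 ≤ r) :
    ∫ x : ℝ in (-1)..1, poissonIntegrand μ r x =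
      (∫ x : ℝ in (-1)..1, poissonIntegrand μ r (x + I)) +
        poissonAmplitude μ r * Complex.exp (I * r) * ((1 + r) ^ (-(μ + 1)) : ℝ) +
        conj (poissonAmplitude μ r) * Complex.exp (-I * r) * ((1 + r) ^ (-(μ + 1)) : ℝ) := by
  have hnorm : truncLaplace μ (edgeProfile μ) r =
      ((1 + r) ^ (-(μ + 1)) : ℝ) * poissonAmplitude μ r := by
    rw [poissonAmplitude, ← Complex.real_smul, smul_smul, ← rpow_add (by positivity),
      neg_add_cancel, rpow_zero, one_smul]
  rw [integral_poissonIntegrand_eq_contour hμ, integral_poissonIntegrand_one_add, hnorm]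
  simp only [map_mul, ← Complex.exp_conj, Complex.conj_I, Complex.conj_ofReal]
  ring

end ContourShift

section TruncatedPower

variable {F : Type*} [NormedAddCommGroup F] {δ : ℝ}

/-- The truncated power `u₊ ^ δ`, with value `0 ^ δ` (not `0`) at `u = 0`. -/
def truncPow (δ u : ℝ) : ℝ := if 0 ≤ u then u ^ δ else 0

lemma truncPow_of_nonneg (δ : ℝ) {u : ℝ} (hu : 0 ≤ u) : truncPow δ u = u ^ δ := if_pos hu

lemma truncPow_of_neg (δ : ℝ) {u : ℝ} (hu : u < 0) : truncPow δ u = 0 := if_neg hu.not_ge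

lemma truncPow_nonneg (δ u : ℝ) : 0 ≤ truncPow δ u := by
  unfold truncPow
  split_ifs with hu
  exacts [rpow_nonneg hu δ, le_rfl]

lemma measurable_truncPow (δ : ℝ) : Measurable (truncPow δ) :=
  Measurable.ite measurableSet_Ici (measurable_id.pow_const δ) measurable_const

lemma truncPow_mul (δ : ℝ) {c : ℝ} (hc : 0 < c) (u : ℝ) :
    truncPow δ (c * u) = c ^ δ * truncPow δ u := by
  simp only [truncPow, mul_nonneg_iff_of_pos_left hc]
  split_ifs with hu
  exacts [mul_rpow hc.le hu, (mul_zero _).symm]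

lemma integral_truncPow_sub_norm_sq_of_neg [MeasurableSpace F] (ν : Measure F) (δ : ℝ)
    {u : ℝ} (hu : u < 0) :
    ∫ η, truncPow δ (u - ‖η‖ ^ 2) ∂ν = 0 := by
  have hzero : ∀ η : F, truncPow δ (u - ‖η‖ ^ 2) = 0 := fun η =>
    truncPow_of_neg δ (by linarith [sq_nonneg ‖η‖])
  simp only [hzero, integral_zero]

variable [MeasurableSpace F] [NormedSpace ℝ F] [FiniteDimensional ℝ F] [BorelSpace F]
  (ν : Measure F) [ν.IsAddHaarMeasure]

lemma integrable_truncPow_one_sub_norm_sq (hδ : 0 ≤ δ) :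
    Integrable (fun η => truncPow δ (1 - ‖η‖ ^ 2)) ν := by
  have hball : Integrable ((Metric.closedBall (0 : F) 1).indicator (1 : F → ℝ)) ν :=
    (integrable_indicator_iff measurableSet_closedBall).mpr
      (integrableOn_const measure_closedBall_lt_top.ne)
  refine hball.mono' ((measurable_truncPow δ).comp (by fun_prop)).aestronglyMeasurable
    (.of_forall fun η => ?_)
  rw [norm_of_nonneg (truncPow_nonneg _ _)]
  rcases le_or_gt 0 (1 - ‖η‖ ^ 2) with hη | hη
  · have hmem : η ∈ Metric.closedBall (0 : F) 1 :=
      mem_closedBall_zero_iff.mpr ((sq_le_one_iff₀ (norm_nonneg η)).mp (by linarith))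
    rw [truncPow_of_nonneg δ hη, indicator_of_mem hmem]
    exact rpow_le_one hη (by linarith [sq_nonneg ‖η‖]) hδ
  · rw [truncPow_of_neg δ hη]
    exact indicator_nonneg (fun _ _ => zero_le_one) η

/-- The moment `∫ (1 - |η|²)₊ ^ δ dν(η)` over the unit ball. -/
def ballMoment (δ : ℝ) : ℝ := ∫ η, truncPow δ (1 - ‖η‖ ^ 2) ∂ν

lemma ballMoment_pos (hδ : 0 ≤ δ) : 0 < ballMoment ν δ := by
  refine (integral_pos_iff_support_of_nonneg (fun η => truncPow_nonneg _ _)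
    (integrable_truncPow_one_sub_norm_sq ν hδ)).mpr
    ((Metric.measure_ball_pos ν 0 one_pos).trans_le (measure_mono fun η hη => ?_))
  have hη' : 0 < 1 - ‖η‖ ^ 2 :=
    sub_pos.mpr ((sq_lt_one_iff₀ (norm_nonneg η)).mpr (mem_ball_zero_iff.mp hη))
  rw [Function.mem_support, truncPow_of_nonneg δ hη'.le]
  exact (rpow_pos_of_pos hη' δ).ne'

lemma integral_truncPow_sub_norm_sq (δ : ℝ) {u : ℝ} (hu : 0 < u) :
    ∫ η, truncPow δ (u - ‖η‖ ^ 2) ∂ν =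
      u ^ (δ + Module.finrank ℝ F / 2) * ballMoment ν δ := by
  have hscale : ∀ η : F, truncPow δ (u - ‖η‖ ^ 2) =
      u ^ δ * truncPow δ (1 - ‖(√u)⁻¹ • η‖ ^ 2) := by
    intro η
    rw [← truncPow_mul δ hu, norm_smul, norm_inv, norm_of_nonneg (sqrt_nonneg u), mul_pow, inv_pow,
      sq_sqrt hu.le, mul_sub, mul_one, mul_inv_cancel_left₀ hu.ne']
  have hjacobian : √u ^ Module.finrank ℝ F = u ^ (Module.finrank ℝ F / 2 : ℝ) := by
    rw [sqrt_eq_rpow, ← rpow_natCast, ← rpow_mul hu.le, one_div_mul_eq_div]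
  simp only [hscale]
  rw [integral_const_mul, Measure.integral_comp_inv_smul_of_nonneg ν
    (fun η => truncPow δ (1 - ‖η‖ ^ 2)) (sqrt_nonneg u), hjacobian, rpow_add hu, smul_eq_mul,
    mul_assoc, ballMoment]

end TruncatedPower

section Slicing

open Complex (I)

variable {V G : Type*} [NormedAddCommGroup V] [InnerProductSpace ℝ V]
  [NormedAddCommGroup G] [InnerProductSpace ℝ G] [FiniteDimensional ℝ G]
  [MeasurableSpace G] [BorelSpace G]

lemma integral_exp_inner_mul_truncPow_slice (δ r : ℝ) {e : V} (he : ‖e‖ = 1)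
    (U : G ≃ₗᵢ[ℝ] (ℝ ∙ e)ᗮ) {s : ℝ} (hs : s ≠ 1) (hs' : s ≠ -1) :
    ∫ η : G, Complex.exp (I * (⟪r • e, s • e + U η⟫ : ℝ)) *
        (truncPow δ (1 - ‖s • e + (U η : V)‖ ^ 2) : ℂ) =
      (Ioc (-1) 1).indicator (fun s : ℝ => (ballMoment (volume : Measure G) δ : ℂ) *
        poissonIntegrand (δ + Module.finrank ℝ G / 2) r s) s := by
  have horth : ∀ η : G, ⟪e, (U η : V)⟫ = 0 := fun η =>
    Submodule.mem_orthogonal_singleton_iff_inner_right.mp (U η).2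
  have hinner : ∀ η : G, ⟪r • e, s • e + U η⟫ = r * s := fun η => by
    rw [real_inner_smul_left, inner_add_right, real_inner_smul_right,
      real_inner_self_eq_norm_sq, he, horth]
    ring
  have hnorm : ∀ η : G, 1 - ‖s • e + (U η : V)‖ ^ 2 = 1 - s ^ 2 - ‖η‖ ^ 2 := fun η => by
    have hU : ‖(U η : V)‖ = ‖η‖ := U.norm_map η
    rw [norm_add_sq_real, real_inner_smul_left, horth, norm_smul, he, hU, mul_one, norm_eq_abs,
      sq_abs]
    ring
  simp only [hinner, hnorm]
  rw [integral_const_mul, integral_complex_ofReal]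
  by_cases hmem : s ∈ Ioc (-1) 1
  · have hpos : 0 < 1 - s ^ 2 := by nlinarith [hmem.1, lt_of_le_of_ne hmem.2 hs]
    rw [indicator_of_mem hmem, integral_truncPow_sub_norm_sq volume δ hpos, poissonIntegrand]
    push_cast [Complex.ofReal_cpow hpos.le]
    ring
  · have hneg : 1 - s ^ 2 < 0 := by
      have habs : 1 < |s| := by
        by_contra! h
        exact hmem ⟨(neg_le_of_abs_le h).lt_of_ne' hs', le_of_abs_le h⟩
      linarith [(one_lt_sq_iff_one_lt_abs s).mpr habs]
    rw [indicator_of_notMem hmem, integral_truncPow_sub_norm_sq_of_neg volume δ hneg,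
      Complex.ofReal_zero, mul_zero]

variable [FiniteDimensional ℝ V] [MeasurableSpace V] [BorelSpace V]

lemma integral_eq_integral_span_singleton_orthogonal {X : Type*} [NormedAddCommGroup X]
    [NormedSpace ℝ X] {e : V} (he : ‖e‖ = 1) (U : G ≃ₗᵢ[ℝ] (ℝ ∙ e)ᗮ) {f : V → X}
    (hf : Integrable f) :
    ∫ v, f v = ∫ s : ℝ, ∫ η : G, f (s • e + U η) := by
  let T : WithLp 2 (ℝ × G) ≃ₗᵢ[ℝ] V :=
    (LinearIsometryEquiv.withLpProdCongr 2 (LinearIsometryEquiv.toSpanUnitSingleton e he) U).trans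
      (ℝ ∙ e).orthogonalDecomposition.symm
  have hT : ∀ p : ℝ × G, T (WithLp.toLp 2 p) = p.1 • e + U p.2 := fun p => by
    simp [T]
  let Φ : ℝ × G ≃ᵐ V := (MeasurableEquiv.toLp 2 (ℝ × G)).trans T.toMeasurableEquiv
  have hΦ : ∀ p : ℝ × G, Φ p = p.1 • e + U p.2 := hT
  have hmp : MeasurePreserving Φ :=
    T.measurePreserving.comp (WithLp.volume_preserving_toLp ℝ G)
  have hf' : Integrable (fun p => f (Φ p)) := (hmp.integrable_comp_emb Φ.measurableEmbedding).mpr hf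
  rw [← hmp.integral_comp' f, Measure.volume_eq_prod, integral_prod _ hf']
  simp only [hΦ]

lemma integrable_exp_inner_mul_truncPow {δ : ℝ} (hδ : 0 ≤ δ) (x : V) :
    Integrable fun ξ : V => Complex.exp (I * (⟪x, ξ⟫ : ℝ)) * (truncPow δ (1 - ‖ξ‖ ^ 2) : ℂ) := by
  refine (integrable_truncPow_one_sub_norm_sq volume hδ).ofReal.bdd_mul (c := 1)
    (by fun_prop) (.of_forall fun ξ => ?_)
  rw [mul_comm, Complex.norm_exp_ofReal_mul_I]

lemma integral_exp_inner_mul_truncPow {δ : ℝ} (hδ : 0 ≤ δ) (r : ℝ) {e : V} (he : ‖e‖ = 1)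
    (U : G ≃ₗᵢ[ℝ] (ℝ ∙ e)ᗮ) :
    ∫ ξ : V, Complex.exp (I * (⟪r • e, ξ⟫ : ℝ)) * (truncPow δ (1 - ‖ξ‖ ^ 2) : ℂ) =
      ballMoment (volume : Measure G) δ *
        ∫ s : ℝ in (-1)..1, poissonIntegrand (δ + Module.finrank ℝ G / 2) r s := by
  rw [integral_eq_integral_span_singleton_orthogonal he U
    (integrable_exp_inner_mul_truncPow hδ (r • e)),
    intervalIntegral.integral_of_le (by norm_num), ← integral_const_mul,
    ← integral_indicator measurableSet_Ioc]
  refine integral_congr_ae ?_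
  filter_upwards [Measure.ae_ne volume 1, Measure.ae_ne volume (-1)] with s hs hs'
  exact integral_exp_inner_mul_truncPow_slice δ r he U hs hs'

end Slicing

lemma BRker_eq_integral_poissonIntegrand (m : ℕ) {δ : ℝ} (hδ : 0 ≤ δ)
    {x : EuclideanSpace ℝ (Fin (m + 1))} (hx : x ≠ 0) :
    BRker (m + 1) δ x = ballMoment (volume : Measure (EuclideanSpace ℝ (Fin m))) δ *
      ∫ s : ℝ in (-1)..1, poissonIntegrand (δ + m / 2) ‖x‖ s := by
  have : Fact (Module.finrank ℝ (EuclideanSpace ℝ (Fin (m + 1))) = m + 1) :=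
    ⟨finrank_euclideanSpace_fin⟩
  have he : ‖‖x‖⁻¹ • x‖ = 1 := norm_smul_inv_norm hx
  have hpolar := integral_exp_inner_mul_truncPow hδ ‖x‖ he
    (OrthonormalBasis.fromOrthogonalSpanSingleton (𝕜 := ℝ) m
      (norm_ne_zero_iff.mp (he.trans_ne one_ne_zero))).repr.symm
  rw [smul_inv_smul₀ (norm_ne_zero_iff.mpr hx), finrank_euclideanSpace_fin] at hpolar
  exact hpolar

lemma exists_exp_neg_le_rpow (p : ℝ) : ∃ C : ℝ, ∀ r ≥ 0, rexp (-r) ≤ C * (1 + r) ^ p := by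
  refine ⟨|p| ^ |p| * rexp 1, fun r hr => ?_⟩
  have hr' : 0 < 1 + r := by positivity
  have hpow : (1 + r) ^ (-p) ≤ |p| ^ |p| * rexp (1 + r) :=
    calc (1 + r) ^ (-p) ≤ (1 + r) ^ |p| :=
          rpow_le_rpow_of_exponent_le (by linarith) (neg_le_abs p)
      _ ≤ |p| ^ |p| * rexp (1 + r) := by
          simpa [abs_of_pos hr'] using
            ProbabilityTheory.rpow_abs_le_mul_exp_abs (1 + r) (abs_nonneg p) one_ne_zero
  calc rexp (-r) = rexp (-r) * ((1 + r) ^ (-p) * (1 + r) ^ p) := by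
        rw [← rpow_add hr', neg_add_cancel, rpow_zero, mul_one]
    _ ≤ rexp (-r) * (|p| ^ |p| * rexp (1 + r) * (1 + r) ^ p) := by gcongr
    _ = |p| ^ |p| * rexp (-r + (1 + r)) * (1 + r) ^ p := by
        rw [exp_add (-r)]
        ring
    _ = |p| ^ |p| * rexp 1 * (1 + r) ^ p := by rw [neg_add_cancel_comm_assoc]

section Asymptotics

open Complex (I)
open scoped ComplexConjugate

variable (m : ℕ) {δ : ℝ}

/-- The amplitude of `e^{i|x|} (1 + |x|)^{-(n + 1) / 2 - δ}` in the expansion of the Bochner–Riesz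
kernel on `ℝⁿ`, `n = m + 1`; that of `e^{-i|x|}` is its conjugate. -/
def bochnerRieszAmplitude (δ r : ℝ) : ℂ :=
  ballMoment (volume : Measure (EuclideanSpace ℝ (Fin m))) δ • poissonAmplitude (δ + m / 2) r

lemma isSymbol_bochnerRieszAmplitude (hδ : 0 ≤ δ) : IsSymbol 0 (bochnerRieszAmplitude m δ) :=
  (isSymbol_poissonAmplitude (neg_one_lt_zero.trans_le (by positivity))).const_smul _

lemma exists_le_norm_bochnerRieszAmplitude (hδ : 0 ≤ δ) :
    ∃ c > 0, ∃ R > 0, ∀ r, R ≤ r → c ≤ ‖bochnerRieszAmplitude m δ r‖ := by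
  have hμ : -1 < δ + m / 2 := neg_one_lt_zero.trans_le (by positivity)
  obtain ⟨l, hl, hlim⟩ := exists_tendsto_poissonAmplitude hμ
  set b := ballMoment (volume : Measure (EuclideanSpace ℝ (Fin m))) δ
  have hbl : 0 < ‖b • l‖ := norm_pos_iff.mpr (smul_ne_zero (ballMoment_pos volume hδ).ne' hl)
  obtain ⟨R, hR⟩ := eventually_atTop.mp
    ((hlim.const_smul b).norm.eventually_const_le (half_lt_self hbl))
  exact ⟨‖b • l‖ / 2, half_pos hbl, max R 1, by positivity,
    fun r hr => hR r (le_of_max_le_left hr)⟩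

lemma exists_norm_BRker_sub_le (hδ : 0 ≤ δ) (p : ℝ) :
    ∃ C : ℝ, ∀ x : EuclideanSpace ℝ (Fin (m + 1)), x ≠ 0 →
      ‖BRker (m + 1) δ x -
          bochnerRieszAmplitude m δ ‖x‖ * Complex.exp (I * ‖x‖) *
            ((1 + ‖x‖) ^ (-(((m + 1 : ℕ) : ℝ) + 1) / 2 - δ) : ℝ) -
          conj (bochnerRieszAmplitude m δ ‖x‖) * Complex.exp (-I * ‖x‖) *
            ((1 + ‖x‖) ^ (-(((m + 1 : ℕ) : ℝ) + 1) / 2 - δ) : ℝ)‖ ≤ C * (1 + ‖x‖) ^ p := by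
  obtain ⟨C, hC⟩ := exists_exp_neg_le_rpow p
  set b := ballMoment (volume : Measure (EuclideanSpace ℝ (Fin m))) δ with hb
  have hb0 : 0 ≤ b := (ballMoment_pos volume hδ).le
  set μ := δ + m / 2 with hμ
  set A := ∫ s : ℝ in (-1)..1, ‖poissonIntegrand μ 0 (s + I)‖
  have hA : 0 ≤ A := intervalIntegral.integral_nonneg (by norm_num) fun _ _ => norm_nonneg _
  refine ⟨b * A * C, fun x hx => ?_⟩
  have hexp : -(((m + 1 : ℕ) : ℝ) + 1) / 2 - δ = -(μ + 1) := by
    rw [hμ]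
    push_cast
    ring
  calc _ = ‖(b : ℂ) * ∫ s : ℝ in (-1)..1, poissonIntegrand μ ‖x‖ (s + I)‖ := by
        rw [BRker_eq_integral_poissonIntegrand m hδ hx, hexp, ← hμ, ← hb,
          integral_poissonIntegrand_eq (by positivity) (norm_nonneg x)]
        simp only [bochnerRieszAmplitude, Complex.real_smul, map_mul, Complex.conj_ofReal,
          ← hμ, ← hb]
        congr 1
        ring
    _ ≤ b * (A * rexp (-‖x‖)) := by
        rw [norm_mul, Complex.norm_of_nonneg hb0]
        gcongr
        exact norm_integral_poissonIntegrand_add_I_le μ ‖x‖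
    _ ≤ b * A * C * (1 + ‖x‖) ^ p := by
        rw [mul_assoc, mul_assoc]
        gcongr
        exact hC _ (norm_nonneg x)

end Asymptotics

theorem stmt16 (n : ℕ) (hn : 1 ≤ n) (δ : ℝ) (hδ : 0 ≤ δ) :
    ∃ a₁ a₂ : ℝ → ℂ, ∃ C : ℝ,
      ContDiffOn ℝ (⊤ : ℕ∞) a₁ (Set.Ioi 0) ∧ ContDiffOn ℝ (⊤ : ℕ∞) a₂ (Set.Ioi 0) ∧
      (∃ M : ℝ, ∀ r > (0 : ℝ), ‖a₁ r‖ ≤ M ∧ ‖a₂ r‖ ≤ M) ∧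
      (∀ N : ℕ, ∃ CN : ℝ, ∀ r > (0 : ℝ),
        ‖iteratedDerivWithin N a₁ (Set.Ioi 0) r‖ ≤ CN * r ^ (-(N : ℝ)) ∧
        ‖iteratedDerivWithin N a₂ (Set.Ioi 0) r‖ ≤ CN * r ^ (-(N : ℝ))) ∧
      (∃ c > (0 : ℝ), ∃ R > (0 : ℝ), ∀ r : ℝ, R ≤ r → c ≤ ‖a₁ r‖ ∧ c ≤ ‖a₂ r‖) ∧
      ∀ x : EuclideanSpace ℝ (Fin n), x ≠ 0 →
        ‖BRker n δ x -
            a₁ ‖x‖ * Complex.exp (Complex.I * (‖x‖ : ℂ)) *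
              (((1 + ‖x‖) ^ (-((n : ℝ) + 1) / 2 - δ) : ℝ) : ℂ) -
            a₂ ‖x‖ * Complex.exp (-Complex.I * (‖x‖ : ℂ)) *
              (((1 + ‖x‖) ^ (-((n : ℝ) + 1) / 2 - δ) : ℝ) : ℂ)‖ ≤
          C * (1 + ‖x‖) ^ (-(n : ℝ) - 1) := by
  obtain ⟨m, rfl⟩ : ∃ m, n = m + 1 := ⟨n - 1, by lia⟩
  have ha := isSymbol_bochnerRieszAmplitude m hδ
  have ha' := ha.comp_linearIsometryEquiv Complex.conjLIE
  have hnorm : ∀ r, ‖(Complex.conjLIE ∘ bochnerRieszAmplitude m δ) r‖ =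
      ‖bochnerRieszAmplitude m δ r‖ := fun r => Complex.conjLIE.norm_map _
  obtain ⟨M, hM⟩ := ha.exists_norm_iteratedDerivWithin_le 0
  obtain ⟨c, hc, R, hR, hlower⟩ := exists_le_norm_bochnerRieszAmplitude m hδ
  obtain ⟨C, hC⟩ := exists_norm_BRker_sub_le m hδ (-((m + 1 : ℕ) : ℝ) - 1)
  refine ⟨bochnerRieszAmplitude m δ, Complex.conjLIE ∘ bochnerRieszAmplitude m δ, C, ha.1, ha'.1,
    ⟨M, fun r hr => ?_⟩, fun N => ?_, ⟨c, hc, R, hR, fun r hr => ?_⟩, hC⟩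
  · rw [hnorm, and_self]
    simpa using hM r hr
  · obtain ⟨C₁, hC₁⟩ := ha.exists_norm_iteratedDerivWithin_le N
    obtain ⟨C₂, hC₂⟩ := ha'.exists_norm_iteratedDerivWithin_le N
    refine ⟨max C₁ C₂, fun r hr => ⟨(hC₁ r hr).trans ?_, (hC₂ r hr).trans ?_⟩⟩ <;> gcongr
    exacts [le_max_left _ _, le_max_right _ _]
  · rw [hnorm, and_self]
    exact hlower r hr

end
end
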